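/- Let λ > 1, let α be Diophantine, and let θ ∈ ℝ satisfy δ(α,θ) < ln λ. Let {φ_s}_{s≥1} be an orthonormal basis of ℓ²(ℤ) consisting of eigenfunctions of the almost Mathieu operator H_{λ,α,θ}, and for each s let m_s ∈ ℤ be a global maximum of |φ_s|. Then d_- := liminf_{L→∞} #{s : |m_s| ≤ L}/(2L+1) ≥ 1 − δ(α,θ)/ln λ. -/

import Mathlib

noncomputable section

open Filter Real

def distToInt (x : ℝ) : ℝ := |x - round x|

def IsDiophantine (α : ℝ) : Prop :=
  ∃ κ τ : ℝ, 0 < κ ∧ 0 < τ ∧ ∀ k : ℤ, k ≠ 0 → τ / |(k : ℝ)| ^ κ ≤ distToInt (k * α)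

def deltaPhase (α θ : ℝ) : ℝ :=
  limsup (fun n : ℤ => -Real.log (distToInt (2 * θ + n * α)) / |(n : ℝ)|) cofinite

def amoPot (lam α θ : ℝ) : ℤ → ℝ := fun n => 2 * lam * Real.cos (2 * Real.pi * (θ + n * α))

def IsEigenfunction (g : ℤ → ℝ) (E : ℝ) (φ : ℤ → ℝ) : Prop :=
  ∀ n : ℤ, φ (n + 1) + φ (n - 1) + g n * φ n = E * φ n

def deltaPot (g : ℤ → ℝ) : ℝ :=
  limsup (fun n : ℤ => -Real.log (⨆ m : ℤ, |g (n - m) - g m|) / |(n : ℝ)|) cofinite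

def matNorm (M : Matrix (Fin 2) (Fin 2) ℝ) : ℝ := ⨆ p : Fin 2 × Fin 2, |M p.1 p.2|

def transfer (g : ℤ → ℝ) (E : ℝ) : ℕ → ℤ → Matrix (Fin 2) (Fin 2) ℝ
  | 0, _ => 1
  | n + 1, k => !![E - g (k + n), -1; 1, 0] * transfer g E n k

def LyapSup (g : ℤ → ℝ) (E : ℝ) : ℝ :=
  limsup (fun n : ℕ => ⨆ k : ℤ, Real.log (matNorm (transfer g E n k)) / n) atTop

def HasSULE (g : ℤ → ℝ) : Prop :=
  ∃ (Φ : HilbertBasis ℕ ℝ (lp (fun _ : ℤ => ℝ) 2)) (ns : ℕ → ℤ) (γ : ℝ),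
    0 < γ ∧
    (∀ s : ℕ, ∃ E : ℝ, IsEigenfunction g E (fun n => Φ s n)) ∧
    ∀ ε : ℝ, 0 < ε → ∃ C : ℝ,
      ∀ (s : ℕ) (n : ℤ),
        |Φ s n| ≤ C * Real.exp (ε * |(ns s : ℝ)|) * Real.exp (-γ * |(n : ℝ) - (ns s : ℝ)|)

/-!
Eigenfunctions solve `u (n + 1) = V (θ + n * α) * u n - u (n - 1)` with
`V x = E - 2 * lam * cos (2 * π * x)`, and the determinants of the operator on finite boxes
(continuants) are polynomials in the cosine of the centred phase. Herman's subharmonicity argument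
bounds the supremum of a continuant of size `k` below by `lam ^ k`; a pigeonhole over scales
supplies a rate `Γ ≥ log lam` at which all continuants grow at most and which is attained at a
suitable scale. It takes the place of the Lyapunov exponent. Since `α` is Diophantine, Lagrange
interpolation at the phases `θ + k * α` produces a box near any given site with a large continuant,
unless `2 * θ + K * α` is extremely close to an integer for some `K` which reflects the site to the
peak. By Green's identity an eigenfunction peaked at `m` decays away from `m` and from `K - m`, and
even at `n ≈ K - m` it is small as soon as `log lam * |n - m|` exceeds `δ * |K|`, where `δ` is
slightly larger than `deltaPhase α θ`.

Resonances of comparable size being unique, the sites `|n| ≤ L` at which some eigenfunction peaked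
outside `[-L, L]` is large lie in one interval of length about `(δ / log lam) * L`. The remaining
sites have their unit mass `∑' s, φ s n ^ 2 = 1` on eigenfunctions peaked in `[-L, L]`, each of
total mass `1`, so there are at least about `(2 - δ / log lam) * L` of these. If `2 * θ + K * α`
were superexponentially close to integers (the case of an infinite exponent, in which the
real-valued `limsup` is a junk value), comparing an eigenfunction with its reflections by means of
their Wronskian would contradict its square summability.
-/

namespace AlmostMathieu

/-! ## Continuants and solutions of the difference equation -/

section Continuant

variable {V : ℝ → ℝ} {α θ M : ℝ} {u : ℤ → ℝ}

/-- The determinant of the `k × k` tridiagonal matrix with diagonal `V (x + j * α)`, `j < k`, and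
off-diagonal entries `1`, through its three-term recurrence. -/
def continuant (V : ℝ → ℝ) (α : ℝ) : ℕ → ℝ → ℝ
  | 0, _ => 1
  | 1, x => V x
  | k + 2, x => V (x + (k + 1) * α) * continuant V α (k + 1) x - continuant V α k x

@[simp] theorem continuant_zero (V : ℝ → ℝ) (α x : ℝ) : continuant V α 0 x = 1 := rfl

@[simp] theorem continuant_one (V : ℝ → ℝ) (α x : ℝ) : continuant V α 1 x = V x := rfl

theorem continuant_add_two (V : ℝ → ℝ) (α x : ℝ) (k : ℕ) :
    continuant V α (k + 2) x =
      V (x + (k + 1) * α) * continuant V α (k + 1) x - continuant V α k x := rfl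

theorem continuant_add_two' (V : ℝ → ℝ) (α x : ℝ) (k : ℕ) :
    continuant V α (k + 2) x =
      V x * continuant V α (k + 1) (x + α) - continuant V α k (x + 2 * α) := by
  induction k using Nat.twoStepInduction with
  | zero => simp [continuant_add_two, mul_comm]
  | one =>
    simp only [continuant_add_two, zero_add, continuant_zero, continuant_one, Nat.cast_zero,
      Nat.cast_one]
    ring_nf
  | more k ih₀ ih₁ =>
    rw [continuant_add_two V α x (k + 2), ih₁, ih₀, continuant_add_two V α (x + α) (k + 1),
      continuant_add_two V α (x + 2 * α) k]
    push_cast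
    ring_nf

theorem continuant_add (V : ℝ → ℝ) (α x : ℝ) (k l : ℕ) :
    continuant V α (k + 1 + (l + 1)) x =
      continuant V α (k + 1) x * continuant V α (l + 1) (x + (k + 1) * α)
        - continuant V α k x * continuant V α l (x + (k + 2) * α) := by
  induction l using Nat.twoStepInduction with
  | zero =>
    rw [show k + 1 + (0 + 1) = k + 2 by ring, continuant_add_two]
    simp [mul_comm]
  | one =>
    rw [show k + 1 + (1 + 1) = (k + 1) + 2 by ring, continuant_add_two, continuant_add_two V α x k,
      continuant_add_two]
    simp only [zero_add, continuant_zero, continuant_one]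
    push_cast
    ring_nf
  | more l ih₀ ih₁ =>
    rw [show k + 1 + (l + 2 + 1) = (k + 1 + (l + 1)) + 2 by ring, continuant_add_two,
      show k + 1 + (l + 1) + 1 = k + 1 + (l + 1 + 1) by ring, ih₁, ih₀,
      continuant_add_two V α (x + (k + 1) * α) (l + 1),
      continuant_add_two V α (x + (k + 2) * α) l]
    push_cast
    ring_nf

theorem continuant_reflect (hV : ∀ x, V (-x) = V x) (α : ℝ) (k : ℕ) (x : ℝ) :
    continuant V α k (-x - ((k : ℝ) - 1) * α) = continuant V α k x := by
  induction k using Nat.twoStepInduction generalizing x with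
  | zero => simp
  | one => simp [hV]
  | more k ih₀ ih₁ =>
    rw [continuant_add_two, continuant_add_two', ← ih₁ (x + α), ← ih₀ (x + 2 * α), ← hV x]
    push_cast
    ring_nf

theorem abs_continuant_le (hM : 0 ≤ M) (hV : ∀ x, |V x| ≤ M) (α : ℝ) (k : ℕ) (x : ℝ) :
    |continuant V α k x| ≤ (M + 1) ^ k := by
  induction k using Nat.twoStepInduction with
  | zero => simp
  | one => simpa using (hV x).trans (by linarith)
  | more k ih₀ ih₁ =>
    calc |continuant V α (k + 2) x|
        ≤ |V (x + (k + 1) * α)| * |continuant V α (k + 1) x| + |continuant V α k x| := by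
          rw [continuant_add_two, ← abs_mul]
          exact abs_sub _ _
      _ ≤ M * (M + 1) ^ (k + 1) + (M + 1) ^ k := by gcongr; exact hV _
      _ ≤ (M + 1) ^ (k + 2) := by
          have : 0 ≤ (M + 1) ^ k * M := by positivity
          linear_combination this

/-- `u` solves the second-order difference equation with coefficients `V` sampled along the
rotation `n ↦ θ + n * α`; for `V = E - v` this is the eigenvalue equation of the Schrödinger
operator with potential `n ↦ v (θ + n * α)`. -/
def IsSolution (V : ℝ → ℝ) (α θ : ℝ) (u : ℤ → ℝ) : Prop :=
  ∀ n : ℤ, u (n + 1) = V (θ + n * α) * u n - u (n - 1)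

theorem IsSolution.continuant_mul_apply (hu : IsSolution V α θ u) (a : ℤ) (j : ℕ) :
    continuant V α (j + 1) (θ + a * α) * u (a + j) =
      u (a - 1) + continuant V α j (θ + a * α) * u (a + j + 1) := by
  induction j with
  | zero => simp [hu a]
  | succ j ih =>
    have hstep := hu (a + j + 1)
    rw [continuant_add_two]
    push_cast at *
    rw [add_sub_cancel_right] at hstep
    rw [← add_assoc a, hstep, show θ + (a + j + 1 : ℝ) * α = θ + a * α + (j + 1) * α by ring]
    linear_combination ih

/-- Cramer's rule for the Dirichlet problem on `[a, a + j + r]`. -/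
theorem IsSolution.green_identity (hu : IsSolution V α θ u) (a : ℤ) (j r : ℕ) :
    continuant V α (j + 1 + r) (θ + a * α) * u (a + j) =
      continuant V α r (θ + (a + j + 1) * α) * u (a - 1)
        + continuant V α j (θ + a * α) * u (a + j + r + 1) := by
  induction r using Nat.twoStepInduction with
  | zero => simpa using hu.continuant_mul_apply a j
  | one =>
    have hbase := hu.continuant_mul_apply a j
    have hstep := hu (a + j + 1)
    rw [continuant_add_two, continuant_one]
    push_cast at *
    rw [add_sub_cancel_right] at hstep
    rw [hstep, show θ + (a + j + 1 : ℝ) * α = θ + a * α + (j + 1) * α by ring]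
    linear_combination V (θ + a * α + (j + 1) * α) * hbase
  | more r ih₀ ih₁ =>
    have hstep := hu (a + j + r + 2)
    rw [show j + 1 + (r + 2) = (j + 1 + r) + 2 by ring, continuant_add_two,
      continuant_add_two V α _ r]
    rw [show j + 1 + (r + 1) = j + 1 + r + 1 by ring] at ih₁
    push_cast at *
    rw [show a + (j : ℤ) + r + 2 - 1 = a + j + r + 1 by ring] at hstep
    rw [show a + (j : ℤ) + (r + 1) + 1 = a + j + r + 2 by ring] at ih₁
    rw [show a + (j : ℤ) + (r + 2) + 1 = a + j + r + 2 + 1 by ring, hstep,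
      show θ + a * α + (j + 1 + r + 1 : ℝ) * α = θ + (a + j + r + 2) * α by ring,
      show θ + (a + j + 1 : ℝ) * α + (r + 1) * α = θ + (a + j + r + 2) * α by ring]
    linear_combination V (θ + (a + j + r + 2) * α) * ih₁ - ih₀

end Continuant

section ReducedPotential

variable {lam : ℝ}

/-- The energy minus the almost Mathieu potential, as a function of the phase. -/
def reducedPotential (lam E : ℝ) : ℝ → ℝ := fun x => E - 2 * lam * cos (2 * π * x)

theorem reducedPotential_neg (lam E x : ℝ) :
    reducedPotential lam E (-x) = reducedPotential lam E x := by
  simp [reducedPotential]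

theorem abs_reducedPotential_le (hlam : 0 ≤ lam) (E x : ℝ) :
    |reducedPotential lam E x| ≤ |E| + 2 * lam := by
  refine (abs_sub _ _).trans ?_
  gcongr
  rw [abs_mul, abs_of_nonneg (by positivity)]
  exact mul_le_of_le_one_right (by positivity) (abs_cos_le_one _)

end ReducedPotential

/-! ## Continuants as trigonometric polynomials -/

section TrigonometricPolynomial

open Polynomial FourierTransform

variable {lam : ℝ}

theorem coe_fourierChar_add (x y : ℝ) : (𝐞 (x + y) : ℂ) = 𝐞 x * 𝐞 y := by
  rw [AddChar.map_add_eq_mul, Circle.coe_mul]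

theorem coe_fourierChar_nat_mul (n : ℕ) (y : ℝ) : (𝐞 (n * y) : ℂ) = (𝐞 y : ℂ) ^ n := by
  rw [← nsmul_eq_mul, AddChar.map_nsmul_eq_pow, Circle.coe_pow]

theorem fourierChar_re (y : ℝ) : (𝐞 y : ℂ).re = cos (2 * π * y) := by
  rw [fourierChar_apply, Complex.exp_ofReal_mul_I_re]

theorem fourierChar_im (y : ℝ) : (𝐞 y : ℂ).im = sin (2 * π * y) := by
  rw [fourierChar_apply, Complex.exp_ofReal_mul_I_im]

theorem two_mul_cos_eq_fourierChar_add (y : ℝ) :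
    (2 * (cos (2 * π * y) : ℝ) : ℂ) = 𝐞 y + 𝐞 (-y) := by
  rw [fourierChar_apply, fourierChar_apply, Complex.ofReal_cos, Complex.cos]
  push_cast
  ring_nf

/-- The polynomial in `z = 𝐞 y` given by `z * reducedPotential lam E (y + c)`. -/
def reducedPotentialPoly (lam E c : ℝ) : ℂ[X] :=
  C (E : ℂ) * X - C (lam : ℂ) * (C (𝐞 c : ℂ) * X ^ 2 + C (𝐞 (-c) : ℂ))

/-- The polynomial in `z = 𝐞 y` given by `z ^ k * continuant (reducedPotential lam E) α k y`. -/
def continuantPoly (lam E α : ℝ) : ℕ → ℂ[X]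
  | 0 => 1
  | 1 => reducedPotentialPoly lam E 0
  | k + 2 => reducedPotentialPoly lam E ((k + 1) * α) * continuantPoly lam E α (k + 1)
      - X ^ 2 * continuantPoly lam E α k

theorem reducedPotentialPoly_eval_fourierChar (lam E c y : ℝ) :
    (reducedPotentialPoly lam E c).eval (𝐞 y : ℂ) =
      𝐞 y * (reducedPotential lam E (y + c) : ℝ) := by
  have hcancel : (𝐞 y : ℂ) * 𝐞 (-(y + c)) = 𝐞 (-c) := by
    rw [← coe_fourierChar_add]
    ring_nf
  have hpot : ((reducedPotential lam E (y + c) : ℝ) : ℂ)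
      = E - lam * (𝐞 y * 𝐞 c + 𝐞 (-(y + c))) := by
    rw [← coe_fourierChar_add, ← two_mul_cos_eq_fourierChar_add, reducedPotential]
    push_cast
    ring
  simp only [reducedPotentialPoly, eval_sub, eval_mul, eval_add, eval_pow, eval_C, eval_X]
  rw [hpot]
  linear_combination (lam : ℂ) * hcancel

theorem continuantPoly_eval_fourierChar (lam E α y : ℝ) (k : ℕ) :
    (continuantPoly lam E α k).eval (𝐞 y : ℂ) =
      (𝐞 y : ℂ) ^ k * (continuant (reducedPotential lam E) α k y : ℝ) := by
  induction k using Nat.twoStepInduction with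
  | zero => simp [continuantPoly]
  | one => simp [continuantPoly, reducedPotentialPoly_eval_fourierChar]
  | more k ih₀ ih₁ =>
    rw [continuantPoly, continuant_add_two]
    simp only [eval_sub, eval_mul, eval_pow, eval_X, ih₀, ih₁,
      reducedPotentialPoly_eval_fourierChar]
    push_cast
    ring

theorem natDegree_reducedPotentialPoly_le (lam E c : ℝ) :
    (reducedPotentialPoly lam E c).natDegree ≤ 2 := by
  unfold reducedPotentialPoly
  compute_degree

theorem natDegree_continuantPoly_le (lam E α : ℝ) (k : ℕ) :
    (continuantPoly lam E α k).natDegree ≤ 2 * k := by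
  induction k using Nat.twoStepInduction with
  | zero => simp [continuantPoly]
  | one => exact natDegree_reducedPotentialPoly_le _ _ _
  | more k ih₀ ih₁ =>
    have hpot := natDegree_reducedPotentialPoly_le lam E ((k + 1) * α)
    refine (natDegree_sub_le _ _).trans (max_le ?_ ?_)
    · exact natDegree_mul_le.trans (by omega)
    · exact natDegree_mul_le.trans (by rw [natDegree_X_pow]; omega)

theorem norm_continuantPoly_eval_zero (hlam : 0 ≤ lam) (E α : ℝ) (k : ℕ) :
    ‖(continuantPoly lam E α k).eval 0‖ = lam ^ k := by
  have hpot (c : ℝ) : ‖(reducedPotentialPoly lam E c).eval 0‖ = lam := by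
    simp [reducedPotentialPoly, Circle.norm_coe, abs_of_nonneg hlam]
  induction k using Nat.twoStepInduction with
  | zero => simp [continuantPoly]
  | one => simp [continuantPoly, hpot]
  | more k _ ih₁ => simp [continuantPoly, hpot, ih₁, pow_succ']

/-- Herman's subharmonicity argument: the maximum principle applied to `continuantPoly` bounds
its value at `0` by its supremum over the unit circle. -/
theorem pow_le_of_forall_abs_continuant_le (hlam : 0 ≤ lam) (E α : ℝ) (k : ℕ) {B : ℝ}
    (hB : ∀ x, |continuant (reducedPotential lam E) α k x| ≤ B) : lam ^ k ≤ B := by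
  rw [← norm_continuantPoly_eval_zero hlam E α k]
  refine Complex.norm_le_of_forall_mem_frontier_norm_le (U := Metric.ball (0 : ℂ) 1)
    (f := fun z => (continuantPoly lam E α k).eval z) Metric.isBounded_ball
    (Polynomial.differentiable _).diffContOnCl (fun z hz => ?_) (subset_closure (by simp))
  rw [frontier_ball _ one_ne_zero, mem_sphere_zero_iff_norm] at hz
  obtain ⟨t, rfl⟩ := (Complex.norm_eq_one_iff z).1 hz
  have hchar : Complex.exp (t * Complex.I) = 𝐞 (t / (2 * π)) := by
    rw [fourierChar_apply, show 2 * π * (t / (2 * π)) = t by field_simp]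
  rw [hchar, continuantPoly_eval_fourierChar, norm_mul, norm_pow, Circle.norm_coe]
  simpa using hB _

theorem exists_polynomial_cos_of_even {f : ℝ → ℝ} (hf : ∀ y, f (-y) = f y) (k : ℕ) (c : ℕ → ℂ)
    (hfc : ∀ y, (f y : ℂ) = ∑ i ∈ Finset.range (2 * k + 1), c i * 𝐞 (((i : ℤ) - k : ℤ) * y)) :
    ∃ Q : ℝ[X], Q.natDegree ≤ k ∧ ∀ y, f y = Q.eval (cos (2 * π * y)) := by
  refine ⟨∑ i ∈ Finset.range (2 * k + 1), C (c i).re * Chebyshev.T ℝ ((i : ℤ) - k),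
    natDegree_sum_le_of_forall_le _ _ fun i hi => ?_, fun y => ?_⟩
  · rw [Finset.mem_range] at hi
    refine natDegree_mul_le.trans ?_
    rw [natDegree_C, Chebyshev.natDegree_T]
    omega
  · have hre (z : ℝ) := congrArg Complex.re (hfc z)
    simp only [Complex.ofReal_re, Complex.re_sum] at hre
    have havg : f y = (f y + f (-y)) / 2 := by rw [hf]; ring
    rw [havg, hre, hre, ← Finset.sum_add_distrib, Finset.sum_div, eval_finsetSum]
    refine Finset.sum_congr rfl fun i _ => ?_
    simp only [eval_mul, eval_C, Complex.mul_re, fourierChar_re, fourierChar_im,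
      show ∀ j : ℤ, 2 * π * (j * y) = j * (2 * π * y) from fun j => by ring,
      show ∀ j : ℤ, 2 * π * (j * -y) = -(j * (2 * π * y)) from fun j => by ring,
      Chebyshev.T_real_cos, cos_neg, sin_neg]
    ring

theorem exists_polynomial_cos_eq_continuant (lam E α : ℝ) (k : ℕ) :
    ∃ Q : ℝ[X], Q.natDegree ≤ k ∧ ∀ y,
      continuant (reducedPotential lam E) α k (y - ((k : ℝ) - 1) * α / 2) =
        Q.eval (cos (2 * π * y)) := by
  set s : ℝ := -(((k : ℝ) - 1) * α / 2) with hs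
  refine exists_polynomial_cos_of_even (fun y => ?_) k
    (fun i => (continuantPoly lam E α k).coeff i * 𝐞 (((i : ℤ) - k : ℤ) * s)) fun y => ?_
  · rw [← continuant_reflect (reducedPotential_neg lam E)]
    ring_nf
  · have heval := continuantPoly_eval_fourierChar lam E α (y + s) k
    rw [eval_eq_sum_range' (Nat.lt_succ_of_le (natDegree_continuantPoly_le lam E α k))] at heval
    have hne : (𝐞 (y + s) : ℂ) ^ k ≠ 0 := pow_ne_zero _ (Circle.coe_ne_zero _)
    refine mul_left_cancel₀ hne ?_
    rw [sub_eq_add_neg, ← hs, ← heval, Finset.mul_sum]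
    refine Finset.sum_congr rfl fun i _ => ?_
    have hexp : (i : ℝ) * (y + s)
        = k * (y + s) + (((i : ℤ) - k : ℤ) * s + ((i : ℤ) - k : ℤ) * y) := by
      push_cast
      ring
    rw [← coe_fourierChar_nat_mul, ← coe_fourierChar_nat_mul, hexp, coe_fourierChar_add,
      coe_fourierChar_add (_ * s)]
    ring

end TrigonometricPolynomial

/-! ## Uniform growth of continuants at a well-chosen scale -/

section Growth

variable {V : ℝ → ℝ} {B lam : ℝ}

/-- The largest absolute value of a continuant of size at most `k`; the supremum is finite as soon
as `V` is bounded. -/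
def continuantSup (V : ℝ → ℝ) (α : ℝ) (k : ℕ) : ℝ :=
  sSup {y | ∃ j ≤ k, ∃ x, y = |continuant V α j x|}

theorem pow_mem_upperBounds_abs_continuant (hB : 0 ≤ B) (hV : ∀ x, |V x| ≤ B) (α : ℝ) (k : ℕ) :
    (B + 1) ^ k ∈ upperBounds {y | ∃ j ≤ k, ∃ x, y = |continuant V α j x|} := by
  rintro y ⟨j, hj, x, rfl⟩
  exact (abs_continuant_le hB hV α j x).trans (pow_le_pow_right₀ (by linarith) hj)

theorem abs_continuant_le_continuantSup (hB : 0 ≤ B) (hV : ∀ x, |V x| ≤ B) (α : ℝ) {j k : ℕ}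
    (hjk : j ≤ k) (x : ℝ) : |continuant V α j x| ≤ continuantSup V α k :=
  le_csSup ⟨_, pow_mem_upperBounds_abs_continuant hB hV α k⟩ ⟨j, hjk, x, rfl⟩

theorem continuantSup_le {α C : ℝ} {k : ℕ} (hC : ∀ j ≤ k, ∀ x, |continuant V α j x| ≤ C) :
    continuantSup V α k ≤ C :=
  csSup_le ⟨_, 0, Nat.zero_le _, 0, rfl⟩ (by rintro y ⟨j, hj, x, rfl⟩; exact hC j hj x)

theorem one_le_continuantSup (hB : 0 ≤ B) (hV : ∀ x, |V x| ≤ B) (α : ℝ) (k : ℕ) :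
    1 ≤ continuantSup V α k := by
  simpa using abs_continuant_le_continuantSup hB hV α (Nat.zero_le k) 0

theorem exists_continuantSup_le_two_mul (hB : 0 ≤ B) (hV : ∀ x, |V x| ≤ B) (α : ℝ) (k : ℕ) :
    ∃ j ≤ k, ∃ x, continuantSup V α k ≤ 2 * |continuant V α j x| := by
  by_contra! h
  have hhalf : continuantSup V α k ≤ continuantSup V α k / 2 :=
    continuantSup_le fun j hj x => by linarith [h j hj x]
  linarith [one_le_continuantSup hB hV α k]

theorem continuantSup_mono (hB : 0 ≤ B) (hV : ∀ x, |V x| ≤ B) (α : ℝ) :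
    Monotone (continuantSup V α) := fun _ _ hkl =>
  continuantSup_le fun _ hj x => abs_continuant_le_continuantSup hB hV α (hj.trans hkl) x

theorem continuantSup_add_le (hB : 0 ≤ B) (hV : ∀ x, |V x| ≤ B) (α : ℝ) (k l : ℕ) :
    continuantSup V α (k + l) ≤ 2 * continuantSup V α k * continuantSup V α l := by
  have hk := one_le_continuantSup hB hV α k
  have hl := one_le_continuantSup hB hV α l
  have le_sup {j n : ℕ} (hjn : j ≤ n) (x : ℝ) := abs_continuant_le_continuantSup hB hV α hjn x
  refine continuantSup_le fun j hj x => ?_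
  rcases le_or_gt j k with hjk | hkj
  · nlinarith [le_sup hjk x]
  rcases le_or_gt j l with hjl | hlj
  · nlinarith [le_sup hjl x]
  obtain ⟨r, rfl⟩ : ∃ r, j = k + (r + 1) := ⟨j - k - 1, by omega⟩
  obtain ⟨k, rfl⟩ : ∃ k', k = k' + 1 := ⟨k - 1, by omega⟩
  calc |continuant V α (k + 1 + (r + 1)) x|
      ≤ |continuant V α (k + 1) x| * |continuant V α (r + 1) (x + (k + 1) * α)|
          + |continuant V α k x| * |continuant V α r (x + (k + 2) * α)| := by
        rw [continuant_add, ← abs_mul, ← abs_mul]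
        exact abs_sub _ _
    _ ≤ continuantSup V α (k + 1) * continuantSup V α l
          + continuantSup V α (k + 1) * continuantSup V α l := by
        gcongr
        exacts [le_sup le_rfl _, le_sup (by omega) _, le_sup (by omega) _, le_sup (by omega) _]
    _ = 2 * continuantSup V α (k + 1) * continuantSup V α l := by ring

/-- The logarithm of `continuantSup`, with the factor `2` that makes it subadditive in `k`. -/
def logContinuantSup (V : ℝ → ℝ) (α : ℝ) (k : ℕ) : ℝ :=
  log (2 * continuantSup V α k)

theorem exp_logContinuantSup (hB : 0 ≤ B) (hV : ∀ x, |V x| ≤ B) (α : ℝ) (k : ℕ) :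
    exp (logContinuantSup V α k) = 2 * continuantSup V α k :=
  exp_log (by linarith [one_le_continuantSup hB hV α k])

theorem subadditive_logContinuantSup (hB : 0 ≤ B) (hV : ∀ x, |V x| ≤ B) (α : ℝ) :
    Subadditive (logContinuantSup V α) := fun k l => by
  rw [← exp_le_exp, exp_add]
  simp only [exp_logContinuantSup hB hV]
  linarith [continuantSup_add_le hB hV α k l]

theorem monotone_logContinuantSup (hB : 0 ≤ B) (hV : ∀ x, |V x| ≤ B) (α : ℝ) :
    Monotone (logContinuantSup V α) := fun k l hkl => by
  rw [← exp_le_exp]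
  simp only [exp_logContinuantSup hB hV]
  linarith [continuantSup_mono hB hV α hkl]

theorem logContinuantSup_le (hB : 0 ≤ B) (hV : ∀ x, |V x| ≤ B) (α : ℝ) {k : ℕ} (hk : 1 ≤ k) :
    logContinuantSup V α k ≤ log (2 * (B + 1)) * k := by
  rw [← exp_le_exp, exp_logContinuantSup hB hV, mul_comm (log _), exp_nat_mul,
    exp_log (by linarith), mul_pow]
  exact mul_le_mul (le_self_pow₀ one_le_two (by omega))
    (continuantSup_le fun j hj x => pow_mem_upperBounds_abs_continuant hB hV α k ⟨j, hj, x, rfl⟩)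
    (by linarith [one_le_continuantSup hB hV α k]) (by positivity)

theorem log_mul_le_logContinuantSup (hlam : 0 < lam) (E α : ℝ) (k : ℕ) :
    log lam * k ≤ logContinuantSup (reducedPotential lam E) α k := by
  have hV := abs_reducedPotential_le hlam.le E
  have hB : 0 ≤ |E| + 2 * lam := by positivity
  have hpow := pow_le_of_forall_abs_continuant_le hlam.le E α k fun x =>
    abs_continuant_le_continuantSup hB hV α le_rfl x
  rw [← exp_le_exp, exp_logContinuantSup hB hV, mul_comm, exp_nat_mul, exp_log hlam]
  linarith [one_le_continuantSup hB hV α k]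

theorem le_div_mul_add_of_subadditive {t : ℕ → ℝ} (hsub : Subadditive t) (hmono : Monotone t)
    {b : ℕ} (hb : 0 < b) (htb : 0 ≤ t b) (j : ℕ) : t j ≤ t b / b * j + t b := by
  calc t j ≤ t (j / b * b + b) := hmono (Nat.lt_div_mul_add hb).le
    _ ≤ (j / b : ℕ) * t b + t b := hsub.apply_mul_add_le _ _ _
    _ ≤ (j / b : ℝ) * t b + t b := by gcongr; exact Nat.cast_div_le
    _ = t b / b * j + t b := by ring

theorem exists_sub_succ_le_div (f : ℕ → ℝ) {A : ℝ} {N : ℕ} (hN : 0 < N) (hf : f 0 - f N ≤ A) :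
    ∃ i < N, f i - f (i + 1) ≤ A / N := by
  by_contra! h
  have hN' : (0 : ℝ) < N := by exact_mod_cast hN
  refine absurd hf (not_le.2 ?_)
  calc A = ∑ _i ∈ Finset.range N, A / N := by
        rw [Finset.sum_const, Finset.card_range, nsmul_eq_mul, mul_div_cancel₀ _ hN'.ne']
    _ < ∑ i ∈ Finset.range N, (f i - f (i + 1)) :=
        Finset.sum_lt_sum_of_nonempty (by simpa using hN.ne') fun i hi =>
          h i (Finset.mem_range.1 hi)
    _ = f 0 - f N := Finset.sum_range_sub' f N

/-- All continuants grow at exponential rate at most `Γ`, up to the constant factor `exp c`. -/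
def HasGrowthBound (V : ℝ → ℝ) (α Γ c : ℝ) : Prop :=
  ∀ (j : ℕ) (x : ℝ), |continuant V α j x| ≤ exp (Γ * j + c)

theorem HasGrowthBound.mono {α Γ c c' : ℝ} (h : HasGrowthBound V α Γ c) (hc : c ≤ c') :
    HasGrowthBound V α Γ c' := fun j x =>
  (h j x).trans (exp_le_exp.2 (by linarith))

theorem hasGrowthBound_logContinuantSup (hB : 0 ≤ B) (hV : ∀ x, |V x| ≤ B) (α : ℝ) {b : ℕ}
    (hb : 0 < b) (htb : 0 ≤ logContinuantSup V α b) :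
    HasGrowthBound V α (logContinuantSup V α b / b) (logContinuantSup V α b) := fun j x => by
  have hsup := abs_continuant_le_continuantSup hB hV α (le_refl j) x
  have hone := one_le_continuantSup hB hV α j
  calc |continuant V α j x| ≤ exp (logContinuantSup V α j) := by
        rw [exp_logContinuantSup hB hV]; linarith
    _ ≤ _ := exp_le_exp.2 (le_div_mul_add_of_subadditive (subadditive_logContinuantSup hB hV α)
        (monotone_logContinuantSup hB hV α) hb htb j)

/-- `k` is a size at which the upper growth rate `Γ` of the continuants is attained, with relative
errors `ν`. Over a family of energies this replaces the Lyapunov exponent. -/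
structure IsGrowthScale (V : ℝ → ℝ) (α Γ ν : ℝ) (k : ℕ) : Prop where
  upper : HasGrowthBound V α Γ (ν * k)
  lower : ∃ x, exp (Γ * k - ν * k) ≤ |continuant V α k x|

/-- If the averages of `logContinuantSup` over `b` and over the much longer length `n` almost agree,
then a near-maximizer of size at most `n` must have size comparable to `n`. -/
theorem exists_isGrowthScale_of_ratio_le (hB : 0 ≤ B) (hV : ∀ x, |V x| ≤ B) {α Γ ν : ℝ} {b n : ℕ}
    (hν : 0 < ν) (hb : 0 < b) (hΓ : logContinuantSup V α b = Γ * b) (hνΓ : ν ≤ Γ)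
    (hbn : 8 * (Γ * b) ≤ ν * n) (hn : 4 * log 4 ≤ ν * n)
    (hratio : Γ * n - ν / 8 * n ≤ logContinuantSup V α n) :
    ∃ k ≤ n, (n : ℝ) ≤ 2 * k ∧ IsGrowthScale V α Γ ν k := by
  have hΓ0 : 0 < Γ := hν.trans_le hνΓ
  have hb' : (0 : ℝ) < b := by exact_mod_cast hb
  have upper : HasGrowthBound V α Γ (Γ * b) := by
    have h := hasGrowthBound_logContinuantSup hB hV α hb (hΓ ▸ by positivity)
    rwa [hΓ, mul_div_cancel_right₀ _ hb'.ne'] at h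
  obtain ⟨k, hkn, x, hx⟩ := exists_continuantSup_le_two_mul hB hV α n
  have lower : exp (Γ * n - ν / 8 * n - log 4) ≤ |continuant V α k x| := by
    have hexp := exp_le_exp.2 hratio
    rw [exp_logContinuantSup hB hV] at hexp
    rw [exp_sub, exp_log (by norm_num)]
    linarith
  have hkn' : Γ * k ≤ Γ * n := by gcongr
  have hcmp : Γ * n - ν / 8 * n - log 4 ≤ Γ * k + Γ * b := exp_le_exp.1 (lower.trans (upper k x))
  have hnk : (n : ℝ) ≤ 2 * k := by
    have hνn : ν * n ≤ Γ * n := by gcongr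
    exact le_of_mul_le_mul_left (by linarith) hΓ0
  have hνk : ν * n ≤ 2 * (ν * k) := by nlinarith
  exact ⟨k, hkn, hnk, upper.mono (by linarith),
    x, (exp_le_exp.2 (by linarith)).trans lower⟩

/-- The scales compared are `q * M ^ i`, `i ≤ N`; the average of `logContinuantSup` lies in a
bounded interval, so it almost stagnates between two consecutive ones. -/
theorem exists_isGrowthScale_of_pow (hB : 0 ≤ B) (hV : ∀ x, |V x| ≤ B) {α ν Λ : ℝ} {M N q : ℕ}
    (hν : 0 < ν) (hνΛ : ν ≤ Λ) (hΛ : ∀ k : ℕ, Λ * k ≤ logContinuantSup V α k)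
    (hM0 : 0 < M) (hM : 8 * log (2 * (B + 1)) ≤ ν * M)
    (hN0 : 0 < N) (hN : 8 * log (2 * (B + 1)) ≤ ν * N) (hq : 0 < q) (hq' : 4 * log 4 ≤ ν * q) :
    ∃ (k : ℕ) (Γ : ℝ), Λ ≤ Γ ∧ Γ ≤ log (2 * (B + 1)) ∧ IsGrowthScale V α Γ ν k ∧
      (q : ℝ) ≤ 2 * k ∧ k ≤ q * M ^ N := by
  have scale_pos (i : ℕ) : 0 < q * M ^ i := by positivity
  have scale_pos' (i : ℕ) : (0 : ℝ) < (q * M ^ i : ℕ) := by exact_mod_cast scale_pos i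
  set f : ℕ → ℝ := fun i => logContinuantSup V α (q * M ^ i) / (q * M ^ i : ℕ)
  have f_le (i : ℕ) : f i ≤ log (2 * (B + 1)) :=
    (div_le_iff₀ (scale_pos' i)).2 (logContinuantSup_le hB hV α (scale_pos i))
  have le_f (i : ℕ) : Λ ≤ f i := (le_div_iff₀ (scale_pos' i)).2 (hΛ _)
  have sup_eq (i : ℕ) : logContinuantSup V α (q * M ^ i) = f i * (q * M ^ i : ℕ) :=
    (div_mul_cancel₀ _ (scale_pos' i).ne').symm
  obtain ⟨i, hiN, hfi⟩ := exists_sub_succ_le_div f hN0 (A := log (2 * (B + 1)))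
    (by linarith [f_le 0, le_f N])
  have hdrop : f i - f (i + 1) ≤ ν / 8 :=
    hfi.trans ((div_le_iff₀ (by exact_mod_cast hN0)).2 (by linarith))
  have hqn : q ≤ q * M ^ (i + 1) := Nat.le_mul_of_pos_right _ (by positivity)
  obtain ⟨k, hkn, hnk, hk⟩ := exists_isGrowthScale_of_ratio_le (n := q * M ^ (i + 1)) hB hV hν
    (scale_pos i) (sup_eq i) (hνΛ.trans (le_f i))
    (by
      rw [pow_succ, ← mul_assoc q, Nat.cast_mul (q * M ^ i)]
      nlinarith [f_le i, scale_pos' i])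
    (hq'.trans (by gcongr))
    (by rw [← sub_mul, sup_eq]; gcongr; linarith)
  exact ⟨k, f i, le_f i, f_le i, hk, le_trans (by exact_mod_cast hqn) hnk,
    hkn.trans (by gcongr; omega)⟩

theorem exists_isGrowthScale (hB : 0 ≤ B) (α : ℝ) {ν : ℝ} (hν : 0 < ν) :
    ∃ κ : ℝ, 0 < κ ∧ ∀ᶠ X : ℕ in atTop, ∀ (V : ℝ → ℝ) (Λ : ℝ), (∀ x, |V x| ≤ B) → ν ≤ Λ →
      (∀ k : ℕ, Λ * k ≤ logContinuantSup V α k) →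
      ∃ (k : ℕ) (Γ : ℝ), Λ ≤ Γ ∧ Γ ≤ log (2 * (B + 1)) ∧ IsGrowthScale V α Γ ν k ∧
        κ * X ≤ k ∧ k ≤ ν * X := by
  set A := log (2 * (B + 1))
  have hA0 : 0 < A := log_pos (by linarith)
  obtain ⟨M, hM⟩ := exists_nat_ge ((8 * A + 1) / ν)
  obtain ⟨Q, hQ⟩ := exists_nat_ge (4 * log 4 / ν)
  have hMν : 8 * A + 1 ≤ ν * M := (div_le_iff₀' hν).1 hM
  have hM0 : 0 < M := by
    rcases Nat.eq_zero_or_pos M with rfl | h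
    · norm_num at hMν; linarith
    · exact h
  refine ⟨1 / (4 * (M ^ (M + 1) : ℕ)), by positivity, ?_⟩
  filter_upwards [eventually_ge_atTop ((Q + 1) * M ^ (M + 1))] with X hX V Λ hV hνΛ hΛ
  set q := X / M ^ (M + 1)
  have hQq : Q + 1 ≤ q := (Nat.le_div_iff_mul_le (by positivity)).2 hX
  have hqν : 4 * log 4 ≤ ν * q :=
    ((div_le_iff₀' hν).1 hQ).trans (by gcongr; omega)
  obtain ⟨k, Γ, hΛΓ, hΓA, hk, hqk, hkq⟩ := exists_isGrowthScale_of_pow hB hV hν hνΛ hΛ hM0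
    (by linarith) hM0 (by linarith) (by omega) hqν
  refine ⟨k, Γ, hΛΓ, hΓA, hk, ?_, ?_⟩
  · have hX2 : X ≤ 2 * q * M ^ (M + 1) := by
      have := Nat.lt_div_mul_add (a := X) (b := M ^ (M + 1)) (by positivity)
      change X < q * M ^ (M + 1) + M ^ (M + 1) at this
      nlinarith [Nat.one_le_pow (M + 1) M hM0]
    have hX2' : (X : ℝ) ≤ 2 * q * (M ^ (M + 1) : ℕ) := by exact_mod_cast hX2
    rw [div_mul_eq_mul_div, div_le_iff₀ (by positivity)]
    nlinarith [show (0 : ℝ) < (M ^ (M + 1) : ℕ) by positivity]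
  · have hkM : k * M ≤ X := calc
      k * M ≤ q * M ^ M * M := by gcongr
      _ = q * M ^ (M + 1) := by ring
      _ ≤ X := Nat.div_mul_le_self _ _
    have hkM' : (k : ℝ) * M ≤ X := by exact_mod_cast hkM
    nlinarith [Nat.cast_nonneg (α := ℝ) k]

end Growth

/-! ## Chords of the unit circle and Diophantine rotations -/

section Chord

open FourierTransform

variable {α c ρ : ℝ} {p : ℕ}

/-- The distance on the unit circle from `1` to `𝐞 y`. It is comparable to `distToInt y`, and
products of chords are values of trigonometric polynomials. -/
def chord (y : ℝ) : ℝ := ‖(1 : ℂ) - 𝐞 y‖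

theorem chord_nonneg (y : ℝ) : 0 ≤ chord y := norm_nonneg _

@[simp] theorem norm_fourierChar (y : ℝ) : ‖(𝐞 y : ℂ)‖ = 1 := Circle.norm_coe _

theorem chord_le_two (y : ℝ) : chord y ≤ 2 :=
  (norm_sub_le _ _).trans (by norm_num)

theorem chord_eq (y : ℝ) : chord y = 2 * |sin (π * y)| := by
  rw [chord, norm_sub_rev, fourierChar_apply, mul_comm, Complex.norm_exp_I_mul_ofReal_sub_one,
    norm_eq_abs, abs_mul, abs_two]
  ring_nf

@[simp] theorem chord_zero : chord 0 = 0 := by simp [chord]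

@[simp] theorem chord_neg (y : ℝ) : chord (-y) = chord y := by
  simp [chord_eq]

theorem chord_add_le (x y : ℝ) : chord (x + y) ≤ chord x + chord y := by
  have h : (1 : ℂ) - 𝐞 (x + y) = (1 - 𝐞 x) + 𝐞 x * (1 - 𝐞 y) := by
    rw [coe_fourierChar_add]
    ring
  calc chord (x + y) ≤ ‖(1 : ℂ) - 𝐞 x‖ + ‖𝐞 x * ((1 : ℂ) - 𝐞 y)‖ := by
        rw [chord, h]
        exact norm_add_le _ _
    _ = chord x + chord y := by rw [norm_mul, norm_fourierChar, one_mul, chord, chord]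

theorem chord_sub_le (x y : ℝ) : chord (x - y) ≤ chord x + chord y := by
  simpa [sub_eq_add_neg] using chord_add_le x (-y)

theorem chord_sub_intCast (y : ℝ) (k : ℤ) : chord (y - k) = chord y := by
  rw [chord_eq, chord_eq, mul_sub, mul_comm π (k : ℝ), sin_sub_int_mul_pi, abs_mul, abs_zpow,
    abs_neg, abs_one, one_zpow, one_mul]

theorem abs_cos_sub_cos_eq_chord_mul_chord (a b : ℝ) :
    |cos (2 * π * a) - cos (2 * π * b)| = chord (a - b) * chord (a + b) / 2 := by
  rw [chord_eq, chord_eq, cos_sub_cos, abs_mul, abs_mul,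
    show (2 * π * a + 2 * π * b) / 2 = π * (a + b) by ring,
    show (2 * π * a - 2 * π * b) / 2 = π * (a - b) by ring]
  norm_num
  ring

theorem four_mul_distToInt_le_chord (y : ℝ) : 4 * distToInt y ≤ chord y := by
  rw [← chord_sub_intCast y (round y), chord_eq, distToInt]
  have hround : |π * (y - round y)| ≤ π / 2 := by
    rw [abs_mul, abs_of_pos pi_pos]
    nlinarith [abs_sub_round y, pi_pos]
  have hsin := mul_abs_le_abs_sin hround
  rw [abs_mul, abs_of_pos pi_pos, ← mul_assoc, div_mul_cancel₀ _ pi_ne_zero] at hsin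
  linarith

theorem chord_le_two_pi_mul_distToInt (y : ℝ) : chord y ≤ 2 * π * distToInt y := by
  rw [← chord_sub_intCast y (round y), chord_eq, distToInt]
  have hsin : |sin (π * (y - round y))| ≤ |π * (y - round y)| := abs_sin_le_abs
  rw [abs_mul, abs_of_pos pi_pos] at hsin
  linarith

/-- The Diophantine condition with natural exponent `p`, in terms of chords. -/
structure ChordDiophantine (α c : ℝ) (p : ℕ) : Prop where
  pos : 0 < c
  le_one : c ≤ 1
  le_chord : ∀ k : ℤ, k ≠ 0 → c / |(k : ℝ)| ^ p ≤ chord (k * α)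

/-- The distance from `1` to the point `(1 - ρ) * 𝐞 y` inside the disc. For `ρ > 0` it is bounded
away from zero, so that its logarithm can be averaged along orbits. -/
def dampedChord (ρ y : ℝ) : ℝ := ‖(1 : ℂ) - (1 - ρ : ℝ) * 𝐞 y‖

theorem dampedChord_sq (ρ y : ℝ) :
    dampedChord ρ y ^ 2 = 1 - 2 * (1 - ρ) * cos (2 * π * y) + (1 - ρ) ^ 2 := by
  rw [dampedChord, ← Complex.normSq_eq_norm_sq, Complex.normSq_apply]
  simp only [Complex.sub_re, Complex.one_re, Complex.sub_im, Complex.one_im,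
    Complex.re_ofReal_mul, Complex.im_ofReal_mul, fourierChar_re, fourierChar_im]
  linear_combination (1 - ρ) ^ 2 * sin_sq_add_cos_sq (2 * π * y)

theorem dampedChord_zero_left (y : ℝ) : dampedChord 0 y = chord y := by
  simp [dampedChord, chord]

theorem mul_chord_le_dampedChord (ρ y : ℝ) : (1 - ρ / 2) * chord y ≤ dampedChord ρ y := by
  have hnonneg : 0 ≤ dampedChord ρ y := norm_nonneg _
  refine (abs_le_of_sq_le_sq' ?_ hnonneg).2
  rw [mul_pow, ← dampedChord_zero_left, dampedChord_sq, dampedChord_sq]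
  nlinarith [mul_nonneg (sq_nonneg ρ)
    (by linarith [neg_one_le_cos (2 * π * y)] : 0 ≤ 1 + cos (2 * π * y))]

theorem chord_le_exp_mul_dampedChord (hρ₀ : 0 ≤ ρ) (hρ₁ : ρ ≤ 1) (y : ℝ) :
    chord y ≤ exp ρ * dampedChord ρ y := by
  have hfactor : 1 ≤ exp ρ * (1 - ρ / 2) := by nlinarith [add_one_le_exp ρ]
  calc chord y ≤ exp ρ * (1 - ρ / 2) * chord y :=
        le_mul_of_one_le_left (chord_nonneg y) hfactor
    _ = exp ρ * ((1 - ρ / 2) * chord y) := mul_assoc _ _ _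
    _ ≤ exp ρ * dampedChord ρ y := by gcongr; exact mul_chord_le_dampedChord ρ y

theorem le_dampedChord (hρ : ρ ≤ 1) (y : ℝ) : ρ ≤ dampedChord ρ y := by
  have h := norm_sub_norm_le (1 : ℂ) ((1 - ρ : ℝ) * 𝐞 y)
  rw [norm_mul, norm_fourierChar, Complex.norm_real, norm_of_nonneg (by linarith), norm_one] at h
  exact le_trans (by linarith) h

theorem dampedChord_le_chord_add (hρ : 0 ≤ ρ) (y : ℝ) : dampedChord ρ y ≤ chord y + ρ := by
  have h : (1 : ℂ) - (1 - ρ : ℝ) * 𝐞 y = (1 - 𝐞 y) + (ρ : ℂ) * 𝐞 y := by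
    push_cast
    ring
  calc dampedChord ρ y ≤ chord y + ‖(ρ : ℂ) * 𝐞 y‖ := by
        rw [dampedChord, h]
        exact norm_add_le _ _
    _ = chord y + ρ := by
        rw [norm_mul, norm_fourierChar, mul_one, Complex.norm_real, norm_of_nonneg hρ]

theorem dampedChord_le_two (hρ₀ : 0 ≤ ρ) (hρ₁ : ρ ≤ 1) (y : ℝ) : dampedChord ρ y ≤ 2 := by
  refine (norm_sub_le _ _).trans ?_
  rw [norm_mul, norm_fourierChar, Complex.norm_real, norm_of_nonneg (by linarith), norm_one]
  linarith

theorem norm_sum_fourierChar_pow_le (hα : ChordDiophantine α c p) (y : ℝ) (n : ℕ) {j : ℕ}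
    (hj : j ≠ 0) :
    ‖∑ i ∈ Finset.range n, (𝐞 (y + i * α) : ℂ) ^ j‖ ≤ 2 / c * j ^ p := by
  have hgeom (i : ℕ) : (𝐞 (y + i * α) : ℂ) ^ j = (𝐞 y : ℂ) ^ j * (𝐞 (j * α) : ℂ) ^ i := by
    rw [← coe_fourierChar_nat_mul, ← coe_fourierChar_nat_mul, ← coe_fourierChar_nat_mul,
      ← coe_fourierChar_add]
    ring_nf
  have hlow : c / (j : ℝ) ^ p ≤ chord (j * α) := by
    simpa using hα.le_chord j (by exact_mod_cast hj)
  have hpos : 0 < c / (j : ℝ) ^ p := div_pos hα.pos (by positivity)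
  have hne : (𝐞 (j * α) : ℂ) ≠ 1 := fun h => by
    rw [chord, h, sub_self, norm_zero] at hlow
    linarith
  have hnum : ‖(𝐞 (j * α) : ℂ) ^ n - 1‖ ≤ 2 := by
    refine (norm_sub_le _ _).trans ?_
    rw [norm_pow, norm_fourierChar]
    norm_num
  calc ‖∑ i ∈ Finset.range n, (𝐞 (y + i * α) : ℂ) ^ j‖
      = ‖(𝐞 (j * α) : ℂ) ^ n - 1‖ / chord (j * α) := by
        simp_rw [hgeom]
        rw [← Finset.mul_sum, norm_mul, norm_pow, norm_fourierChar, one_pow, one_mul,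
          geom_sum_eq hne, norm_div, norm_sub_rev (𝐞 (j * α) : ℂ) 1, chord]
    _ ≤ 2 / (c / j ^ p) := by gcongr
    _ = 2 / c * j ^ p := by field_simp

theorem pow_le_factorial_mul_choose (j p : ℕ) : j ^ p ≤ p.factorial * (j + p).choose p := by
  rw [← Nat.ascFactorial_eq_factorial_mul_choose]
  exact (Nat.pow_le_pow_left j.le_succ p).trans (Nat.pow_succ_le_ascFactorial (j + 1) p)

theorem norm_sum_mul_fourierChar_pow_div_le {r : ℝ} (hα : ChordDiophantine α c p)
    (hr : 0 ≤ r) (y : ℝ) (n j : ℕ) :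
    ‖∑ i ∈ Finset.range n, ((r : ℂ) * 𝐞 (y + i * α)) ^ j / j‖
      ≤ 2 / c * p.factorial * (((j + p).choose p : ℝ) * r ^ j) := by
  have hc := hα.pos
  rcases Nat.eq_zero_or_pos j with rfl | hj
  · simp only [pow_zero, CharP.cast_eq_zero, div_zero, Finset.sum_const_zero, norm_zero]
    positivity
  have hj₁ : (1 : ℝ) ≤ j := by exact_mod_cast hj
  have hchoose : (j : ℝ) ^ p ≤ p.factorial * (j + p).choose p := by
    exact_mod_cast pow_le_factorial_mul_choose j p
  calc ‖∑ i ∈ Finset.range n, ((r : ℂ) * 𝐞 (y + i * α)) ^ j / j‖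
      = r ^ j * ‖∑ i ∈ Finset.range n, (𝐞 (y + i * α) : ℂ) ^ j‖ / j := by
        simp_rw [mul_pow]
        rw [← Finset.sum_div, ← Finset.mul_sum, norm_div, norm_mul, norm_pow,
          Complex.norm_real, norm_of_nonneg hr, Complex.norm_natCast]
    _ ≤ r ^ j * (2 / c * (p.factorial * (j + p).choose p)) / 1 := by
        gcongr
        exact (norm_sum_fourierChar_pow_le hα y n hj.ne').trans (by gcongr)
    _ = 2 / c * p.factorial * (((j + p).choose p : ℝ) * r ^ j) := by ring

/-- Expand `-log (1 - z)` in powers of `z`: each power sums to a geometric sum over the orbit, which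
the Diophantine condition bounds independently of `n`. -/
theorem abs_sum_log_dampedChord_le (hα : ChordDiophantine α c p) (hρ₀ : 0 < ρ) (hρ₁ : ρ ≤ 1)
    (y : ℝ) (n : ℕ) :
    |∑ i ∈ Finset.range n, log (dampedChord ρ (y + i * α))|
      ≤ 2 / c * p.factorial / ρ ^ (p + 1) := by
  have hr₀ : 0 ≤ 1 - ρ := by linarith
  have hsmall (i : ℕ) : ‖((1 - ρ : ℝ) : ℂ) * 𝐞 (y + i * α)‖ < 1 := by
    rw [norm_mul, norm_fourierChar, mul_one, Complex.norm_real, norm_of_nonneg hr₀]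
    linarith
  have htaylor := hasSum_sum (s := Finset.range n) fun i _ =>
    Complex.hasSum_taylorSeries_neg_log (hsmall i)
  have hmajorant := (hasSum_choose_mul_geometric_of_norm_lt_one p
    (by rw [norm_of_nonneg hr₀]; linarith : ‖1 - ρ‖ < 1)).mul_left (2 / c * p.factorial)
  have hbound := tsum_of_norm_bounded hmajorant
    (norm_sum_mul_fourierChar_pow_div_le hα hr₀ y n)
  rw [htaylor.tsum_eq, Finset.sum_neg_distrib, norm_neg, sub_sub_cancel] at hbound
  calc |∑ i ∈ Finset.range n, log (dampedChord ρ (y + i * α))|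
      = |(∑ i ∈ Finset.range n, Complex.log (1 - (1 - ρ : ℝ) * 𝐞 (y + i * α))).re| := by
        simp_rw [Complex.re_sum, Complex.log_re, dampedChord]
    _ ≤ 2 / c * p.factorial * (1 / ρ ^ (p + 1)) := (Complex.abs_re_le_norm _).trans hbound
    _ = 2 / c * p.factorial / ρ ^ (p + 1) := mul_one_div _ _

end Chord

/-! ## Products of chords along an orbit -/

section OrbitProduct

variable {α c ρ σ : ℝ} {p : ℕ}

theorem card_filter_chord_lt_le (hα : ChordDiophantine α c p) (y : ℝ) (n : ℕ) {g : ℕ}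
    (hg : 0 < g) :
    ((Finset.range n).filter fun i : ℕ => chord (y + i * α) < c / (2 * g ^ p)).card
      ≤ n / g + 1 := by
  rw [← Finset.card_range (n / g + 1)]
  refine Finset.card_le_card_of_injOn (· / g) (fun i hi => ?_) fun i hi j hj hij => ?_
  · simp only [Finset.coe_filter, Finset.mem_range, Set.mem_ofPred_eq] at hi
    simpa using Nat.lt_succ_of_le (Nat.div_le_div_right hi.1.le)
  simp only [Finset.coe_filter, Finset.mem_range, Set.mem_ofPred_eq] at hi hj
  by_contra hne
  have hclose : |(i : ℤ) - j| ≤ g := by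
    have hi' := Nat.div_add_mod i g
    have hj' := Nat.div_add_mod j g
    have hi_mod := Nat.mod_lt i hg
    have hj_mod := Nat.mod_lt j hg
    simp only at hij
    rw [hij] at hi'
    generalize g * (j / g) = w at hi' hj'
    rw [abs_le]
    constructor <;> omega
  have hclose' : |(((i : ℤ) - j : ℤ) : ℝ)| ≤ g := by exact_mod_cast hclose
  have hpos : 0 < |(((i : ℤ) - j : ℤ) : ℝ)| :=
    abs_pos.2 (by exact_mod_cast (by omega : (i : ℤ) - j ≠ 0))
  have hsub := chord_sub_le (y + i * α) (y + j * α)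
  rw [show y + i * α - (y + j * α) = (((i : ℤ) - j : ℤ) : ℝ) * α by push_cast; ring] at hsub
  have hdio := hα.le_chord ((i : ℤ) - j) (by omega)
  have hmono : c / (g : ℝ) ^ p ≤ c / |(((i : ℤ) - j : ℤ) : ℝ)| ^ p := by
    have := hα.pos.le
    gcongr
  have hhalf : c / (2 * (g : ℝ) ^ p) = c / (g : ℝ) ^ p / 2 := by rw [div_div, mul_comm]
  linarith [hi.2, hj.2]

theorem sum_log_dampedChord_le (hα : ChordDiophantine α c p) (hρ₀ : 0 < ρ) (hρ₁ : ρ ≤ 1) (y : ℝ)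
    {n : ℕ} {J : Finset ℕ} (hJ : J ⊆ Finset.range n) (hcard : (Finset.range n \ J).card ≤ 2) :
    ∑ i ∈ J, log (dampedChord ρ (y + i * α)) ≤ 2 / c * p.factorial / ρ ^ (p + 1) + 2 / ρ := by
  have hsum := (abs_le.1 (abs_sum_log_dampedChord_le hα hρ₀ hρ₁ y n)).2
  rw [← Finset.sum_sdiff hJ] at hsum
  have hterm : ∀ i ∈ Finset.range n \ J, -ρ⁻¹ ≤ log (dampedChord ρ (y + i * α)) := fun i _ => by
    have hinv := one_sub_inv_le_log_of_pos hρ₀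
    linarith [log_le_log hρ₀ (le_dampedChord hρ₁ (y + i * α))]
  have hremoved := Finset.card_nsmul_le_sum _ _ _ hterm
  rw [nsmul_eq_mul] at hremoved
  have hcard' : ((Finset.range n \ J).card : ℝ) * ρ⁻¹ ≤ 2 * ρ⁻¹ := by
    gcongr
    exact_mod_cast hcard
  linarith [div_eq_mul_inv 2 ρ]

theorem le_sum_log_dampedChord (hα : ChordDiophantine α c p) (hρ₀ : 0 < ρ) (hρ₁ : ρ ≤ 1) (y : ℝ)
    {n : ℕ} {J : Finset ℕ} (hJ : J ⊆ Finset.range n) (hcard : (Finset.range n \ J).card ≤ 2) :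
    -(2 / c * p.factorial / ρ ^ (p + 1) + 2) ≤ ∑ i ∈ J, log (dampedChord ρ (y + i * α)) := by
  have hsum := (abs_le.1 (abs_sum_log_dampedChord_le hα hρ₀ hρ₁ y n)).1
  rw [← Finset.sum_sdiff hJ] at hsum
  have hterm : ∀ i ∈ Finset.range n \ J, log (dampedChord ρ (y + i * α)) ≤ 1 := fun i _ => by
    have hlog := log_le_sub_one_of_pos (hρ₀.trans_le (le_dampedChord hρ₁ (y + i * α)))
    linarith [dampedChord_le_two hρ₀.le hρ₁ (y + i * α)]
  have hremoved := Finset.sum_le_card_nsmul _ _ _ hterm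
  rw [nsmul_eq_mul, mul_one] at hremoved
  have hcard' : ((Finset.range n \ J).card : ℝ) ≤ 2 := by exact_mod_cast hcard
  linarith

theorem card_le_of_subset_range {J : Finset ℕ} {n : ℕ} (hJ : J ⊆ Finset.range n) : J.card ≤ n := by
  simpa using Finset.card_le_card hJ

theorem prod_chord_le (hα : ChordDiophantine α c p) (hρ₀ : 0 < ρ) (hρ₁ : ρ ≤ 1) (y : ℝ)
    {n : ℕ} {J : Finset ℕ} (hJ : J ⊆ Finset.range n) (hcard : (Finset.range n \ J).card ≤ 2) :
    ∏ i ∈ J, chord (y + i * α)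
      ≤ exp (n * ρ + (2 / c * p.factorial / ρ ^ (p + 1) + 2 / ρ)) := by
  have hpos (i : ℕ) : 0 < dampedChord ρ (y + i * α) := hρ₀.trans_le (le_dampedChord hρ₁ _)
  have hJn : (J.card : ℝ) ≤ n := by exact_mod_cast card_le_of_subset_range hJ
  calc ∏ i ∈ J, chord (y + i * α)
      ≤ ∏ i ∈ J, exp ρ * dampedChord ρ (y + i * α) :=
        Finset.prod_le_prod (fun i _ => chord_nonneg _)
          fun i _ => chord_le_exp_mul_dampedChord hρ₀.le hρ₁ _
    _ = exp (J.card * ρ + ∑ i ∈ J, log (dampedChord ρ (y + i * α))) := by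
        rw [Finset.prod_mul_distrib, Finset.prod_const, exp_add, exp_nat_mul, exp_sum]
        simp_rw [exp_log (hpos _)]
    _ ≤ exp (n * ρ + (2 / c * p.factorial / ρ ^ (p + 1) + 2 / ρ)) := by
        gcongr
        exact sum_log_dampedChord_le hα hρ₀ hρ₁ y hJ hcard

theorem log_dampedChord_le_add_log_two_div (hρ₀ : 0 < ρ) (hρ₁ : ρ ≤ 1) (hσ : 0 < σ) {y : ℝ}
    (hy : σ ≤ chord y) : log (dampedChord ρ y) ≤ log (chord y) + log (2 / σ) := by
  have hchord : 0 < chord y := hσ.trans_le hy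
  rw [← log_mul hchord.ne' (by positivity)]
  refine log_le_log (hρ₀.trans_le (le_dampedChord hρ₁ y)) ?_
  calc dampedChord ρ y ≤ σ * (2 / σ) := by
        rw [mul_div_cancel₀ _ hσ.ne']
        exact dampedChord_le_two hρ₀.le hρ₁ y
    _ ≤ chord y * (2 / σ) := by gcongr

theorem log_dampedChord_le_log_add (hρ₀ : 0 < ρ) (hρ₁ : ρ ≤ 1) {s y : ℝ} (hs : 0 ≤ s)
    (hy : ρ ≤ s * chord y) : log (dampedChord ρ y) ≤ log (chord y) + s := by
  have hchord : 0 < chord y := (pos_iff_pos_of_mul_pos (hρ₀.trans_le hy)).1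
    (hs.lt_of_ne' fun h => by rw [h, zero_mul] at hy; linarith)
  rw [← log_exp s, ← log_mul hchord.ne' (exp_ne_zero s)]
  refine log_le_log (hρ₀.trans_le (le_dampedChord hρ₁ y)) ?_
  calc dampedChord ρ y ≤ chord y + ρ := dampedChord_le_chord_add hρ₀.le y
    _ ≤ chord y * (s + 1) := by linarith
    _ ≤ chord y * exp s := by gcongr; exact add_one_le_exp s

theorem le_sum_log_chord (hα : ChordDiophantine α c p) (y : ℝ) {n g : ℕ} (hg : 0 < g)
    (hσ₀ : 0 < σ) (hσ₁ : σ ≤ 1) (hρ₀ : 0 < ρ) (hρ₁ : ρ ≤ 1) (hρ : ρ ≤ 1 / g * (c / (2 * g ^ p)))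
    {J : Finset ℕ} (hJ : J ⊆ Finset.range n) (hcard : (Finset.range n \ J).card ≤ 2)
    (hsep : ∀ i ∈ J, σ ≤ chord (y + i * α)) :
    -(n / g + (2 / c * p.factorial / ρ ^ (p + 1) + 2) + (n / g + 1) * log (2 / σ))
      ≤ ∑ i ∈ J, log (chord (y + i * α)) := by
  set B := (Finset.range n).filter fun i : ℕ => chord (y + i * α) < c / (2 * g ^ p)
  have hlog : 0 ≤ log (2 / σ) := log_nonneg (by rw [le_div_iff₀ hσ₀]; linarith)
  have hg' : 0 ≤ 1 / (g : ℝ) := by positivity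
  have hterm : ∀ i ∈ J, log (dampedChord ρ (y + i * α))
      ≤ log (chord (y + i * α)) + 1 / g + if i ∈ B then log (2 / σ) else 0 := by
    intro i hi
    split_ifs with hiB
    · linarith [log_dampedChord_le_add_log_two_div hρ₀ hρ₁ hσ₀ (hsep i hi)]
    · have hfar : c / (2 * (g : ℝ) ^ p) ≤ chord (y + i * α) := by
        by_contra! hlt
        exact hiB (Finset.mem_filter.2 ⟨hJ hi, hlt⟩)
      rw [add_zero]
      exact log_dampedChord_le_log_add hρ₀ hρ₁ hg' (hρ.trans (by gcongr))
  have hBcard : ((J.filter (· ∈ B)).card : ℝ) ≤ n / g + 1 := by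
    have hle : (J.filter (· ∈ B)).card ≤ n / g + 1 :=
      (Finset.card_le_card fun i hi => (Finset.mem_filter.1 hi).2).trans
        (card_filter_chord_lt_le hα y n hg)
    calc ((J.filter (· ∈ B)).card : ℝ) ≤ ((n / g : ℕ) : ℝ) + 1 := by exact_mod_cast hle
      _ ≤ n / g + 1 := by gcongr; exact Nat.cast_div_le
  have hJn : (J.card : ℝ) * (1 / g) ≤ n / g := by
    rw [mul_one_div]
    gcongr
    exact card_le_of_subset_range hJ
  have hsum := (le_sum_log_dampedChord hα hρ₀ hρ₁ y hJ hcard).trans (Finset.sum_le_sum hterm)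
  rw [Finset.sum_add_distrib, Finset.sum_add_distrib, Finset.sum_const, nsmul_eq_mul,
    ← Finset.sum_filter, Finset.sum_const, nsmul_eq_mul] at hsum
  linarith [mul_le_mul_of_nonneg_right hBcard hlog]

theorem le_prod_chord (hα : ChordDiophantine α c p) (y : ℝ) {n g : ℕ} (hg : 0 < g)
    (hσ₀ : 0 < σ) (hσ₁ : σ ≤ 1) {J : Finset ℕ} (hJ : J ⊆ Finset.range n)
    (hcard : (Finset.range n \ J).card ≤ 2) (hsep : ∀ i ∈ J, σ ≤ chord (y + i * α)) :
    exp (-(n / g + (2 / c * p.factorial * (2 / c) ^ (p + 1) * g ^ ((p + 1) * (p + 1)) + 2)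
        + (n / g + 1) * log (2 / σ))) ≤ ∏ i ∈ J, chord (y + i * α) := by
  have hc := hα.pos
  have : 0 < (g : ℝ) := by exact_mod_cast hg
  have hg₁ : (1 : ℝ) ≤ g ^ (p + 1) := one_le_pow₀ (by exact_mod_cast hg)
  have hρ₁ : c / (2 * (g : ℝ) ^ (p + 1)) ≤ 1 := by
    rw [div_le_one (by positivity)]
    linarith [hα.le_one]
  have hbound := le_sum_log_chord hα y hg hσ₀ hσ₁ (ρ := c / (2 * g ^ (p + 1))) (by positivity) hρ₁
    (le_of_eq (by rw [pow_succ]; field_simp)) hJ hcard hsep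
  have hdiv : 2 / c * p.factorial / (c / (2 * (g : ℝ) ^ (p + 1))) ^ (p + 1)
      = 2 / c * p.factorial * (2 / c) ^ (p + 1) * g ^ ((p + 1) * (p + 1)) := by
    rw [pow_mul, mul_assoc _ ((2 / c) ^ (p + 1)), ← mul_pow, div_eq_mul_inv, ← inv_pow]
    congr 2
    rw [inv_div]
    ring
  rw [hdiv] at hbound
  refine (exp_le_exp.2 hbound).trans_eq ?_
  rw [exp_sum]
  exact Finset.prod_congr rfl fun i hi => exp_log (hσ₀.trans_le (hsep i hi))

/-- The choice `g ≈ log X` balances the two terms. -/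
theorem eventually_exists_div_mul_log_add_pow_le (q Q : ℕ) {M ε : ℝ} (hM : 0 ≤ M) (hε : 0 < ε) :
    ∀ᶠ X : ℕ in atTop, ∃ g : ℕ, 0 < g ∧
      X / g * (2 + q * log X) + M * g ^ Q + (3 + q * log X) ≤ ε * X := by
  set C := 2 * (2 + q) / ε with hC
  have hC₀ : 0 < C := by positivity
  have hlittle (k : ℕ) (a : ℝ) : ∀ᶠ x : ℝ in atTop, a * log x ^ k ≤ ε / 4 * x := by
    have ho := ((isLittleO_pow_log_id_atTop (n := k)).const_mul_left a).bound
      (show 0 < ε / 4 by positivity)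
    filter_upwards [ho, eventually_ge_atTop 0] with x hx hx₀
    simp only [id, norm_of_nonneg hx₀] at hx
    exact (le_abs_self _).trans hx
  have hall := (hlittle Q (M * (2 * C + 1) ^ Q)).and
    ((hlittle 1 (3 + q)).and (tendsto_log_atTop.eventually_ge_atTop 1))
  filter_upwards [tendsto_natCast_atTop_atTop (R := ℝ) |>.eventually hall]
    with X ⟨hpow, hlin, hlog⟩
  have hpos : 0 < C * (log X + 1) := by positivity
  have hle_ceil := Nat.le_ceil (C * (log X + 1))
  have hceil_lt := Nat.ceil_lt_add_one hpos.le
  set g := ⌈C * (log X + 1)⌉₊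
  have hg : 0 < (g : ℝ) := hpos.trans_le hle_ceil
  have hquot : X / g * (2 + q * log X) ≤ ε / 2 * X := by
    rw [div_mul_eq_mul_div, div_le_iff₀ hg]
    calc X * (2 + q * log X) ≤ X * ((2 + q) * (log X + 1)) := by gcongr; nlinarith
      _ = X * (ε / 2 * (C * (log X + 1))) := by rw [hC]; field_simp
      _ ≤ X * (ε / 2 * g) := by gcongr
      _ = ε / 2 * X * g := by ring
  have hgpow : M * (g : ℝ) ^ Q ≤ M * (2 * C + 1) ^ Q * log X ^ Q := by
    rw [mul_assoc, ← mul_pow]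
    gcongr
    nlinarith
  refine ⟨g, by exact_mod_cast hg, ?_⟩
  linarith

theorem eventually_prod_chord_le (hα : ChordDiophantine α c p) {ε : ℝ} (hε : 0 < ε) :
    ∀ᶠ X : ℕ in atTop, ∀ n ≤ X, ∀ (y : ℝ) (J : Finset ℕ), J ⊆ Finset.range n →
      (Finset.range n \ J).card ≤ 2 → ∏ i ∈ J, chord (y + i * α) ≤ exp (ε * X) := by
  set ρ := min 1 (ε / 2)
  have hρ₀ : 0 < ρ := lt_min one_pos (by positivity)
  set M := 2 / c * p.factorial / ρ ^ (p + 1) + 2 / ρ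
  filter_upwards [tendsto_natCast_atTop_atTop (R := ℝ) |>.eventually_ge_atTop (M / (ε / 2))]
    with X hX n hn y J hJ hcard
  rw [div_le_iff₀ (by positivity)] at hX
  refine (prod_chord_le hα hρ₀ (min_le_left _ _) y hJ hcard).trans (exp_le_exp.2 ?_)
  have hnρ : n * ρ ≤ X * (ε / 2) := by
    gcongr
    exact min_le_right _ _
  linarith

theorem eventually_le_prod_chord (hα : ChordDiophantine α c p) (q : ℕ) {ε : ℝ} (hε : 0 < ε) :
    ∀ᶠ X : ℕ in atTop, ∀ n ≤ X, ∀ (y : ℝ) (J : Finset ℕ), J ⊆ Finset.range n →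
      (Finset.range n \ J).card ≤ 2 → (∀ i ∈ J, 1 / (X : ℝ) ^ q ≤ chord (y + i * α)) →
      exp (-(ε * X)) ≤ ∏ i ∈ J, chord (y + i * α) := by
  have hc := hα.pos
  set M := 2 / c * p.factorial * (2 / c) ^ (p + 1)
  filter_upwards [eventually_exists_div_mul_log_add_pow_le q ((p + 1) * (p + 1))
    (M := M) (by positivity) hε, eventually_ge_atTop 1]
    with X ⟨g, hg, hbound⟩ hX n hn y J hJ hcard hsep
  have hX₁ : (1 : ℝ) ≤ X := by exact_mod_cast hX
  have hσ₁ : 1 / (X : ℝ) ^ q ≤ 1 := div_le_one_of_le₀ (one_le_pow₀ hX₁) (by positivity)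
  refine le_trans (exp_le_exp.2 ?_) (le_prod_chord hα y hg (by positivity) hσ₁ hJ hcard hsep)
  have hlog : log (2 / (1 / (X : ℝ) ^ q)) ≤ 1 + q * log X := by
    rw [div_div_eq_mul_div, div_one, log_mul two_ne_zero (by positivity), log_pow]
    linarith [log_two_lt_d9]
  have : 0 ≤ log (X : ℝ) := log_nonneg hX₁
  have hnX : (n : ℝ) / g ≤ X / g := by gcongr
  have hprod : ((n : ℝ) / g + 1) * log (2 / (1 / (X : ℝ) ^ q))
      ≤ (X / g + 1) * (1 + q * log X) :=
    mul_le_mul (by gcongr) hlog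
      (log_nonneg (by rw [le_div_iff₀ (by positivity)]; linarith)) (by positivity)
  linarith

end OrbitProduct

/-! ## Interpolation of continuants at two blocks of sites -/

section Interpolation

variable {α c : ℝ} {p : ℕ}

/-- A block of at most `N` consecutive integers with at most two points deleted. -/
def IsNearBlock (N : ℕ) (J : Finset ℤ) : Prop :=
  ∃ (a : ℤ) (n : ℕ), n ≤ N ∧ J ⊆ Finset.Ico a (a + n) ∧ (Finset.Ico a (a + n) \ J).card ≤ 2

/-- A disjoint union of two blocks of at most `N` consecutive integers each, inside `[-N, N]`.
Such sets serve as interpolation nodes, one block near the site under study and the other near the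
maximum of the eigenfunction. -/
def IsTwoBlock (N : ℕ) (I : Finset ℤ) : Prop :=
  (∀ i ∈ I, |i| ≤ N) ∧ ∃ (a₁ a₂ : ℤ) (n₁ n₂ : ℕ), n₁ ≤ N ∧ n₂ ≤ N ∧
    Disjoint (Finset.Ico a₁ (a₁ + n₁)) (Finset.Ico a₂ (a₂ + n₂)) ∧
    I = Finset.Ico a₁ (a₁ + n₁) ∪ Finset.Ico a₂ (a₂ + n₂)

theorem IsTwoBlock.card_le {N : ℕ} {I : Finset ℤ} (hI : IsTwoBlock N I) : I.card ≤ 2 * N := by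
  obtain ⟨-, a₁, a₂, n₁, n₂, h₁, h₂, -, rfl⟩ := hI
  refine (Finset.card_union_le _ _).trans ?_
  simp only [Int.card_Ico, add_sub_cancel_left, Int.toNat_natCast]
  omega

theorem IsNearBlock.exists_eq_map {N : ℕ} {J : Finset ℤ} (hJ : IsNearBlock N J) :
    ∃ (a : ℤ) (n : ℕ) (J' : Finset ℕ), n ≤ N ∧ J' ⊆ Finset.range n ∧
      (Finset.range n \ J').card ≤ 2 ∧
      J = J'.map (Nat.castEmbedding.trans (addLeftEmbedding a)) := by
  obtain ⟨a, n, hn, hJ, hcard⟩ := hJ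
  have hIco : Finset.Ico a (a + n)
      = (Finset.range n).map (Nat.castEmbedding.trans (addLeftEmbedding a)) := by
    rw [Int.Ico_eq_finset_map, add_sub_cancel_left, Int.toNat_natCast]
  rw [hIco] at hJ hcard
  obtain ⟨J', hJ', rfl⟩ := Finset.subset_map_iff.1 hJ
  rw [← Finset.map_sdiff, Finset.card_map] at hcard
  exact ⟨a, n, J', hn, hJ', hcard, rfl⟩

theorem IsTwoBlock.exists_isNearBlock {N : ℕ} {I J : Finset ℤ} (hI : IsTwoBlock N I) (hJ : J ⊆ I)
    (hcard : (I \ J).card ≤ 2) :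
    ∃ J₁ J₂, IsNearBlock N J₁ ∧ IsNearBlock N J₂ ∧ Disjoint J₁ J₂ ∧ J = J₁ ∪ J₂ := by
  obtain ⟨-, a₁, a₂, n₁, n₂, h₁, h₂, hdisj, rfl⟩ := hI
  refine ⟨J ∩ Finset.Ico a₁ (a₁ + n₁), J ∩ Finset.Ico a₂ (a₂ + n₂),
    ⟨a₁, n₁, h₁, Finset.inter_subset_right, (Finset.card_le_card ?_).trans hcard⟩,
    ⟨a₂, n₂, h₂, Finset.inter_subset_right, (Finset.card_le_card ?_).trans hcard⟩,
    hdisj.mono Finset.inter_subset_right Finset.inter_subset_right, ?_⟩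
  · grind
  · grind
  · rw [← Finset.inter_union_distrib_left, Finset.inter_eq_left.2 hJ]

theorem chord_add_mul_addLeft (y : ℝ) (a : ℤ) (i : ℕ) :
    chord (y + (Nat.castEmbedding.trans (addLeftEmbedding a) i : ℤ) * α)
      = chord (y + a * α + i * α) := by
  simp only [Function.Embedding.trans_apply, Nat.castEmbedding_apply, addLeftEmbedding_apply]
  push_cast
  ring_nf

theorem eventually_prod_chord_le_of_isTwoBlock (hα : ChordDiophantine α c p) {ε : ℝ}
    (hε : 0 < ε) :
    ∀ᶠ X : ℕ in atTop, ∀ I J : Finset ℤ, IsTwoBlock X I → J ⊆ I → (I \ J).card ≤ 2 →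
      ∀ y : ℝ, ∏ i ∈ J, chord (y + i * α) ≤ exp (ε * X) := by
  filter_upwards [eventually_prod_chord_le hα (half_pos hε)] with X hX I J hI hJ hcard y
  have hblock : ∀ J, IsNearBlock X J → ∏ i ∈ J, chord (y + i * α) ≤ exp (ε / 2 * X) := by
    intro J hJ
    obtain ⟨a, n, J', hn, hJ', hcard', rfl⟩ := hJ.exists_eq_map
    simp_rw [Finset.prod_map, chord_add_mul_addLeft]
    exact hX n hn (y + a * α) J' hJ' hcard'
  obtain ⟨J₁, J₂, hJ₁, hJ₂, hdisj, rfl⟩ := hI.exists_isNearBlock hJ hcard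
  calc ∏ i ∈ J₁ ∪ J₂, chord (y + i * α)
      = (∏ i ∈ J₁, chord (y + i * α)) * ∏ i ∈ J₂, chord (y + i * α) := Finset.prod_union hdisj
    _ ≤ exp (ε / 2 * X) * exp (ε / 2 * X) :=
        mul_le_mul (hblock J₁ hJ₁) (hblock J₂ hJ₂)
          (Finset.prod_nonneg fun i _ => chord_nonneg _) (exp_pos _).le
    _ = exp (ε * X) := by rw [← exp_add]; ring_nf

theorem eventually_le_prod_chord_of_isTwoBlock (hα : ChordDiophantine α c p) (q : ℕ) {ε : ℝ}
    (hε : 0 < ε) :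
    ∀ᶠ X : ℕ in atTop, ∀ I J : Finset ℤ, IsTwoBlock X I → J ⊆ I → (I \ J).card ≤ 2 →
      ∀ y : ℝ, (∀ i ∈ J, 1 / (X : ℝ) ^ q ≤ chord (y + i * α)) →
      exp (-(ε * X)) ≤ ∏ i ∈ J, chord (y + i * α) := by
  filter_upwards [eventually_le_prod_chord hα q (half_pos hε)] with X hX I J hI hJ hcard y hsep
  have hblock : ∀ J, IsNearBlock X J → (∀ i ∈ J, 1 / (X : ℝ) ^ q ≤ chord (y + i * α)) →
      exp (-(ε / 2 * X)) ≤ ∏ i ∈ J, chord (y + i * α) := by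
    intro J hJ hsep
    obtain ⟨a, n, J', hn, hJ', hcard', rfl⟩ := hJ.exists_eq_map
    simp_rw [Finset.forall_mem_map, chord_add_mul_addLeft] at hsep
    simp_rw [Finset.prod_map, chord_add_mul_addLeft]
    exact hX n hn (y + a * α) J' hJ' hcard' hsep
  obtain ⟨J₁, J₂, hJ₁, hJ₂, hdisj, rfl⟩ := hI.exists_isNearBlock hJ hcard
  have h₁ := hblock J₁ hJ₁ fun i hi => hsep i (Finset.mem_union_left _ hi)
  have h₂ := hblock J₂ hJ₂ fun i hi => hsep i (Finset.mem_union_right _ hi)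
  calc exp (-(ε * X)) = exp (-(ε / 2 * X)) * exp (-(ε / 2 * X)) := by rw [← exp_add]; ring_nf
    _ ≤ (∏ i ∈ J₁, chord (y + i * α)) * ∏ i ∈ J₂, chord (y + i * α) :=
        mul_le_mul h₁ h₂ (exp_pos _).le (Finset.prod_nonneg fun i _ => chord_nonneg _)
    _ = ∏ i ∈ J₁ ∪ J₂, chord (y + i * α) := (Finset.prod_union hdisj).symm

theorem eventually_two_div_pow_le_chord (hα : ChordDiophantine α c p) :
    ∀ᶠ X : ℕ in atTop, ∀ i : ℤ, i ≠ 0 → |i| ≤ 2 * X → 2 / (X : ℝ) ^ (p + 1) ≤ chord (i * α) := by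
  have hc := hα.pos
  filter_upwards [tendsto_natCast_atTop_atTop (R := ℝ) |>.eventually_ge_atTop (2 ^ (p + 1) / c)]
    with X hX i hi hiX
  have hX₀ : 0 < (X : ℝ) := lt_of_lt_of_le (by positivity) hX
  have hi₀ : 0 < |(i : ℝ)| := by positivity
  have hiX' : |(i : ℝ)| ≤ 2 * X := by exact_mod_cast hiX
  refine le_trans ?_ (hα.le_chord i hi)
  rw [div_le_iff₀ hc] at hX
  rw [div_le_div_iff₀ (by positivity) (by positivity)]
  calc 2 * |(i : ℝ)| ^ p ≤ 2 * (2 * X) ^ p := by gcongr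
    _ = 2 ^ (p + 1) * X ^ p := by rw [mul_pow, pow_succ]; ring
    _ ≤ X * c * X ^ p := by gcongr
    _ = c * X ^ (p + 1) := by rw [pow_succ]; ring

theorem card_sdiff_erase_le_two (I : Finset ℤ) (i : ℤ) : (I \ I.erase i).card ≤ 2 :=
  (Finset.card_le_card (by grind : I \ I.erase i ⊆ {i})).trans (by simp)

theorem card_sdiff_erase_erase_le_two (I : Finset ℤ) (i j : ℤ) :
    (I \ (I.erase i).erase j).card ≤ 2 :=
  (Finset.card_le_card (by grind : I \ (I.erase i).erase j ⊆ {i, j})).trans Finset.card_le_two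

theorem eventually_le_prod_erase_chord_sub (hα : ChordDiophantine α c p) {ε : ℝ} (hε : 0 < ε) :
    ∀ᶠ X : ℕ in atTop, ∀ I : Finset ℤ, IsTwoBlock X I → ∀ j ∈ I,
      exp (-(ε * X)) ≤ ∏ i ∈ I.erase j, chord (-(j * α) + i * α) := by
  filter_upwards [eventually_le_prod_chord_of_isTwoBlock hα (p + 1) hε,
    eventually_two_div_pow_le_chord hα] with X hprod hdio I hI j hj
  refine hprod I (I.erase j) hI (Finset.erase_subset _ _) (card_sdiff_erase_le_two I j) _
    fun i hi => ?_
  have hiX := hI.1 i (Finset.mem_of_mem_erase hi)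
  have hjX := hI.1 j hj
  have h := hdio (i - j) (sub_ne_zero.2 (Finset.ne_of_mem_erase hi)) (by rw [abs_le] at *; omega)
  rw [show -(j * α) + i * α = ((i - j : ℤ) : ℝ) * α by push_cast; ring]
  exact le_trans (by gcongr; norm_num) h

/-- At most one factor can be smaller than `1 / X ^ (p + 1)`, and that one is at least `β`. -/
theorem eventually_mul_exp_le_prod_erase_chord (hα : ChordDiophantine α c p) {ε : ℝ}
    (hε : 0 < ε) :
    ∀ᶠ X : ℕ in atTop, ∀ I : Finset ℤ, IsTwoBlock X I → ∀ (y β : ℝ) (j : ℤ), β ≤ 1 →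
      (∀ i ∈ I.erase j, β ≤ chord (y + i * α)) →
      β * exp (-(ε * X)) ≤ ∏ i ∈ I.erase j, chord (y + i * α) := by
  filter_upwards [eventually_le_prod_chord_of_isTwoBlock hα (p + 1) hε,
    eventually_two_div_pow_le_chord hα] with X hprod hdio I hI y β j hβ hsep
  by_cases hlarge : ∀ i ∈ I.erase j, 1 / (X : ℝ) ^ (p + 1) ≤ chord (y + i * α)
  · exact (mul_le_of_le_one_left (exp_pos _).le hβ).trans <|
      hprod I _ hI (Finset.erase_subset _ _) (card_sdiff_erase_le_two I j) y hlarge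
  push Not at hlarge
  obtain ⟨i₀, hi₀, hsmall⟩ := hlarge
  rw [← Finset.mul_prod_erase _ _ hi₀]
  refine mul_le_mul (hsep i₀ hi₀) (hprod I _ hI
    ((Finset.erase_subset _ _).trans (Finset.erase_subset _ _))
    (card_sdiff_erase_erase_le_two I j i₀) y fun i hi => ?_) (exp_pos _).le (chord_nonneg _)
  have hiX := hI.1 i (Finset.mem_of_mem_erase (Finset.mem_of_mem_erase hi))
  have hi₀X := hI.1 i₀ (Finset.mem_of_mem_erase hi₀)
  have hdiff := hdio (i - i₀) (sub_ne_zero.2 (Finset.ne_of_mem_erase hi))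
    (by rw [abs_le] at *; omega)
  have hsub := chord_sub_le (y + i * α) (y + i₀ * α)
  rw [show y + i * α - (y + i₀ * α) = ((i - i₀ : ℤ) : ℝ) * α by push_cast; ring] at hsub
  linarith [show 2 / (X : ℝ) ^ (p + 1) = 1 / (X : ℝ) ^ (p + 1) + 1 / (X : ℝ) ^ (p + 1) by ring]

theorem prod_abs_cos_sub_cos (J : Finset ℤ) (y φ : ℝ) :
    ∏ i ∈ J, |cos (2 * π * y) - cos (2 * π * (φ + i * α))|
      = (∏ i ∈ J, chord (φ - y + i * α)) * (∏ i ∈ J, chord (y + φ + i * α)) / 2 ^ J.card := by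
  rw [← Finset.prod_mul_distrib, ← Finset.prod_const, ← Finset.prod_div_distrib]
  refine Finset.prod_congr rfl fun i _ => ?_
  rw [abs_cos_sub_cos_eq_chord_mul_chord, ← chord_neg]
  ring_nf

theorem eventually_prod_erase_abs_cos_sub_cos_le (hα : ChordDiophantine α c p) {ε : ℝ}
    (hε : 0 < ε) :
    ∀ᶠ X : ℕ in atTop, ∀ I : Finset ℤ, IsTwoBlock X I → ∀ (y φ : ℝ) (j : ℤ),
      ∏ i ∈ I.erase j, |cos (2 * π * y) - cos (2 * π * (φ + i * α))|
        ≤ exp (ε * X) / 2 ^ (I.erase j).card := by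
  filter_upwards [eventually_prod_chord_le_of_isTwoBlock hα (half_pos hε)] with X hX I hI y φ j
  have hprod (z : ℝ) : ∏ i ∈ I.erase j, chord (z + i * α) ≤ exp (ε / 2 * X) :=
    hX I _ hI (Finset.erase_subset _ _) (card_sdiff_erase_le_two I j) z
  rw [prod_abs_cos_sub_cos, show ε * X = ε / 2 * X + ε / 2 * X by ring, exp_add]
  gcongr
  · exact Finset.prod_nonneg fun i _ => chord_nonneg _
  · exact hprod _
  · exact hprod _

theorem eventually_le_prod_erase_abs_cos_sub_cos (hα : ChordDiophantine α c p) {ε : ℝ}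
    (hε : 0 < ε) :
    ∀ᶠ X : ℕ in atTop, ∀ I : Finset ℤ, IsTwoBlock X I → ∀ φ β : ℝ, β ≤ 1 →
      (∀ i ∈ I, ∀ j ∈ I, i ≠ j → β ≤ chord (2 * φ + (i + j) * α)) → ∀ j ∈ I,
      β * exp (-(ε * X)) / 2 ^ (I.erase j).card
        ≤ ∏ i ∈ I.erase j, |cos (2 * π * (φ + j * α)) - cos (2 * π * (φ + i * α))| := by
  filter_upwards [eventually_le_prod_erase_chord_sub hα (half_pos hε),
    eventually_mul_exp_le_prod_erase_chord hα (half_pos hε)] with X hdiff hsum I hI φ β hβ hsep j hj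
  have h₁ := hdiff I hI j hj
  have h₂ := hsum I hI (φ + j * α + φ) β j hβ fun i hi => by
    rw [show φ + j * α + φ + i * α = 2 * φ + (i + j) * α by ring]
    exact hsep i (Finset.mem_of_mem_erase hi) j hj (Finset.ne_of_mem_erase hi)
  rw [prod_abs_cos_sub_cos, show -(ε * X) = -(ε / 2 * X) + -(ε / 2 * X) by ring, exp_add,
    show φ - (φ + j * α) = -(j * α) by ring, mul_left_comm]
  exact div_le_div_of_nonneg_right (mul_le_mul_of_nonneg h₁ h₂ (exp_pos _).le
    (Finset.prod_nonneg fun i _ => chord_nonneg _)) (by positivity)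

theorem exists_mem_abs_eval_le {ι : Type*} [DecidableEq ι] {Q : Polynomial ℝ} {s : Finset ι}
    (hQ : Q.natDegree < s.card) {v : ι → ℝ} (hv : Set.InjOn v s) {ξ R : ℝ}
    (hR : ∀ j ∈ s, ∏ i ∈ s.erase j, |ξ - v i| ≤ R * ∏ i ∈ s.erase j, |v j - v i|) :
    ∃ j ∈ s, |Q.eval ξ| ≤ |Q.eval (v j)| * (s.card * R) := by
  have hdeg : Q.degree < s.card := Polynomial.degree_le_natDegree.trans_lt (by exact_mod_cast hQ)
  obtain ⟨j, hj, hmax⟩ := Finset.exists_max_image s (fun j => |Q.eval (v j)|)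
    (Finset.card_pos.1 (by omega))
  have hbasis : ∀ i ∈ s, |(Lagrange.basis s v i).eval ξ| ≤ R := by
    intro i hi
    have hpos : 0 < ∏ l ∈ s.erase i, |v i - v l| := Finset.prod_pos fun l hl =>
      abs_pos.2 <| sub_ne_zero.2 fun h =>
        Finset.ne_of_mem_erase hl (hv hi (Finset.mem_of_mem_erase hl) h).symm
    simp only [Lagrange.basis, Lagrange.basisDivisor, Polynomial.eval_prod, Polynomial.eval_mul,
      Polynomial.eval_C, Polynomial.eval_sub, Polynomial.eval_X, Finset.abs_prod, abs_mul, abs_inv,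
      Finset.prod_mul_distrib, Finset.prod_inv_distrib]
    rw [inv_mul_le_iff₀ hpos, mul_comm]
    exact hR i hi
  refine ⟨j, hj, ?_⟩
  calc |Q.eval ξ| = |∑ i ∈ s, Q.eval (v i) * (Lagrange.basis s v i).eval ξ| := by
        conv_lhs => rw [Lagrange.eq_interpolate hv hdeg]
        simp [Lagrange.interpolate_apply, Polynomial.eval_finsetSum]
    _ ≤ ∑ i ∈ s, |Q.eval (v i) * (Lagrange.basis s v i).eval ξ| := Finset.abs_sum_le_sum_abs _ _
    _ ≤ ∑ _i ∈ s, |Q.eval (v j)| * R := Finset.sum_le_sum fun i hi => by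
        rw [abs_mul]
        exact mul_le_mul (hmax i hi) (hbasis i hi) (abs_nonneg _) (abs_nonneg _)
    _ = |Q.eval (v j)| * (s.card * R) := by
        rw [Finset.sum_const, nsmul_eq_mul]
        ring

/-- The interpolation property at scale `X`: up to a factor `exp (ε * X) / β`, a continuant of
length `k` of the almost Mathieu cocycle is dominated by its values at any `k + 1` sites forming two
blocks whose pairs of distinct sites are `β`-far from resonance. -/
def ContinuantInterpolation (α : ℝ) (X : ℕ) (ε : ℝ) : Prop :=
  ∀ (lam E θ x₀ β : ℝ) (k : ℕ) (I : Finset ℤ), IsTwoBlock X I → I.card = k + 1 → 0 < β → β ≤ 1 →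
    (∀ i ∈ I, ∀ j ∈ I, i ≠ j → β ≤ chord (2 * θ + ((i + j + k - 1 : ℤ) : ℝ) * α)) →
    ∃ j ∈ I, |continuant (reducedPotential lam E) α k x₀|
      ≤ |continuant (reducedPotential lam E) α k (θ + j * α)| * (exp (ε * X) / β)

theorem eventually_mul_le_exp (a : ℝ) {ε : ℝ} (hε : 0 < ε) :
    ∀ᶠ X : ℕ in atTop, a * X ≤ exp (ε * X) := by
  have ho := ((isLittleO_pow_exp_pos_mul_atTop 1 hε).const_mul_left a).comp_tendsto
    (tendsto_natCast_atTop_atTop (R := ℝ))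
  filter_upwards [ho.bound one_pos] with X hX
  simp only [Function.comp_apply, pow_one, norm_eq_abs, abs_exp, one_mul] at hX
  exact (le_abs_self _).trans hX

theorem eventually_continuantInterpolation (hα : ChordDiophantine α c p) {ε : ℝ} (hε : 0 < ε) :
    ∀ᶠ X : ℕ in atTop, ContinuantInterpolation α X ε := by
  have hε' : 0 < ε / 3 := by positivity
  filter_upwards [eventually_prod_erase_abs_cos_sub_cos_le hα hε',
    eventually_le_prod_erase_abs_cos_sub_cos hα hε', eventually_mul_le_exp 2 hε']
    with X hupper hlower hcardX lam E θ x₀ β k I hI hcard hβ₀ hβ₁ hsep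
  obtain ⟨Q, hdeg, hQ⟩ := exists_polynomial_cos_eq_continuant lam E α k
  have hcont (y : ℝ) : Q.eval (cos (2 * π * (y + (k - 1) * α / 2)))
      = continuant (reducedPotential lam E) α k y := by rw [← hQ, add_sub_cancel_right]
  set φ : ℝ := θ + (k - 1) * α / 2 with hφ
  have hlow := hlower I hI φ β hβ₁ fun i hi j hj hij => by
    convert hsep i hi j hj hij using 2
    rw [hφ]
    push_cast
    ring
  have hinj : Set.InjOn (fun i : ℤ => cos (2 * π * (φ + i * α))) I := fun i hi j hj hij => by
    by_contra hne
    have hzero := hlow j hj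
    rw [Finset.prod_eq_zero (Finset.mem_erase.2 ⟨hne, hi⟩) (by simpa using sub_eq_zero.2 hij.symm)]
      at hzero
    exact absurd hzero (not_le.2 (by positivity))
  obtain ⟨j, hj, hbound⟩ := exists_mem_abs_eval_le (Q := Q) (s := I)
    (R := exp (ε / 3 * X) * exp (ε / 3 * X) / β) (by omega) hinj
    (ξ := cos (2 * π * (x₀ + (k - 1) * α / 2))) fun j hj => by
      refine (hupper I hI _ φ j).trans (le_trans (le_of_eq ?_)
        (mul_le_mul_of_nonneg_left (hlow j hj) (by positivity)))
      rw [exp_neg]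
      field_simp
  have hIX : (I.card : ℝ) ≤ exp (ε / 3 * X) :=
    le_trans (by exact_mod_cast hI.card_le) hcardX
  refine ⟨j, hj, ?_⟩
  calc |continuant (reducedPotential lam E) α k x₀|
      = |Q.eval (cos (2 * π * (x₀ + (k - 1) * α / 2)))| := by rw [hcont]
    _ ≤ |Q.eval (cos (2 * π * (φ + j * α)))|
          * (I.card * (exp (ε / 3 * X) * exp (ε / 3 * X) / β)) := hbound
    _ ≤ |Q.eval (cos (2 * π * (φ + j * α)))|
          * (exp (ε / 3 * X) * (exp (ε / 3 * X) * exp (ε / 3 * X) / β)) := by gcongr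
    _ = |continuant (reducedPotential lam E) α k (θ + j * α)| * (exp (ε * X) / β) := by
        rw [← hcont, hφ, show ε * X = ε / 3 * X + (ε / 3 * X + ε / 3 * X) by ring, exp_add, exp_add]
        ring_nf

end Interpolation

/-! ## Exponential decay away from the peak and from its mirror image -/

section Decay

variable {V : ℝ → ℝ} {α θ Γ ν c : ℝ} {u : ℤ → ℝ}

theorem IsSolution.abs_le_of_le_continuant (hu : IsSolution V α θ u)
    (hupper : HasGrowthBound V α Γ c) {a : ℤ} {k : ℕ} {b : ℝ}
    (hlower : exp (Γ * k - b) ≤ |continuant V α k (θ + a * α)|) {x : ℤ} (hax : a ≤ x)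
    (hxa : x < a + k) :
    |u x| ≤ exp (b + c - Γ * (x - (a - 1))) * |u (a - 1)|
      + exp (b + c - Γ * (a + k - x)) * |u (a + k)| := by
  obtain ⟨j, rfl⟩ := Int.le.dest hax
  obtain ⟨r, rfl⟩ : ∃ r : ℕ, k = j + 1 + r := ⟨k - (j + 1), by omega⟩
  have hgreen := hu.green_identity a j r
  rw [show a + (j : ℤ) + r + 1 = a + ((j + 1 + r : ℕ) : ℤ) by push_cast; ring] at hgreen
  have hmul : exp (Γ * (j + 1 + r : ℕ) - b) * |u (a + j)| ≤ exp (Γ * r + c) * |u (a - 1)|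
      + exp (Γ * j + c) * |u (a + ((j + 1 + r : ℕ) : ℤ))| := by
    refine (mul_le_mul_of_nonneg_right hlower (abs_nonneg _)).trans ?_
    rw [← abs_mul, hgreen]
    refine (abs_add_le _ _).trans ?_
    rw [abs_mul, abs_mul]
    gcongr
    exacts [hupper _ _, hupper _ _]
  have hdiv : |u (a + j)| ≤ exp (-(Γ * (j + 1 + r : ℕ) - b)) * (exp (Γ * r + c) * |u (a - 1)|
      + exp (Γ * j + c) * |u (a + ((j + 1 + r : ℕ) : ℤ))|) := by
    rwa [exp_neg, ← div_eq_inv_mul, le_div_iff₀' (exp_pos _)]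
  refine hdiv.trans_eq ?_
  rw [mul_add, ← mul_assoc, ← mul_assoc, ← exp_add, ← exp_add]
  push_cast
  ring_nf

/-- `u` is nonzero and `|u|` attains its maximum at `m`. -/
structure IsPeak (u : ℤ → ℝ) (m : ℤ) : Prop where
  abs_le : ∀ y, |u y| ≤ |u m|
  ne_zero : u m ≠ 0

theorem IsPeak.abs_pos {m : ℤ} (hm : IsPeak u m) : 0 < |u m| := _root_.abs_pos.2 hm.ne_zero

/-- The window `[j, j + k)` contains `y` at distance at least `k / 10` from the two sites adjacent
to it. -/
def IsDeepInWindow (k : ℕ) (j y : ℤ) : Prop :=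
  (k : ℤ) ≤ 10 * (y - (j - 1)) ∧ (k : ℤ) ≤ 10 * (j + k - y)

theorem IsSolution.abs_le_of_isDeepInWindow (hu : IsSolution V α θ u) (hν : 0 ≤ ν) {k : ℕ}
    (hk : 0 < k) (hupper : HasGrowthBound V α Γ (ν * k)) {j y : ℤ}
    (hlower : exp (Γ * k - 3 * ν * k) ≤ |continuant V α k (θ + j * α)|)
    (hjy : IsDeepInWindow k j y) :
    |u y| ≤ exp (-((Γ - 40 * ν) * (y - (j - 1)))) * |u (j - 1)|
      + exp (-((Γ - 40 * ν) * (j + k - y))) * |u (j + k)| := by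
  obtain ⟨hleft, hright⟩ := hjy
  have hleft' : (k : ℝ) ≤ 10 * (y - (j - 1)) := by exact_mod_cast hleft
  have hright' : (k : ℝ) ≤ 10 * (j + k - y) := by exact_mod_cast hright
  refine (hu.abs_le_of_le_continuant hupper hlower (by omega) (by omega)).trans ?_
  have hνleft := mul_le_mul_of_nonneg_left hleft' hν
  have hνright := mul_le_mul_of_nonneg_left hright' hν
  gcongr <;> linarith

theorem two_mul_exp_neg_lt_one {t : ℝ} (ht : 1 ≤ t) : 2 * exp (-t) < 1 := by
  have h := add_one_lt_exp (show t ≠ 0 by linarith)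
  rw [exp_neg, ← div_eq_mul_inv, div_lt_one (exp_pos _)]
  linarith

theorem IsPeak.not_isDeepInWindow {m : ℤ} (hm : IsPeak u m) (hu : IsSolution V α θ u)
    (hν : 0 ≤ ν) {k : ℕ} (hk : 0 < k) (hupper : HasGrowthBound V α Γ (ν * k)) {j : ℤ}
    (hlower : exp (Γ * k - 3 * ν * k) ≤ |continuant V α k (θ + j * α)|)
    (hrate : 1 ≤ (Γ - 40 * ν) * (k / 10)) : ¬ IsDeepInWindow k j m := fun hjm => by
  have : (0 : ℝ) < k := by exact_mod_cast hk
  have hG : 0 < Γ - 40 * ν :=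
    (pos_iff_pos_of_mul_pos (zero_lt_one.trans_le hrate)).2 (by positivity)
  have term_le (t : ℝ) (ht : k ≤ 10 * t) (z : ℤ) :
      exp (-((Γ - 40 * ν) * t)) * |u z| ≤ exp (-((Γ - 40 * ν) * (k / 10))) * |u m| := by
    have := hm.abs_le z
    gcongr
    linarith
  have hbound := hu.abs_le_of_isDeepInWindow hν hk hupper hlower hjm
  have hleft := term_le (m - (j - 1)) (by exact_mod_cast hjm.1) (j - 1)
  have hright := term_le (j + k - m) (by exact_mod_cast hjm.2) (j + k)
  have hhalf := mul_lt_mul_of_pos_right (two_mul_exp_neg_lt_one hrate) hm.abs_pos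
  linarith

/-- A maximum principle: at a maximizer of `|u| * exp (G * d)`, a step away from `d ≤ T` would
contract by the factor `2 * exp (-(ν * h))`. -/
theorem abs_le_mul_exp_of_step {d : ℤ → ℝ} {Z : Finset ℤ} {B T G ν h : ℝ} (hG : 0 ≤ G)
    (hν : 0 ≤ ν) (hB : 0 ≤ B) (hd : ∀ x y : ℤ, d x - d y ≤ |(x : ℝ) - y|)
    (hνh : 1 ≤ ν * h) (huB : ∀ x ∈ Z, |u x| ≤ B)
    (hstep : ∀ x ∈ Z, T < d x → ∃ y ∈ Z, ∃ z ∈ Z, h ≤ |(x : ℝ) - y| ∧ h ≤ |(x : ℝ) - z| ∧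
      |u x| ≤ exp (-((G + ν) * |(x : ℝ) - y|)) * |u y|
        + exp (-((G + ν) * |(x : ℝ) - z|)) * |u z|) :
    ∀ x ∈ Z, |u x| ≤ B * exp (-(G * (d x - T))) := by
  intro x hx
  obtain ⟨w, hw, hmax⟩ := Z.exists_max_image (fun x => |u x| * exp (G * d x)) ⟨x, hx⟩
  have term_le : ∀ z ∈ Z, h ≤ |(w : ℝ) - z| →
      exp (-((G + ν) * |(w : ℝ) - z|)) * |u z| * exp (G * d w)
        ≤ exp (-(ν * h)) * (|u w| * exp (G * d w)) := by
    intro z hz hl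
    have hexp : exp (-((G + ν) * |(w : ℝ) - z|)) * exp (G * d w)
        ≤ exp (-(ν * h)) * exp (G * d z) := by
      rw [← exp_add, ← exp_add]
      have := mul_le_mul_of_nonneg_left (hd w z) hG
      have := mul_le_mul_of_nonneg_left hl hν
      exact exp_le_exp.2 (by linarith)
    calc _ = exp (-((G + ν) * |(w : ℝ) - z|)) * exp (G * d w) * |u z| := by ring
      _ ≤ exp (-(ν * h)) * exp (G * d z) * |u z| := by gcongr
      _ = exp (-(ν * h)) * (|u z| * exp (G * d z)) := by ring
      _ ≤ _ := mul_le_mul_of_nonneg_left (hmax z hz) (exp_pos _).le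
  have max_le : |u w| * exp (G * d w) ≤ B * exp (G * T) := by
    rcases le_or_gt (d w) T with hT | hT
    · gcongr
      exact huB w hw
    · obtain ⟨y, hy, z, hz, hly, hlz, hs⟩ := hstep w hw hT
      have hsum := mul_le_mul_of_nonneg_right hs (exp_pos (G * d w)).le
      have hcontr : |u w| * exp (G * d w) ≤ 2 * exp (-(ν * h)) * (|u w| * exp (G * d w)) := by
        linarith [term_le y hy hly, term_le z hz hlz]
      have hnonpos : |u w| * exp (G * d w) ≤ 0 := by
        nlinarith [two_mul_exp_neg_lt_one hνh]
      exact hnonpos.trans (by positivity)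
  calc |u x| = |u x| * exp (G * d x) * exp (-(G * d x)) := by
        rw [mul_assoc, ← exp_add, add_neg_cancel, exp_zero, mul_one]
    _ ≤ B * exp (G * T) * exp (-(G * d x)) :=
        mul_le_mul_of_nonneg_right ((hmax x hx).trans max_le) (exp_pos _).le
    _ = B * exp (-(G * (d x - T))) := by rw [mul_assoc, ← exp_add]; ring_nf

theorem exists_block_add_add_ne {k : ℕ} (hk : 100 ≤ k) (y K : ℤ) :
    ∃ a : ℤ, (∀ j, a ≤ j → j < a + (k / 3 : ℕ) → IsDeepInWindow k j y) ∧
      ∀ i j : ℤ, a ≤ i → i < a + (k / 3 : ℕ) → a ≤ j → j < a + (k / 3 : ℕ) → i ≠ j →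
        i + j + k - 1 ≠ K := by
  simp only [IsDeepInWindow]
  by_cases h : K ≤ 2 * y
  · refine ⟨y - (k / 10 : ℕ) - (k / 3 : ℕ), ?_, ?_⟩ <;> omega
  · refine ⟨y - k + 2 + (k / 10 : ℕ), ?_, ?_⟩ <;> omega

/-- The block that could contain two sites with `i + j + k - 1 = K` is taken short and on
one side of the dangerous value; as `x + m` is far from `K`, only one of the blocks is concerned. -/
theorem exists_two_blocks_add_add_ne {k : ℕ} (hk : 100 ≤ k) {x m K : ℤ} (hxm : (k : ℤ) ≤ |x - m|)
    (hK : (k : ℤ) ≤ |x + m - K|) :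
    ∃ (a₁ a₂ : ℤ) (n₁ n₂ : ℕ), n₁ + n₂ = k + 1 ∧
      (∀ j ∈ Finset.Ico a₁ (a₁ + n₁), IsDeepInWindow k j x) ∧
      (∀ j ∈ Finset.Ico a₂ (a₂ + n₂), IsDeepInWindow k j m) ∧
      ∀ i ∈ Finset.Ico a₁ (a₁ + n₁) ∪ Finset.Ico a₂ (a₂ + n₂),
        ∀ j ∈ Finset.Ico a₁ (a₁ + n₁) ∪ Finset.Ico a₂ (a₂ + n₂), i ≠ j → i + j + k - 1 ≠ K := by
  rw [le_abs] at hxm hK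
  by_cases hx : (k : ℤ) ≤ |2 * x - K|
  · obtain ⟨a, hdeep, hne⟩ := exists_block_add_add_ne hk m K
    rw [le_abs] at hx
    refine ⟨x - k + 2 + (k / 10 : ℕ), a, k + 1 - k / 3, k / 3, by omega, ?_, ?_, ?_⟩
    all_goals simp only [IsDeepInWindow, Finset.mem_union, Finset.mem_Ico] at hdeep ⊢
    · omega
    · exact fun j hj => hdeep j hj.1 hj.2
    · rintro i (hi | hi) j (hj | hj) hij
      exacts [by omega, by have := hdeep j hj.1 hj.2; omega, by have := hdeep i hi.1 hi.2; omega,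
        hne i j hi.1 hi.2 hj.1 hj.2 hij]
  · obtain ⟨a, hdeep, hne⟩ := exists_block_add_add_ne hk x K
    rw [not_le, abs_lt] at hx
    refine ⟨a, m - k + 2 + (k / 10 : ℕ), k / 3, k + 1 - k / 3, by omega, ?_, ?_, ?_⟩
    all_goals simp only [IsDeepInWindow, Finset.mem_union, Finset.mem_Ico] at hdeep ⊢
    · exact fun j hj => hdeep j hj.1 hj.2
    · omega
    · rintro i (hi | hi) j (hj | hj) hij
      exacts [hne i j hi.1 hi.2 hj.1 hj.2 hij, by have := hdeep i hi.1 hi.2; omega,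
        by have := hdeep j hj.1 hj.2; omega, by omega]

end Decay

section DecaysFrom

variable {lam E α θ Γ η ε ε₁ ν c : ℝ} {u : ℤ → ℝ} {X k p : ℕ} {m K : ℤ}

theorem ContinuantInterpolation.exists_exp_le (hX : ContinuantInterpolation α X ε) {I : Finset ℤ}
    (hI : IsTwoBlock X I) (hcard : I.card = k + 1) {a b x₀ : ℝ} (hb : 0 ≤ b)
    (hsep : ∀ i ∈ I, ∀ j ∈ I, i ≠ j →
      exp (-b) ≤ chord (2 * θ + ((i + j + k - 1 : ℤ) : ℝ) * α))
    (ha : exp a ≤ |continuant (reducedPotential lam E) α k x₀|) :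
    ∃ j ∈ I, exp (a - b - ε * X) ≤ |continuant (reducedPotential lam E) α k (θ + j * α)| := by
  obtain ⟨j, hj, hbound⟩ :=
    hX lam E θ x₀ _ k I hI hcard (exp_pos (-b)) (exp_le_one_iff.2 (by linarith)) hsep
  refine ⟨j, hj, ?_⟩
  have h := ha.trans hbound
  rw [← exp_sub, ← div_le_iff₀ (exp_pos _), ← exp_sub] at h
  exact le_of_eq_of_le (by ring_nf) h

/-- Up to size `30 * X`, the integer `K` is the only resonance `2 * θ + N * α ≈ 0`. -/
def OnlyResonance (α θ ε : ℝ) (X : ℕ) (K : ℤ) : Prop :=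
  ∀ N : ℤ, |N| ≤ 30 * X → N ≠ K → exp (-(ε * X)) ≤ chord (2 * θ + N * α)

/-- The distance of `x` to the peak `m`, to its mirror image `K - m` and to the boundary of
`[-12 * X, 12 * X]`, whichever is smallest. -/
def clearance (m K : ℤ) (X : ℕ) (x : ℤ) : ℤ :=
  min (min |x - m| |x + m - K|) (12 * X - |x|)

theorem clearance_sub_clearance_le (m K : ℤ) (X : ℕ) (x y : ℤ) :
    clearance m K X x - clearance m K X y ≤ |x - y| := by
  simp only [clearance, Int.abs_eq_natAbs]
  omega

/-- On `[-12 * X, 12 * X]`, `u` decays exponentially with rate `Γ` away from the peak `m`, from its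
mirror image `K - m` and from the boundary. -/
def DecaysFrom (u : ℤ → ℝ) (m K : ℤ) (Γ η : ℝ) (X : ℕ) : Prop :=
  ∀ x : ℤ, |x| ≤ 12 * X → |u x| ≤ |u m| * exp (-(Γ * clearance m K X x) + η * X)

theorem DecaysFrom.abs_le (hu : DecaysFrom u m K Γ η X) (hΓ : 0 ≤ Γ) {x : ℤ} (hx : |x| ≤ 12 * X)
    {D : ℝ} (hD : D ≤ clearance m K X x) : |u x| ≤ |u m| * exp (-(Γ * D) + η * X) :=
  (hu x hx).trans (by gcongr)

theorem IsGrowthScale.exists_isDeepInWindow_or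
    (hk : IsGrowthScale (reducedPotential lam E) α Γ ν k) (hk100 : 100 ≤ k) (hkX : k ≤ X)
    (hinterp : ContinuantInterpolation α (30 * X) ε) (hres : OnlyResonance α θ ε₁ X K)
    (hε₁ : 0 ≤ ε₁) (hε : ε₁ * X + ε * (30 * X : ℕ) ≤ 2 * (ν * k)) (hmX : |m| ≤ X) {x : ℤ}
    (hx : |x| ≤ 12 * X) (hxm : (k : ℤ) ≤ |x - m|) (hxK : (k : ℤ) ≤ |x + m - K|) :
    ∃ j, (IsDeepInWindow k j x ∨ IsDeepInWindow k j m) ∧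
      exp (Γ * k - 3 * ν * k) ≤ |continuant (reducedPotential lam E) α k (θ + j * α)| := by
  obtain ⟨x₀, hx₀⟩ := hk.lower
  obtain ⟨a₁, a₂, n₁, n₂, hn, hdeepx, hdeepm, hne⟩ := exists_two_blocks_add_add_ne hk100 hxm hxK
  have hdisj : Disjoint (Finset.Ico a₁ (a₁ + n₁)) (Finset.Ico a₂ (a₂ + n₂)) := by
    rw [Finset.disjoint_left]
    intro j hjx hjm
    have := hdeepx j hjx
    have := hdeepm j hjm
    simp only [IsDeepInWindow, le_abs] at *
    omega
  set I := Finset.Ico a₁ (a₁ + n₁) ∪ Finset.Ico a₂ (a₂ + n₂) with hI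
  have hdeep : ∀ j ∈ I, IsDeepInWindow k j x ∨ IsDeepInWindow k j m := fun j hj =>
    (Finset.mem_union.1 hj).imp (hdeepx j) (hdeepm j)
  have hcard : I.card = k + 1 := by
    rw [hI, Finset.card_union_of_disjoint hdisj]
    simpa using hn
  have hsize : ∀ j ∈ I, |j| ≤ 13 * X := fun j hj => by
    have := hdeep j hj
    simp only [IsDeepInWindow, abs_le] at *
    omega
  have htwo : IsTwoBlock (30 * X) I := by
    refine ⟨fun j hj => (hsize j hj).trans (by push_cast; omega), a₁, a₂, n₁, n₂, ?_, ?_, hdisj, hI⟩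
    all_goals omega
  have hsep : ∀ i ∈ I, ∀ j ∈ I, i ≠ j →
      exp (-(ε₁ * X)) ≤ chord (2 * θ + ((i + j + k - 1 : ℤ) : ℝ) * α) := fun i hi j hj hij => by
    refine hres _ ?_ (hne i hi j hj hij)
    have hi' := hsize i hi
    have hj' := hsize j hj
    rw [abs_le] at *
    omega
  obtain ⟨j, hj, hjlow⟩ := hinterp.exists_exp_le htwo hcard (by positivity) hsep hx₀
  exact ⟨j, hdeep j hj, (exp_le_exp.2 (by linarith)).trans hjlow⟩

/-- At a site far from the peak and from its mirror image, the interpolation property yields a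
window with a large continuant, and it cannot be a window around the peak. -/
theorem IsGrowthScale.abs_le_mul_exp_clearance
    (hk : IsGrowthScale (reducedPotential lam E) α Γ ν k) (hk100 : 100 ≤ k) (hkX : k ≤ X)
    (hν : 0 ≤ ν) (hνΓ : 41 * ν ≤ Γ) (hνk : 10 ≤ ν * k)
    (hinterp : ContinuantInterpolation α (30 * X) ε) (hres : OnlyResonance α θ ε₁ X K)
    (hε₁ : 0 ≤ ε₁) (hε : ε₁ * X + ε * (30 * X : ℕ) ≤ 2 * (ν * k)) (hmX : |m| ≤ X)
    (hu : IsSolution (reducedPotential lam E) α θ u) (hm : IsPeak u m) {x : ℤ}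
    (hx : |x| ≤ 12 * X) :
    |u x| ≤ |u m| * exp (-((Γ - 41 * ν) * (clearance m K X x - k))) := by
  have hrate : 1 ≤ (Γ - 40 * ν) * (k / 10) := by
    calc (1 : ℝ) ≤ ν * (k / 10) := by linarith
      _ ≤ (Γ - 40 * ν) * (k / 10) := by gcongr; linarith
  refine abs_le_mul_exp_of_step (u := u) (d := fun x => clearance m K X x) (h := k / 10) (ν := ν)
    (Z := Finset.Icc (-(12 * X : ℤ)) (12 * X)) (by linarith) hν (abs_nonneg _)
    (fun x y => by exact_mod_cast clearance_sub_clearance_le m K X x y) (by linarith)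
    (fun x _ => hm.abs_le x) (fun x hx hkx => ?_) x (Finset.mem_Icc.2 (abs_le.1 hx))
  obtain ⟨⟨hxm, hxK⟩, hxX⟩ :
      ((k : ℤ) < |x - m| ∧ (k : ℤ) < |x + m - K|) ∧ (k : ℤ) < 12 * X - |x| := by
    simpa only [clearance, Int.cast_lt, lt_min_iff, ← Int.cast_natCast (R := ℝ)] using hkx
  obtain ⟨j, hj, hlow⟩ := hk.exists_isDeepInWindow_or hk100 hkX hinterp hres hε₁ hε hmX
    (abs_le.2 (Finset.mem_Icc.1 hx)) hxm.le hxK.le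
  have hjx := hj.resolve_right (hm.not_isDeepInWindow hu hν (by omega) hk.upper hlow hrate)
  have hleft : |(x : ℝ) - (j - 1 : ℤ)| = x - (j - 1) := by
    exact_mod_cast abs_of_nonneg (show (0 : ℤ) ≤ x - (j - 1) by have := hjx.1; omega)
  have hright : |(x : ℝ) - (j + k : ℤ)| = j + k - x := by
    rw [abs_sub_comm]
    exact_mod_cast abs_of_nonneg (show (0 : ℤ) ≤ j + k - x by have := hjx.2; omega)
  have hjx₁ : (k : ℝ) ≤ 10 * (x - (j - 1)) := by exact_mod_cast hjx.1
  have hjx₂ : (k : ℝ) ≤ 10 * (j + k - x) := by exact_mod_cast hjx.2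
  obtain ⟨hxX₁, hxX₂⟩ := abs_lt.1 (lt_sub_comm.1 hxX)
  have := hjx.1
  have := hjx.2
  refine ⟨j - 1, ?_, j + k, ?_, ?_, ?_, ?_⟩
  · exact Finset.mem_Icc.2 (by omega)
  · exact Finset.mem_Icc.2 (by omega)
  · rw [hleft]; linarith
  · rw [hright]; linarith
  · rw [hleft, hright, show Γ - 41 * ν + ν = Γ - 40 * ν by ring]
    exact hu.abs_le_of_isDeepInWindow hν (by omega) hk.upper hlow hjx

theorem eventually_le_mul_natCast {a : ℝ} (ha : 0 < a) (b : ℝ) : ∀ᶠ X : ℕ in atTop, b ≤ a * X :=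
  (tendsto_natCast_atTop_atTop.const_mul_atTop ha).eventually_ge_atTop b

theorem exists_pos_le_and_mul_le {a b C : ℝ} (ha : 0 < a) (hb : 0 < b) (hC : 0 < C) :
    ∃ ν : ℝ, 0 < ν ∧ ν ≤ a ∧ C * ν ≤ b :=
  ⟨min a (b / C), by positivity, min_le_left _ _,
    by rw [← le_div_iff₀' hC]; exact min_le_right _ _⟩

theorem eventually_decaysFrom (hlam : 1 < lam) (hα : ChordDiophantine α c p) {E₀ : ℝ}
    (hE₀ : 0 ≤ E₀) (hη : 0 < η) :
    ∃ ε₁ : ℝ, 0 < ε₁ ∧ ε₁ ≤ η ∧ ∀ᶠ X : ℕ in atTop, ∀ E, |E| ≤ E₀ →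
      ∃ Γ, log lam ≤ Γ ∧ Γ ≤ log (2 * (E₀ + 2 * lam + 1)) ∧
        HasGrowthBound (reducedPotential lam E) α Γ (η * X) ∧
        ∀ (θ : ℝ) (u : ℤ → ℝ) (m K : ℤ), IsSolution (reducedPotential lam E) α θ u →
          IsPeak u m → |m| ≤ X → OnlyResonance α θ ε₁ X K → DecaysFrom u m K Γ η X := by
  have hΛ : 0 < log lam := log_pos hlam
  set A := log (2 * (E₀ + 2 * lam + 1))
  have hA : 0 ≤ A := log_nonneg (by linarith)
  obtain ⟨ν, hν, hνΛ, hνη⟩ := exists_pos_le_and_mul_le (a := min 1 (log lam / 41))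
    (by positivity) hη (show 0 < 493 + A by positivity)
  obtain ⟨hν₁, hνΛ⟩ := le_min_iff.1 hνΛ
  have hAν : 0 ≤ A * ν := by positivity
  obtain ⟨κ, hκ, hscale⟩ := exists_isGrowthScale (show 0 ≤ E₀ + 2 * lam by linarith) α hν
  refine ⟨min (ν * κ) η, by positivity, min_le_right _ _, ?_⟩
  have hX30 : Tendsto (fun X : ℕ => 30 * X) atTop atTop := tendsto_id.const_mul_atTop' (by norm_num)
  filter_upwards [hscale, hX30.eventually (eventually_continuantInterpolation hα
    (show 0 < ν * κ / 30 by positivity)), eventually_le_mul_natCast hκ 100,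
    eventually_le_mul_natCast (show 0 < ν * κ by positivity) 10] with X hscale hinterp hκX hνκX E hE
  obtain ⟨k, Γ, hΛΓ, hΓA, hk, hκk, hkν⟩ := hscale (reducedPotential lam E) (log lam)
    (fun x => (abs_reducedPotential_le (by linarith) E x).trans (by linarith)) (by linarith)
    (log_mul_le_logContinuantSup (by linarith) E α)
  have hνX : ν * X ≤ X := mul_le_of_le_one_left (Nat.cast_nonneg X) hν₁
  have hkX : k ≤ X := by exact_mod_cast hkν.trans hνX
  have hνk : ν * κ * X ≤ ν * k := by rw [mul_assoc]; gcongr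
  have hηX : (493 + A) * (ν * X) ≤ η * X := by rw [← mul_assoc]; gcongr
  have : 0 ≤ ν * X := by positivity
  have hνkX : ν * k ≤ ν * X := by gcongr
  refine ⟨Γ, hΛΓ, hΓA, hk.upper.mono (by nlinarith), fun θ u m K hu hm hmX hres x hx => ?_⟩
  refine (hk.abs_le_mul_exp_clearance (by exact_mod_cast hκX.trans hκk) hkX hν.le (by linarith)
    (by linarith) hinterp hres (by positivity) ?_ hmX hu hm hx).trans ?_
  · have := mul_le_mul_of_nonneg_right (min_le_left (ν * κ) η) (Nat.cast_nonneg (α := ℝ) X)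
    push_cast
    linarith
  · have hclear : (clearance m K X x : ℝ) ≤ 12 * X := by
      exact_mod_cast (min_le_right _ (12 * X - |x|)).trans (sub_le_self _ (abs_nonneg x))
    have hνclear := mul_le_mul_of_nonneg_left hclear hν.le
    have hΓk : (Γ - 41 * ν) * k ≤ A * (ν * X) :=
      mul_le_mul (by linarith) hkν (Nat.cast_nonneg _) hA
    gcongr
    linarith

end DecaysFrom

/-! ## The sharp estimate near the mirror image of the peak -/

section Sharp

variable {V : ℝ → ℝ} {lam E α θ Γ η ε ε₁ δ c : ℝ} {u : ℤ → ℝ} {X D k p : ℕ} {m n K : ℤ}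

theorem exists_le_two_mul_abs_continuant {r : ℕ} {b x y s t M : ℝ} (hs : |s| ≤ M) (ht : |t| ≤ M)
    (hb : b ≤ |continuant V α (r + 1) x| * |s| + |continuant V α r y| * |t|) :
    ∃ k, (k = r ∨ k = r + 1) ∧ ∃ x₀, b ≤ 2 * M * |continuant V α k x₀| := by
  have hs' := mul_le_mul_of_nonneg_left hs (abs_nonneg (continuant V α (r + 1) x))
  have ht' := mul_le_mul_of_nonneg_left ht (abs_nonneg (continuant V α r y))
  have hM : 0 ≤ M := (abs_nonneg s).trans hs
  rcases le_total |continuant V α r y| |continuant V α (r + 1) x| with h | h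
  · exact ⟨r + 1, Or.inr rfl, x, by linarith [mul_le_mul_of_nonneg_right h hM]⟩
  · exact ⟨r, Or.inl rfl, y, by linarith [mul_le_mul_of_nonneg_right h hM]⟩

theorem IsSolution.exists_abs_le_two_mul_abs_continuant (hu : IsSolution V α θ u) {r : ℕ} {M : ℝ}
    (h : (|u (m - (r + 1))| ≤ M ∧ |u (m - (r + 2))| ≤ M) ∨
      (|u (m + (r + 1))| ≤ M ∧ |u (m + (r + 2))| ≤ M)) :
    ∃ k, (k = r ∨ k = r + 1) ∧ ∃ x₀, |u m| ≤ 2 * M * |continuant V α k x₀| := by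
  rcases h with ⟨h₁, h₂⟩ | ⟨h₁, h₂⟩
  · refine exists_le_two_mul_abs_continuant (x := θ + ((m - (r + 1) : ℤ) : ℝ) * α)
      (y := θ + (((m - (r + 1) : ℤ) : ℝ) + (0 : ℕ) + 1) * α) h₁ h₂ ?_
    have hgreen := hu.green_identity (m - (r + 1)) 0 r
    rw [continuant_zero, one_mul, show m - (r + 1 : ℤ) + (0 : ℕ) + r + 1 = m by push_cast; ring,
      show m - (r + 1 : ℤ) + (0 : ℕ) = m - (r + 1) by push_cast; ring,
      show m - (r + 1 : ℤ) - 1 = m - (r + 2) by ring, show 0 + 1 + r = r + 1 by ring,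
      ← sub_eq_iff_eq_add'] at hgreen
    rw [← hgreen, ← abs_mul, ← abs_mul]
    exact abs_sub _ _
  · refine exists_le_two_mul_abs_continuant (x := θ + ((m + 1 : ℤ) : ℝ) * α)
      (y := θ + ((m + 1 : ℤ) : ℝ) * α) h₁ h₂ ?_
    have hgreen := hu.continuant_mul_apply (m + 1) r
    rw [show m + 1 + (r : ℤ) + 1 = m + (r + 2) by ring,
      show m + 1 + (r : ℤ) = m + (r + 1) by ring, show m + 1 - 1 = m by ring,
      ← sub_eq_iff_eq_add] at hgreen
    rw [← hgreen, ← abs_mul, ← abs_mul]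
    exact abs_sub _ _

theorem le_clearance_of_opposite (hn : |n| ≤ X) (hm : |m| ≤ X) (hD : |n - m| = D) (hD₁ : 1 ≤ D)
    (hK : |n + m - K| ≤ D) {t z : ℤ} (ht : 2 * D - 1 ≤ t) (ht' : t ≤ 2 * D)
    (hz : m ≤ n ∧ z = m - t ∨ n ≤ m ∧ z = m + t) :
    |z| ≤ 12 * X ∧ 2 * D - 1 ≤ clearance m K X z := by
  simp only [clearance, Int.abs_eq_natAbs] at *
  omega

theorem le_clearance_of_abs_sub_eq (hn : |n| ≤ X) (hm : |m| ≤ X) (hD : |n - m| = D) {t y z : ℤ}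
    (hy : y = n ∨ y = m) (hz : |z - y| = t) (ht : D - 2 ≤ 2 * t) (ht' : t ≤ 2 * D) :
    |z| ≤ 12 * X ∧ D - t - 2 - |n + m - K| ≤ clearance m K X z := by
  simp only [clearance, Int.abs_eq_natAbs] at *
  rcases hy with rfl | rfl <;> omega

/-- Beyond `m` on the side opposite to `n`, the decay of `u` is unobstructed up to distance
`2 * D`, which forces some continuant of size about `2 * D` to be as large as possible. -/
theorem DecaysFrom.exists_exp_le_abs_continuant (hdec : DecaysFrom u m K Γ η X)
    (hu : IsSolution V α θ u) (hum : u m ≠ 0) (hΓ : 0 ≤ Γ) (hn : |n| ≤ X) (hm : |m| ≤ X)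
    (hD : |n - m| = D) (hD₁ : 1 ≤ D) (hK : |n + m - K| ≤ D) (hηX : 1 ≤ η * X) :
    ∃ k, (k = 2 * D - 2 ∨ k = 2 * D - 1) ∧
      ∃ x₀, exp (Γ * k - 2 * (η * X)) ≤ |continuant V α k x₀| := by
  set M := |u m| * exp (-(Γ * (2 * D - 1)) + η * X)
  have abs_le_of_opposite (t z : ℤ) (ht : 2 * D - 1 ≤ t) (ht' : t ≤ 2 * D)
      (hz : m ≤ n ∧ z = m - t ∨ n ≤ m ∧ z = m + t) : |u z| ≤ M := by
    obtain ⟨hzX, hclear⟩ := le_clearance_of_opposite hn hm hD hD₁ hK ht ht' hz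
    exact hdec.abs_le hΓ hzX (by exact_mod_cast hclear)
  obtain ⟨k, hk, x₀, hx₀⟩ := hu.exists_abs_le_two_mul_abs_continuant (m := m) (r := 2 * D - 2)
    (M := M) <| by
      rw [show ((2 * D - 2 : ℕ) : ℤ) = 2 * D - 2 by omega]
      exact (le_total m n).imp
        (fun h => ⟨abs_le_of_opposite (2 * D - 1) _ (by omega) (by omega) (Or.inl ⟨h, by ring⟩),
          abs_le_of_opposite (2 * D) _ (by omega) (by omega) (Or.inl ⟨h, by ring⟩)⟩)
        (fun h => ⟨abs_le_of_opposite (2 * D - 1) _ (by omega) (by omega) (Or.inr ⟨h, by ring⟩),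
          abs_le_of_opposite (2 * D) _ (by omega) (by omega) (Or.inr ⟨h, by ring⟩)⟩)
  refine ⟨k, by omega, x₀, ?_⟩
  have hk' : (k : ℝ) ≤ 2 * D - 1 := by
    have : (k : ℝ) + 1 ≤ 2 * D := by exact_mod_cast (show k + 1 ≤ 2 * D by omega)
    linarith
  have htwo : (2 : ℝ) ≤ exp (η * X) := by linarith [add_one_le_exp (η * X)]
  have hone : 1 ≤ 2 * exp (-(Γ * (2 * D - 1)) + η * X) * |continuant V α k x₀| := by
    refine le_of_mul_le_mul_left ?_ (abs_pos.2 hum)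
    linarith
  have hprod : 2 * exp (-(Γ * (2 * D - 1)) + η * X) ≤ exp (-(Γ * k - 2 * (η * X))) := by
    calc _ ≤ exp (η * X) * exp (-(Γ * (2 * D - 1)) + η * X) := by gcongr
      _ = exp (-(Γ * (2 * D - 1)) + 2 * (η * X)) := by rw [← exp_add]; ring_nf
      _ ≤ exp (-(Γ * k) + 2 * (η * X)) := by gcongr
      _ = _ := by ring_nf
  have h := hone.trans (mul_le_mul_of_nonneg_right hprod (abs_nonneg _))
  rwa [exp_neg, ← div_eq_inv_mul, one_le_div (exp_pos _)] at h

/-- The window `[j, j + k)` contains `y` at distance between `D / 2 - 1` and `2 * D` from the two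
sites adjacent to it. -/
def IsCentralInWindow (D k : ℕ) (j y : ℤ) : Prop :=
  ((D : ℤ) - 2 ≤ 2 * (y - (j - 1)) ∧ y - (j - 1) ≤ 2 * D) ∧
    (D : ℤ) - 2 ≤ 2 * (j + k - y) ∧ j + k - y ≤ 2 * D

theorem exists_isTwoBlock_isCentralInWindow (hn : |n| ≤ X) (hm : |m| ≤ X) (hD : |n - m| = D)
    (hD₁₀ : 10 ≤ D) (hk : k = 2 * D - 2 ∨ k = 2 * D - 1) :
    ∃ I, IsTwoBlock (30 * X) I ∧ I.card = k + 1 ∧ (∀ j ∈ I, |j| ≤ 8 * X) ∧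
      ∀ j ∈ I, IsCentralInWindow D k j n ∨ IsCentralInWindow D k j m := by
  set a := 2 - ((D + 1) / 2 : ℕ) - (D : ℤ)
  have hDX : D ≤ 2 * X := by
    rw [abs_le] at hn hm
    have := abs_cases (n - m)
    omega
  have hdisj : Disjoint (Finset.Ico (n + a) (n + a + D))
      (Finset.Ico (m + a) (m + a + (k + 1 - D : ℕ))) := by
    rw [Finset.disjoint_left]
    intro i hi hi'
    rw [Finset.mem_Ico] at hi hi'
    have := abs_cases (n - m)
    omega
  have hsize : ∀ j ∈ Finset.Ico (n + a) (n + a + D) ∪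
      Finset.Ico (m + a) (m + a + (k + 1 - D : ℕ)), |j| ≤ 8 * X := fun j hj => by
    rw [Finset.mem_union, Finset.mem_Ico, Finset.mem_Ico] at hj
    rw [abs_le] at *
    omega
  refine ⟨_, ⟨fun j hj => (hsize j hj).trans (by push_cast; omega), n + a, m + a, D, k + 1 - D,
    by omega, by omega, hdisj, rfl⟩, ?_, hsize, fun j hj => ?_⟩
  · rw [Finset.card_union_of_disjoint hdisj]
    simp only [Int.card_Ico, add_sub_cancel_left, Int.toNat_natCast]
    omega
  · rw [Finset.mem_union, Finset.mem_Ico, Finset.mem_Ico] at hj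
    simp only [IsCentralInWindow]
    omega

theorem ContinuantInterpolation.exists_isCentralInWindow
    (hinterp : ContinuantInterpolation α (30 * X) ε) (hε : ε * (30 * X : ℕ) ≤ η * X)
    (hε₁ : 0 ≤ ε₁) (hε₁η : ε₁ ≤ η) (hδ : 0 ≤ δ) (hn : |n| ≤ X) (hm : |m| ≤ X)
    (hD : |n - m| = D) (hD₁₀ : 10 ≤ D) (hres : OnlyResonance α θ ε₁ X K)
    (hKδ : exp (-(δ * |(K : ℝ)|)) ≤ chord (2 * θ + K * α))
    (hk : k = 2 * D - 2 ∨ k = 2 * D - 1) {x₀ : ℝ}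
    (hx₀ : exp (Γ * k - 2 * (η * X)) ≤ |continuant (reducedPotential lam E) α k x₀|) :
    ∃ j, (IsCentralInWindow D k j n ∨ IsCentralInWindow D k j m) ∧
      exp (Γ * k - (δ * |(K : ℝ)| + 4 * (η * X)))
        ≤ |continuant (reducedPotential lam E) α k (θ + j * α)| := by
  obtain ⟨I, hI, hcard, hsize, hcentral⟩ := exists_isTwoBlock_isCentralInWindow hn hm hD hD₁₀ hk
  have hδK : 0 ≤ δ * |(K : ℝ)| := by positivity
  have hε₁X : 0 ≤ ε₁ * X := by positivity
  have hsep : ∀ i ∈ I, ∀ j ∈ I, i ≠ j →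
      exp (-(δ * |(K : ℝ)| + ε₁ * X)) ≤ chord (2 * θ + ((i + j + k - 1 : ℤ) : ℝ) * α) := by
    intro i hi j hj hij
    by_cases hN : i + j + k - 1 = K
    · rw [hN]
      exact (exp_le_exp.2 (by linarith)).trans hKδ
    · refine (exp_le_exp.2 (by linarith)).trans (hres _ ?_ hN)
      have hi' := hsize i hi
      have hj' := hsize j hj
      have := abs_cases (n - m)
      rw [abs_le] at *
      omega
  obtain ⟨j, hj, hjlow⟩ := hinterp.exists_exp_le hI hcard (by positivity) hsep hx₀
  have hε₁ηX : ε₁ * X ≤ η * X := by gcongr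
  exact ⟨j, hcentral j hj, (exp_le_exp.2 (by linarith)).trans hjlow⟩

theorem DecaysFrom.abs_le_of_isCentralInWindow (hdec : DecaysFrom u m K Γ η X)
    (hu : IsSolution V α θ u) (hΓ : 0 ≤ Γ) (hupper : HasGrowthBound V α Γ (η * X)) (hn : |n| ≤ X)
    (hm : |m| ≤ X) (hD : |n - m| = D) (hD₁₀ : 10 ≤ D) (hηX : 1 ≤ η * X) {j y : ℤ}
    (hy : y = n ∨ y = m) (hjy : IsCentralInWindow D k j y) {b : ℝ}
    (hlower : exp (Γ * k - b) ≤ |continuant V α k (θ + j * α)|) :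
    |u y| ≤ |u m| * exp (b - Γ * D + 3 * (η * X) + Γ * (2 + |(n : ℝ) + m - K|)) := by
  obtain ⟨⟨hleft, hleft'⟩, hright, hright'⟩ := hjy
  set Q := b - Γ * D + 2 * (η * X) + Γ * (2 + |(n : ℝ) + m - K|) with hQ
  have term_le (z t : ℤ) (hz : |z - y| = t) (ht : D - 2 ≤ 2 * t) (ht' : t ≤ 2 * D) :
      exp (b + η * X - Γ * t) * |u z| ≤ |u m| * exp Q := by
    obtain ⟨hzX, hclear⟩ := le_clearance_of_abs_sub_eq (K := K) hn hm hD hy hz ht ht'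
    have hz := hdec.abs_le hΓ hzX (D := D - t - 2 - |(n : ℝ) + m - K|) (by exact_mod_cast hclear)
    refine (mul_le_mul_of_nonneg_left hz (exp_pos _).le).trans_eq ?_
    rw [mul_left_comm, ← exp_add, hQ]
    ring_nf
  have hbound := hu.abs_le_of_le_continuant hupper hlower (x := y) (by omega) (by omega)
  have hterm₁ := term_le (j - 1) (y - (j - 1))
    (by rw [abs_sub_comm]; exact abs_of_nonneg (by omega)) hleft hleft'
  have hterm₂ := term_le (j + k) (j + k - y) (abs_of_nonneg (by omega)) hright hright'
  push_cast at hterm₁ hterm₂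
  have htwo : (2 : ℝ) ≤ exp (η * X) := by linarith [add_one_le_exp (η * X)]
  calc |u y| ≤ 2 * (|u m| * exp Q) := by linarith
    _ ≤ exp (η * X) * (|u m| * exp Q) := by gcongr
    _ = _ := by
      rw [mul_left_comm, ← exp_add, hQ]
      ring_nf

/-- Two blocks near `n` and `m` produce a large continuant around one of the two sites, and the
resonance costs only `exp (δ * |K|)`; it is not the peak, where `u` would be too small. -/
theorem DecaysFrom.abs_le_of_nonresonant (hdec : DecaysFrom u m K Γ η X)
    (hu : IsSolution (reducedPotential lam E) α θ u) (hpeak : IsPeak u m) (hΓ : 0 ≤ Γ)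
    (hupper : HasGrowthBound (reducedPotential lam E) α Γ (η * X))
    (hinterp : ContinuantInterpolation α (30 * X) ε) (hε : ε * (30 * X : ℕ) ≤ η * X)
    (hε₁ : 0 ≤ ε₁) (hε₁η : ε₁ ≤ η) (hδ : 0 ≤ δ) (hn : |n| ≤ X) (hm : |m| ≤ X)
    (hD : |n - m| = D) (hD₁₀ : 10 ≤ D) (hK : |n + m - K| ≤ D) (hηX : 1 ≤ η * X)
    (hres : OnlyResonance α θ ε₁ X K) (hKδ : exp (-(δ * |(K : ℝ)|)) ≤ chord (2 * θ + K * α))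
    (hneg : δ * |(K : ℝ)| - Γ * D + 7 * (η * X) + Γ * (2 + |(n : ℝ) + m - K|) < 0) :
    |u n| ≤ |u m| *
      exp (δ * |(K : ℝ)| - Γ * D + 7 * (η * X) + Γ * (2 + |(n : ℝ) + m - K|)) := by
  obtain ⟨k, hk, x₀, hx₀⟩ := hdec.exists_exp_le_abs_continuant hu hpeak.ne_zero hΓ hn hm hD
    (by omega) hK hηX
  obtain ⟨j, hj, hlower⟩ := hinterp.exists_isCentralInWindow hε hε₁ hε₁η hδ hn hm hD hD₁₀ hres hKδ
    hk hx₀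
  have abs_le (y : ℤ) (hy : y = n ∨ y = m) (hjy : IsCentralInWindow D k j y) : |u y| ≤ |u m| *
      exp (δ * |(K : ℝ)| - Γ * D + 7 * (η * X) + Γ * (2 + |(n : ℝ) + m - K|)) := by
    refine (hdec.abs_le_of_isCentralInWindow hu hΓ hupper hn hm hD hD₁₀ hηX hy hjy
      hlower).trans_eq ?_
    ring_nf
  rcases hj with hj | hj
  · exact abs_le n (Or.inl rfl) hj
  · exact absurd (abs_le m (Or.inr rfl) hj)
      (not_le.2 (mul_lt_of_lt_one_right hpeak.abs_pos (exp_lt_one_iff.2 hneg)))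

end Sharp

/-! ## Localization away from resonant mirror images -/

section Localization

variable {lam E α θ Λ A Γ η d ε ε₁ ε₂ c : ℝ} {u : ℤ → ℝ} {X p : ℕ} {m n K : ℤ}

/-- At scale `X` the reflection `x ↦ K - x` is almost a symmetry of the potential, it sends `m`
close to `n`, and `K` is far enough from `0` for the resonance to carry mass from `m` to `n`. The
slope `d` stands for a number slightly above `deltaPhase α θ / log lam`. -/
structure IsMirror (α θ d ε ε₁ X : ℝ) (m n K : ℤ) : Prop where
  chord_lt : chord (2 * θ + K * α) < exp (-(ε₁ * X))
  abs_add_sub_le : |(n : ℝ) + m - K| ≤ ε * X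
  abs_sub_le : |(n : ℝ) - m| ≤ d * |(K : ℝ)| + ε * X

/-- At scale `X`, the function `u` with peak `m` is exponentially small at every site away from `m`
and `-m` to which no mirror sends `m`. -/
def LocalizedAtScale (α θ d ε ε₁ c : ℝ) (X : ℕ) (u : ℤ → ℝ) (m : ℤ) : Prop :=
  ∀ n : ℤ, |m| ≤ X → |n| ≤ X → 2 * ε * X ≤ abs (|(n : ℝ)| - |(m : ℝ)|) →
    |u n| ≤ |u m| * exp (-(c * X)) ∨ ∃ K, IsMirror α θ d ε ε₁ X m n K

theorem eventually_cofinite_int_iff {P : ℤ → Prop} :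
    (∀ᶠ n in cofinite, P n) ↔ ∃ N : ℤ, ∀ n, N ≤ |n| → P n := by
  rw [Int.cofinite_eq, ← comap_abs_atTop, eventually_comap, eventually_atTop]
  exact exists_congr fun N =>
    ⟨fun h n hn => h _ hn n rfl, fun h b hb n hn => h n (hn ▸ hb)⟩

theorem eventually_resonance_unique (hα : ChordDiophantine α c p) (hε₁ : 0 < ε₁) (C : ℝ) :
    ∀ᶠ X : ℕ in atTop, ∀ (θ : ℝ) (K K' : ℤ), |(K : ℝ)| ≤ C * X → |(K' : ℝ)| ≤ C * X →
      chord (2 * θ + K * α) < exp (-(ε₁ * X)) → chord (2 * θ + K' * α) < exp (-(ε₁ * X)) →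
      K = K' := by
  have hlim := ((tendsto_pow_mul_exp_neg_atTop_nhds_zero p).comp
    (tendsto_natCast_atTop_atTop.const_mul_atTop hε₁)).const_mul (2 * (2 * C / ε₁) ^ p)
  rw [mul_zero] at hlim
  filter_upwards [hlim.eventually_lt_const hα.pos] with X hX θ K K' hK hK' hres hres'
  by_contra hne
  have : 0 < |((K - K' : ℤ) : ℝ)| := abs_pos.2 (by exact_mod_cast sub_ne_zero.2 hne)
  have hsize : |((K - K' : ℤ) : ℝ)| ≤ 2 * C * X := by
    push_cast
    linarith [abs_sub (K : ℝ) K']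
  have htri := chord_sub_le (2 * θ + K * α) (2 * θ + K' * α)
  rw [show 2 * θ + K * α - (2 * θ + K' * α) = ((K - K' : ℤ) : ℝ) * α by push_cast; ring] at htri
  have hdio := (div_le_iff₀ (by positivity)).1 (hα.le_chord (K - K') (sub_ne_zero.2 hne))
  have hcX : c ≤ 2 * exp (-(ε₁ * X)) * (2 * C * X) ^ p := by
    refine hdio.trans ?_
    gcongr
    linarith
  rw [show 2 * C * X = 2 * C / ε₁ * (ε₁ * X) by field_simp, mul_pow] at hcX
  refine absurd hX (not_lt.2 (hcX.trans_eq ?_))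
  simp only [Function.comp_apply]
  ring

theorem eventually_exists_onlyResonance (hα : ChordDiophantine α c p) (hε₁ : 0 < ε₁) :
    ∀ᶠ X : ℕ in atTop, ∀ θ, ∃ K : ℤ,
      (chord (2 * θ + K * α) < exp (-(ε₁ * X)) ∨ K = 100 * X) ∧ OnlyResonance α θ ε₁ X K := by
  filter_upwards [eventually_resonance_unique hα hε₁ 30] with X hunique θ
  by_cases h : ∃ K : ℤ, |K| ≤ 30 * X ∧ chord (2 * θ + K * α) < exp (-(ε₁ * X))
  · obtain ⟨K, hK, hchord⟩ := h
    refine ⟨K, Or.inl hchord, fun N hN hNK => ?_⟩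
    by_contra! hlt
    exact hNK (hunique θ N K (by exact_mod_cast hN) (by exact_mod_cast hK) hlt hchord)
  · push Not at h
    exact ⟨100 * X, Or.inr rfl, fun N hN _ => h N hN⟩

theorem DecaysFrom.abs_le_of_far_from_mirror (hdec : DecaysFrom u m K Γ η X) (hΛ : 0 < Λ)
    (hΛΓ : Λ ≤ Γ) (hη : η ≤ Λ * ε₂ / 2) (hε₂ : 0 ≤ ε₂) (hε₂₁ : ε₂ ≤ 1) (hn : |n| ≤ X)
    (hnm : ε₂ * X ≤ |(n : ℝ) - m|) (hnK : ε₂ * X ≤ |(n : ℝ) + m - K|) :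
    |u n| ≤ |u m| * exp (-(Λ * ε₂ / 2 * X)) := by
  have hnX : |(n : ℝ)| ≤ X := by exact_mod_cast hn
  have hX := mul_le_of_le_one_left (Nat.cast_nonneg (α := ℝ) X) hε₂₁
  have hclear : ε₂ * X ≤ clearance m K X n := by
    simp only [clearance]
    push_cast
    exact le_min (le_min hnm hnK) (by linarith [Nat.cast_nonneg (α := ℝ) X])
  refine (hdec.abs_le (hΛ.le.trans hΛΓ) (by omega) hclear).trans ?_
  have hηX : η * X ≤ Λ * ε₂ / 2 * X := by gcongr
  have hΛX : Λ * (ε₂ * X) ≤ Γ * (ε₂ * X) := by gcongr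
  gcongr
  linarith

theorem DecaysFrom.abs_le_of_near_mirror (hdec : DecaysFrom u m K Γ η X)
    (hu : IsSolution (reducedPotential lam E) α θ u) (hpeak : IsPeak u m)
    (hupper : HasGrowthBound (reducedPotential lam E) α Γ (η * X))
    (hinterp : ContinuantInterpolation α (30 * X) (η / 30)) (hres : OnlyResonance α θ ε₁ X K)
    (hε₁ : 0 ≤ ε₁) (hε₁η : ε₁ ≤ η) (hΛ : 0 < Λ) (hΛΓ : Λ ≤ Γ) (hΓA : Γ ≤ A) (hd : 0 ≤ d)
    (hη : 7 * η ≤ Λ * ε / 4) (hε₂ε : ε₂ ≤ ε) (hε₂A : A * (2 * ε₂) ≤ Λ * ε / 4) (hηX : 1 ≤ η * X)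
    (hε₂X : 2 ≤ ε₂ * X) (hεX : 10 ≤ ε * X) (hn : |n| ≤ X) (hm : |m| ≤ X)
    (hnm : ε * X ≤ |(n : ℝ) - m|) (hnK : |(n : ℝ) + m - K| ≤ ε₂ * X)
    (hKd : exp (-(d * Λ * |(K : ℝ)|)) ≤ chord (2 * θ + K * α))
    (hfar : d * |(K : ℝ)| + ε * X < |(n : ℝ) - m|) :
    |u n| ≤ |u m| * exp (-(Λ * ε / 2 * X)) := by
  obtain ⟨D, hD⟩ : ∃ D : ℕ, |n - m| = D := ⟨(n - m).natAbs, by simp⟩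
  have hDR : |(n : ℝ) - m| = D := by exact_mod_cast hD
  rw [hDR] at hnm hfar
  have hΓ : 0 ≤ Γ := hΛ.le.trans hΛΓ
  have hε₂D : ε₂ * X ≤ D := (mul_le_mul_of_nonneg_right hε₂ε (Nat.cast_nonneg X)).trans hnm
  have hexp : d * Λ * |(K : ℝ)| - Γ * D + 7 * (η * X) + Γ * (2 + |(n : ℝ) + m - K|)
      ≤ -(Λ * ε / 2 * X) := by
    have hdecay : Λ * (d * |(K : ℝ)| + ε * X) ≤ Γ * D :=
      mul_le_mul hΛΓ hfar.le (by linarith [mul_nonneg hd (abs_nonneg (K : ℝ))]) hΓ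
    have hmirror : Γ * (2 + |(n : ℝ) + m - K|) ≤ A * (2 * ε₂ * X) :=
      mul_le_mul hΓA (by linarith) (by positivity) (hΓ.trans hΓA)
    have hηX' := mul_le_mul_of_nonneg_right hη (Nat.cast_nonneg (α := ℝ) X)
    have hε₂X' := mul_le_mul_of_nonneg_right hε₂A (Nat.cast_nonneg (α := ℝ) X)
    linarith
  refine (hdec.abs_le_of_nonresonant (δ := d * Λ) hu hpeak hΓ hupper hinterp
    (by push_cast; linarith) hε₁ hε₁η (by positivity) hn hm hD ?_ ?_ hηX hres hKd ?_).trans ?_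
  · exact_mod_cast (show (10 : ℝ) ≤ D by linarith)
  · exact_mod_cast hnK.trans hε₂D
  · linarith [mul_pos hΛ (by linarith : 0 < ε * X)]
  · gcongr

theorem DecaysFrom.localizedAtScale (hdec : DecaysFrom u m K Γ η X)
    (hu : IsSolution (reducedPotential lam E) α θ u) (hpeak : IsPeak u m)
    (hupper : HasGrowthBound (reducedPotential lam E) α Γ (η * X))
    (hinterp : ContinuantInterpolation α (30 * X) (η / 30)) (hres : OnlyResonance α θ ε₁ X K)
    (hK : chord (2 * θ + K * α) < exp (-(ε₁ * X)) ∨ K = 100 * X)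
    (hε₁ : 0 ≤ ε₁) (hε₁η : ε₁ ≤ η) (hΛ : 0 < Λ) (hΛΓ : Λ ≤ Γ) (hΓA : Γ ≤ A) (hd : 0 ≤ d)
    (hη : 7 * η ≤ Λ * ε / 4) (hη₂ : η ≤ Λ * ε₂ / 2) (hε₂ε : ε₂ ≤ ε) (hε₁' : ε ≤ 1)
    (hε₂A : A * (2 * ε₂) ≤ Λ * ε / 4) (hηX : 1 ≤ η * X) (hε₂X : 2 ≤ ε₂ * X) (hεX : 10 ≤ ε * X)
    (hchord : ∀ N : ℤ, ε * X ≤ |(N : ℝ)| → exp (-(d * Λ * |(N : ℝ)|)) ≤ chord (2 * θ + N * α)) :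
    LocalizedAtScale α θ d ε ε₁ (Λ * ε₂ / 2) X u m := by
  intro n hm hn hnm
  have hX : (0 : ℝ) < X := by
    rcases (Nat.cast_nonneg (α := ℝ) X).lt_or_eq with h | h
    · exact h
    · rw [← h] at hεX
      linarith
  have hε₂ : 0 ≤ ε₂ := (pos_of_mul_pos_left (by linarith) hX.le).le
  have hε₂X' : ε₂ * X ≤ ε * X := by gcongr
  have hsub : 2 * ε * X ≤ |(n : ℝ) - m| := hnm.trans (abs_abs_sub_abs_le_abs_sub _ _)
  have hadd : 2 * ε * X ≤ |(n : ℝ) + m| := by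
    have := abs_abs_sub_abs_le_abs_sub (n : ℝ) (-m)
    rw [abs_neg, sub_neg_eq_add] at this
    exact hnm.trans this
  by_cases hnK : ε₂ * X ≤ |(n : ℝ) + m - K|
  · exact Or.inl (hdec.abs_le_of_far_from_mirror hΛ hΛΓ hη₂ hε₂ (hε₂ε.trans hε₁') hn
      (by linarith) hnK)
  by_cases hfar : d * |(K : ℝ)| + ε * X < |(n : ℝ) - m|
  · left
    have hKX : ε * X ≤ |(K : ℝ)| := by linarith [abs_sub_abs_le_abs_sub ((n : ℝ) + m) K]
    refine (hdec.abs_le_of_near_mirror hu hpeak hupper hinterp hres hε₁ hε₁η hΛ hΛΓ hΓA hd hη hε₂ε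
      hε₂A hηX hε₂X hεX hn hm (by linarith) (by linarith) (hchord K hKX) hfar).trans ?_
    gcongr
  · refine Or.inr ⟨K, hK.resolve_right fun hK' => ?_, by linarith, not_lt.1 hfar⟩
    have hnX : |(n : ℝ)| ≤ X := by exact_mod_cast hn
    have hmX : |(m : ℝ)| ≤ X := by exact_mod_cast hm
    have hε₂X₁ := mul_le_of_le_one_left hX.le (hε₂ε.trans hε₁')
    rw [hK'] at hnK
    push_cast at hnK
    rw [not_le, abs_lt] at hnK
    rw [_root_.abs_le] at hnX hmX
    linarith

theorem eventually_localizedAtScale (hlam : 1 < lam) (hα : ChordDiophantine α c p) {E₀ : ℝ}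
    (hE₀ : 0 ≤ E₀) (hd : 0 ≤ d)
    (hchord : ∀ᶠ N : ℤ in cofinite,
      exp (-(d * log lam * |(N : ℝ)|)) ≤ chord (2 * θ + N * α)) (hε : 0 < ε) (hε' : ε ≤ 1) :
    ∃ b, 0 < b ∧ ∃ ε₁, 0 < ε₁ ∧ ∀ᶠ X : ℕ in atTop, ∀ E, |E| ≤ E₀ → ∀ u m,
      IsSolution (reducedPotential lam E) α θ u → IsPeak u m →
        LocalizedAtScale α θ d ε ε₁ b X u m := by
  have hΛ : 0 < log lam := log_pos hlam
  have hA : 0 < log (2 * (E₀ + 2 * lam + 1)) := log_pos (by linarith)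
  obtain ⟨ε₂, hε₂, hε₂ε, hε₂A⟩ := exists_pos_le_and_mul_le hε
    (show 0 < log lam * ε / 4 by positivity) (mul_pos hA two_pos)
  obtain ⟨η, hη, hη₂, hη₁⟩ := exists_pos_le_and_mul_le (show 0 < log lam * ε₂ / 2 by positivity)
    (show 0 < log lam * ε / 4 by positivity) (show (0 : ℝ) < 7 by norm_num)
  obtain ⟨ε₁, hε₁, hε₁η, hdecay⟩ := eventually_decaysFrom hlam hα hE₀ hη
  obtain ⟨N₀, hN₀⟩ := eventually_cofinite_int_iff.1 hchord
  refine ⟨log lam * ε₂ / 2, by positivity, ε₁, hε₁, ?_⟩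
  filter_upwards [hdecay, eventually_exists_onlyResonance hα hε₁,
    (tendsto_id.const_mul_atTop' (by norm_num : 0 < 30)).eventually
      (eventually_continuantInterpolation hα (show 0 < η / 30 by positivity)),
    eventually_le_mul_natCast hη 1, eventually_le_mul_natCast hε₂ 2,
    eventually_le_mul_natCast hε 10, eventually_le_mul_natCast hε N₀]
    with X hX hres hinterp hηX hε₂X hεX hN₀X E hE u m hu hpeak n hm
  obtain ⟨Γ, hΛΓ, hΓA, hupper, hdec⟩ := hX E hE
  obtain ⟨K, hK, hKres⟩ := hres θ
  exact (hdec θ u m K hu hpeak hm hKres).localizedAtScale hu hpeak hupper hinterp hKres hK hε₁.le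
    hε₁η hΛ hΛΓ hΓA hd hη₁ hη₂ hε₂ε hε' (by linarith) hηX hε₂X hεX
    (fun N hN => hN₀ N (by exact_mod_cast hN₀X.trans hN)) n hm

end Localization

/-! ## Excluding superexponential resonances -/

section Reflection

variable {V : ℝ → ℝ} {lam E α θ μ C F M s : ℝ} {u : ℤ → ℝ} {K c : ℤ}

theorem abs_reducedPotential_sub_reflection_le (hlam : 0 ≤ lam) (E α θ : ℝ) (K n : ℤ) :
    |reducedPotential lam E (θ + n * α) - reducedPotential lam E (θ + (K - n : ℤ) * α)|
      ≤ 2 * lam * chord (2 * θ + K * α) := by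
  have hdiff : reducedPotential lam E (θ + n * α) - reducedPotential lam E (θ + (K - n : ℤ) * α) =
      2 * lam * (cos (2 * π * (θ + (K - n : ℤ) * α)) - cos (2 * π * (θ + n * α))) := by
    simp only [reducedPotential]
    ring
  have hsum : θ + ((K - n : ℤ) : ℝ) * α + (θ + n * α) = 2 * θ + K * α := by
    push_cast
    ring
  have hmul := mul_le_mul_of_nonneg_right
    (chord_le_two (θ + ((K - n : ℤ) : ℝ) * α - (θ + n * α))) (chord_nonneg (2 * θ + K * α))
  rw [hdiff, abs_mul, abs_cos_sub_cos_eq_chord_mul_chord, hsum, abs_of_nonneg (by linarith)]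
  gcongr
  linarith

/-- The Wronskian at `c` of `u` and its reflection `n ↦ u (K - n)`. -/
def reflectedWronskian (u : ℤ → ℝ) (K c : ℤ) : ℝ :=
  u (c + 1) * u (K - c) - u c * u (K - (c + 1))

theorem IsSolution.abs_reflectedWronskian_sub_le (hu : IsSolution V α θ u)
    (hV : ∀ n : ℤ, |V (θ + n * α) - V (θ + (K - n : ℤ) * α)| ≤ μ) (c : ℤ) :
    |reflectedWronskian u K c - reflectedWronskian u K (c - 1)| ≤ μ * |u c * u (K - c)| := by
  have hdiff : reflectedWronskian u K c - reflectedWronskian u K (c - 1)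
      = (V (θ + c * α) - V (θ + (K - c : ℤ) * α)) * (u c * u (K - c)) := by
    simp only [reflectedWronskian]
    rw [show K - (c - 1) = K - c + 1 by ring, show c - 1 + 1 = c by ring,
      show K - (c + 1) = K - c - 1 by ring, hu c, hu (K - c)]
    ring
  rw [hdiff, abs_mul]
  gcongr
  exact hV c

theorem sum_sq_comp_le {ι κ : Type*} {f : ι → ℝ} (hf : HasSum (fun i => f i ^ 2) M) {g : κ → ι}
    (hg : Function.Injective g) (T : Finset κ) : ∑ k ∈ T, f (g k) ^ 2 ≤ M := by
  have h := sum_le_hasSum (T.map ⟨g, hg⟩) (fun i _ => sq_nonneg (f i)) hf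
  rwa [Finset.sum_map] at h

theorem sum_abs_mul_comp_le {ι κ : Type*} {f : ι → ℝ} (hf : HasSum (fun i => f i ^ 2) M)
    {g h : κ → ι} (hg : Function.Injective g) (hh : Function.Injective h) (T : Finset κ) :
    ∑ k ∈ T, |f (g k) * f (h k)| ≤ M := by
  have hamgm : ∀ k ∈ T, |f (g k) * f (h k)| ≤ (f (g k) ^ 2 + f (h k) ^ 2) / 2 := fun k _ => by
    rw [abs_mul, ← sq_abs (f (g k)), ← sq_abs (f (h k))]
    linarith [two_mul_le_add_sq |f (g k)| |f (h k)|]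
  have hsum := Finset.sum_le_sum hamgm
  rw [← Finset.sum_div, Finset.sum_add_distrib] at hsum
  linarith [sum_sq_comp_le hf hg T, sum_sq_comp_le hf hh T]

theorem tendsto_cofinite_zero_of_hasSum_sq {ι : Type*} {f : ι → ℝ}
    (hf : HasSum (fun i => f i ^ 2) M) : Tendsto f cofinite (nhds 0) := by
  have h := hf.summable.tendsto_cofinite_zero.sqrt
  simp only [sqrt_sq_eq_abs, sqrt_zero] at h
  exact (tendsto_zero_iff_abs_tendsto_zero _).2 h

theorem IsSolution.abs_reflectedWronskian_le (hu : IsSolution V α θ u)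
    (hV : ∀ n : ℤ, |V (θ + n * α) - V (θ + (K - n : ℤ) * α)| ≤ μ)
    (hsq : HasSum (fun n => u n ^ 2) M) (c : ℤ) : |reflectedWronskian u K c| ≤ μ * M := by
  have hμ : 0 ≤ μ := (abs_nonneg _).trans (hV 0)
  have hinj₁ : Function.Injective fun i : ℕ => c - (i : ℤ) := fun a b h => by simpa using h
  have hinj₂ : Function.Injective fun i : ℕ => K - (c - (i : ℤ)) := fun a b h => by simpa using h
  have htelescope (j : ℕ) : |reflectedWronskian u K c| ≤ |reflectedWronskian u K (c - j)|
      + μ * ∑ i ∈ Finset.range j, |u (c - i) * u (K - (c - i))| := by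
    induction j with
    | zero => simp
    | succ j ih =>
      rw [Finset.sum_range_succ, mul_add, show c - ((j + 1 : ℕ) : ℤ) = c - j - 1 by push_cast; ring]
      have hstep := hu.abs_reflectedWronskian_sub_le hV (c - j)
      have := abs_sub_abs_le_abs_sub (reflectedWronskian u K (c - j))
        (reflectedWronskian u K (c - j - 1))
      linarith
  have tendsto_comp {g : ℕ → ℤ} (hg : Function.Injective g) :
      Tendsto (fun j => u (g j)) atTop (nhds 0) := by
    rw [← Nat.cofinite_eq_atTop]
    exact (tendsto_cofinite_zero_of_hasSum_sq hsq).comp hg.tendsto_cofinite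
  have hlim : Tendsto (fun j : ℕ => |reflectedWronskian u K (c - j)| + μ * M) atTop
      (nhds (μ * M)) := by
    have h₁ := tendsto_comp (g := fun j => c - j + 1) fun a b h => by simpa using h
    have h₂ := tendsto_comp (g := fun j => K - (c - j + 1)) fun a b h => by simpa using h
    simpa [reflectedWronskian] using
      (((h₁.mul (tendsto_comp hinj₂)).sub ((tendsto_comp hinj₁).mul h₂)).abs).add_const (μ * M)
  refine ge_of_tendsto hlim (Eventually.of_forall fun j => (htelescope j).trans ?_)
  gcongr
  exact sum_abs_mul_comp_le hsq hinj₁ hinj₂ _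

theorem abs_le_or_abs_le_of_abs_mul_le_sq {a b : ℝ} (hs : 0 ≤ s) (h : |a * b| ≤ s ^ 2) :
    |a| ≤ s ∨ |b| ≤ s := by
  by_contra! hcon
  rw [abs_mul, sq] at h
  exact absurd (mul_lt_mul'' hcon.1 hcon.2 hs hs) (not_lt.2 h)

/-- At the centre of reflection the Wronskian is a product of an even and an odd combination of
values of `u`, one of which must be small. -/
theorem IsSolution.exists_sign_abs_sub_le (hu : IsSolution V α θ u) (hV : ∀ x, |V x| ≤ C)
    (hC : 2 ≤ C) (hs : 0 ≤ s) (hc : K = 2 * c ∨ K = 2 * c + 1)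
    (hw : |reflectedWronskian u K c| ≤ s ^ 2) :
    ∃ σ : ℝ, |σ| = 1 ∧ |u c - σ * u (K - c)| ≤ C * s ∧
      |u (c + 1) - σ * u (K - (c + 1))| ≤ C * s := by
  have hsC : s ≤ C * s := le_mul_of_one_le_left hs (by linarith)
  simp only [reflectedWronskian] at hw
  rcases hc with rfl | rfl
  · rw [show 2 * c - c = c by ring, show 2 * c - (c + 1) = c - 1 by ring] at hw ⊢
    rw [show u (c + 1) * u c - u c * u (c - 1) = u c * (u (c + 1) - u (c - 1)) by ring] at hw
    rcases abs_le_or_abs_le_of_abs_mul_le_sq hs hw with h | h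
    · refine ⟨-1, by simp, ?_, ?_⟩
      · rw [show u c - -1 * u c = 2 * u c by ring, abs_mul, abs_two]
        gcongr
      · rw [hu c, show V (θ + c * α) * u c - u (c - 1) - -1 * u (c - 1) = V (θ + c * α) * u c by
          ring, abs_mul]
        gcongr
        exact hV _
    · refine ⟨1, abs_one, ?_, by rw [one_mul]; linarith⟩
      rw [one_mul, sub_self, abs_zero]
      linarith
  · rw [show 2 * c + 1 - c = c + 1 by ring, show 2 * c + 1 - (c + 1) = c by ring] at hw ⊢
    rw [show u (c + 1) * u (c + 1) - u c * u c = (u (c + 1) - u c) * (u (c + 1) + u c) by ring]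
      at hw
    rcases abs_le_or_abs_le_of_abs_mul_le_sq hs hw with h | h
    · refine ⟨1, abs_one, ?_, by rw [one_mul]; linarith⟩
      rw [one_mul, abs_sub_comm]
      linarith
    · refine ⟨-1, by simp, ?_, ?_⟩ <;> rw [neg_one_mul, sub_neg_eq_add]
      · rw [add_comm]
        linarith
      · linarith

theorem abs_le_pow_mul_of_recurrence {f g : ℕ → ℝ} (hC : 2 ≤ C) (hg : ∀ t, |g t| ≤ C - 2)
    (hf : ∀ t, |f (t + 2) - g t * f (t + 1) + f t| ≤ F) (h₀ : |f 0| ≤ F) (h₁ : |f 1| ≤ F)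
    (t : ℕ) : |f t| ≤ C ^ t * F ∧ |f (t + 1)| ≤ C ^ t * F := by
  have hF : 0 ≤ F := (abs_nonneg _).trans h₀
  induction t with
  | zero => simp [h₀, h₁]
  | succ t ih =>
    obtain ⟨ih₀, ih₁⟩ := ih
    have hpow : 1 * F ≤ C ^ t * F := by
      gcongr
      exact one_le_pow₀ (by linarith)
    have hCF : 1 * (C ^ t * F) ≤ C * (C ^ t * F) := by
      gcongr
      linarith
    have hmid : |g t * f (t + 1)| ≤ (C - 2) * (C ^ t * F) := by
      rw [abs_mul]
      exact mul_le_mul (hg t) ih₁ (abs_nonneg _) (by linarith)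
    have hft := hf t
    rw [pow_succ', mul_assoc]
    refine ⟨by linarith, ?_⟩
    rw [abs_le] at *
    constructor <;> linarith

theorem abs_le_pow_natAbs_mul_of_recurrence {f g : ℤ → ℝ} (hC : 2 ≤ C) (hg : ∀ n, |g n| ≤ C - 2)
    (hf : ∀ n, |f (n + 1) - g n * f n + f (n - 1)| ≤ F) (h₀ : |f c| ≤ F) (h₁ : |f (c + 1)| ≤ F)
    (n : ℤ) : |f n| ≤ C ^ (n - c).natAbs * F := by
  rcases le_total c n with h | h
  · have := (abs_le_pow_mul_of_recurrence (f := fun t : ℕ => f (c + t))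
      (g := fun t : ℕ => g (c + t + 1)) hC (fun t => hg _) (fun t => ?_) (by simpa using h₀)
      (by simpa using h₁) (n - c).natAbs).1
    · rwa [show c + ((n - c).natAbs : ℤ) = n by omega] at this
    · convert hf (c + t + 1) using 5 <;> push_cast <;> ring_nf
  · have := (abs_le_pow_mul_of_recurrence (f := fun t : ℕ => f (c + 1 - t))
      (g := fun t : ℕ => g (c - t)) hC (fun t => hg _) (fun t => ?_) (by simpa using h₁)
      (by simpa using h₀) (n - c).natAbs).2
    · rwa [show c + 1 - ((n - c).natAbs + 1 : ℕ) = n by omega] at this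
    · have := hf (c - t)
      rw [show f (c - t + 1) - g (c - t) * f (c - t) + f (c - t - 1)
        = f (c - t - 1) - g (c - t) * f (c - t) + f (c - t + 1) by ring] at this
      convert this using 5 <;> push_cast <;> ring_nf

theorem IsSolution.abs_le_abs_reflection_add (hu : IsSolution V α θ u) (hC : 2 ≤ C)
    (hV : ∀ x, |V x| ≤ C - 2)
    (hrefl : ∀ n : ℤ, |V (θ + n * α) - V (θ + (K - n : ℤ) * α)| ≤ μ)
    (hsq : HasSum (fun n => u n ^ 2) 1) (hμ : μ ≤ s) (hμ' : μ ≤ s ^ 2) (x : ℤ) :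
    |u x| ≤ |u (K - x)| + C ^ (x - K / 2).natAbs * (C * s) := by
  have hs : 0 ≤ s := (abs_nonneg _).trans ((hrefl 0).trans hμ)
  have hsC : s ≤ C * s := le_mul_of_one_le_left hs (by linarith)
  obtain ⟨σ, hσ, hc₀, hc₁⟩ := hu.exists_sign_abs_sub_le (fun x => (hV x).trans (by linarith)) hC hs
    (show K = 2 * (K / 2) ∨ K = 2 * (K / 2) + 1 by omega)
    ((hu.abs_reflectedWronskian_le hrefl hsq _).trans (by linarith))
  have hrec (n : ℤ) : |(u (n + 1) - σ * u (K - (n + 1)))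
      - V (θ + n * α) * (u n - σ * u (K - n)) + (u (n - 1) - σ * u (K - (n - 1)))| ≤ C * s := by
    have hu1 : |u (K - n)| ≤ 1 :=
      (sq_le_one_iff_abs_le_one _).1 (le_hasSum hsq (K - n) fun i _ => sq_nonneg (u i))
    rw [show K - (n + 1) = K - n - 1 by ring, show K - (n - 1) = K - n + 1 by ring, hu n,
      hu (K - n)]
    rw [show V (θ + n * α) * u n - u (n - 1) - σ * u (K - n - 1)
        - V (θ + n * α) * (u n - σ * u (K - n))
        + (u (n - 1) - σ * (V (θ + (K - n : ℤ) * α) * u (K - n) - u (K - n - 1)))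
      = σ * ((V (θ + n * α) - V (θ + (K - n : ℤ) * α)) * u (K - n)) by ring,
      abs_mul, hσ, one_mul, abs_mul]
    exact (mul_le_of_le_one_right (abs_nonneg _) hu1).trans ((hrefl n).trans (hμ.trans hsC))
  have hdiff := abs_le_pow_natAbs_mul_of_recurrence (f := fun n => u n - σ * u (K - n))
    (g := fun n => V (θ + n * α)) hC (fun n => hV _) hrec hc₀ hc₁ x
  have htri := abs_sub_abs_le_abs_sub (u x) (σ * u (K - x))
  rw [abs_mul, hσ, one_mul] at htri
  linarith

theorem pow_natAbs_mul_exp_neg (hC : 0 < C) (K : ℤ) :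
    C ^ K.natAbs * exp (-((log C + 1) * |(K : ℝ)|)) = exp (-|(K : ℝ)|) := by
  rw [← exp_log (pow_pos hC K.natAbs), ← exp_add, log_pow, Nat.cast_natAbs, Int.cast_abs]
  ring_nf

theorem tendsto_abs_intCast_cofinite : Tendsto (fun n : ℤ => |(n : ℝ)|) cofinite atTop := by
  rw [Int.cofinite_eq, tendsto_sup]
  exact ⟨tendsto_abs_atBot_atTop.comp (tendsto_intCast_atBot_iff.2 tendsto_id),
    tendsto_abs_atTop_atTop.comp tendsto_intCast_atTop_atTop⟩

/-- A Gordon-type argument: superexponentially small `2 * θ + K * α` would make a normalized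
eigenfunction almost reflection symmetric about arbitrarily distant centres, hence zero. -/
theorem IsSolution.exists_eventually_exp_neg_le_chord (hlam : 0 ≤ lam)
    (hu : IsSolution (reducedPotential lam E) α θ u) (hsq : HasSum (fun n => u n ^ 2) 1) {x : ℤ}
    (hx : u x ≠ 0) :
    ∃ A, ∀ᶠ K : ℤ in cofinite, exp (-(A * |(K : ℝ)|)) ≤ chord (2 * θ + K * α) := by
  set C := |E| + 2 * lam + 2
  have hE := abs_nonneg E
  have hC : 2 ≤ C := by linarith
  have hlog : 0 ≤ log C := log_nonneg (by linarith)
  have hlim : Tendsto (fun K : ℤ => |u (K - x)| + C ^ (x.natAbs + 3) * exp (-|(K : ℝ)|)) cofinite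
      (nhds 0) := by
    have hrefl := (tendsto_cofinite_zero_of_hasSum_sq hsq).comp
      (sub_left_injective (b := x)).tendsto_cofinite
    have hexp := tendsto_exp_neg_atTop_nhds_zero.comp tendsto_abs_intCast_cofinite
    simpa using hrefl.abs.add (hexp.const_mul (C ^ (x.natAbs + 3)))
  refine ⟨2 * (log C + 1), ?_⟩
  filter_upwards [hlim.eventually_lt_const (abs_pos.2 hx)] with K hK
  by_contra! hchord
  refine (lt_irrefl _) (hK.trans_le' ?_)
  set q := exp (-((log C + 1) * |(K : ℝ)|)) with hq
  have hq0 : 0 < q := exp_pos _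
  have hq1 : q ≤ 1 := exp_le_one_iff.2 (by rw [neg_nonpos]; positivity)
  rw [show -(2 * (log C + 1) * |(K : ℝ)|) = -((log C + 1) * |(K : ℝ)|) + -((log C + 1) * |(K : ℝ)|)
    by ring, exp_add, ← hq] at hchord
  have hμ : 2 * lam * chord (2 * θ + K * α) ≤ C * (q * q) :=
    mul_le_mul (by linarith) hchord.le (chord_nonneg _) (by linarith)
  have hbound := hu.abs_le_abs_reflection_add hC
    (fun x => (abs_reducedPotential_le hlam E x).trans (by linarith))
    (abs_reducedPotential_sub_reflection_le hlam E α θ K) hsq (s := C * q)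
    (hμ.trans (by gcongr; exact mul_le_of_le_one_left hq0.le hq1))
    (hμ.trans (by nlinarith [mul_pos hq0 hq0])) x
  refine hbound.trans (add_le_add_right ?_ _)
  calc C ^ (x - K / 2).natAbs * (C * (C * q)) ≤ C ^ (x.natAbs + 1 + K.natAbs) * (C * (C * q)) := by
        gcongr
        · linarith
        · omega
    _ = C ^ (x.natAbs + 3) * (C ^ K.natAbs * q) := by ring
    _ = C ^ (x.natAbs + 3) * exp (-|(K : ℝ)|) := by rw [pow_natAbs_mul_exp_neg (by linarith)]

end Reflection

section PhaseExponent

variable {α θ A : ℝ}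

theorem deltaPhase_nonneg (α θ : ℝ) : 0 ≤ deltaPhase α θ := by
  rw [deltaPhase, limsup_eq]
  refine Real.sInf_nonneg fun a ha => ?_
  rw [Set.mem_ofPred_eq] at ha
  obtain ⟨n, hn⟩ := ha.exists
  have hdist : distToInt (2 * θ + n * α) ≤ 1 := (abs_sub_round _).trans (by norm_num)
  exact (div_nonneg (neg_nonneg.2 (log_nonpos (abs_nonneg _) hdist)) (abs_nonneg _)).trans hn

theorem isBoundedUnder_deltaPhase
    (h : ∀ᶠ K : ℤ in cofinite, exp (-(A * |(K : ℝ)|)) ≤ chord (2 * θ + K * α)) :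
    IsBoundedUnder (· ≤ ·) cofinite
      fun n : ℤ => -log (distToInt (2 * θ + n * α)) / |(n : ℝ)| := by
  refine ⟨A + log (2 * π), eventually_map.2 ?_⟩
  filter_upwards [h, tendsto_abs_intCast_cofinite.eventually_ge_atTop 1] with K hK hK1
  have hdist := hK.trans (chord_le_two_pi_mul_distToInt _)
  have hlog := log_le_log (exp_pos _) hdist
  have hpos : 0 < distToInt (2 * θ + K * α) :=
    pos_of_mul_pos_right ((exp_pos _).trans_le hdist) two_pi_pos.le
  have hlogpi : 0 ≤ log (2 * π) := log_nonneg (by linarith [pi_gt_three])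
  rw [log_exp, log_mul two_pi_pos.ne' hpos.ne'] at hlog
  rw [div_le_iff₀ (by linarith)]
  nlinarith

theorem eventually_exp_neg_le_chord_of_deltaPhase_lt
    (h : ∀ᶠ K : ℤ in cofinite, exp (-(A * |(K : ℝ)|)) ≤ chord (2 * θ + K * α)) {δ : ℝ}
    (hδ : deltaPhase α θ < δ) :
    ∀ᶠ K : ℤ in cofinite, exp (-(δ * |(K : ℝ)|)) ≤ chord (2 * θ + K * α) := by
  filter_upwards [h, tendsto_abs_intCast_cofinite.eventually_ge_atTop 1,
    eventually_lt_of_limsup_lt hδ (isBoundedUnder_deltaPhase h)] with K hK hK1 hKδ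
  have hpos : 0 < distToInt (2 * θ + K * α) := pos_of_mul_pos_right
    ((exp_pos _).trans_le (hK.trans (chord_le_two_pi_mul_distToInt _))) two_pi_pos.le
  rw [div_lt_iff₀ (by linarith)] at hKδ
  calc exp (-(δ * |(K : ℝ)|)) ≤ exp (log (distToInt (2 * θ + K * α))) := by gcongr; linarith
    _ = distToInt (2 * θ + K * α) := exp_log hpos
    _ ≤ chord (2 * θ + K * α) := by linarith [four_mul_distToInt_le_chord (2 * θ + K * α)]

end PhaseExponent

/-! ## Counting peaks by their mass -/

section Counting

variable {ι κ : Type*} {φ : ι → κ → ℝ} {c e : ℝ}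

/-- All rows and all columns of the real matrix `φ` have unit `ℓ²` norm, as for the coordinate
matrix of an orthonormal basis. -/
structure HasUnitRowsCols (φ : ι → κ → ℝ) : Prop where
  hasSum_row : ∀ s, HasSum (fun n => φ s n ^ 2) 1
  hasSum_col : ∀ n, HasSum (fun s => φ s n ^ 2) 1

theorem HasUnitRowsCols.swap (hφ : HasUnitRowsCols φ) : HasUnitRowsCols fun n s => φ s n :=
  ⟨hφ.hasSum_col, hφ.hasSum_row⟩

theorem HasUnitRowsCols.abs_le_one (hφ : HasUnitRowsCols φ) (s : ι) (n : κ) : |φ s n| ≤ 1 :=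
  (sq_le_one_iff_abs_le_one _).1 (le_hasSum (hφ.hasSum_row s) n fun _ _ => sq_nonneg _)

theorem HasUnitRowsCols.exists_ne_zero (hφ : HasUnitRowsCols φ) (s : ι) : ∃ n, φ s n ≠ 0 := by
  by_contra! h
  have hsum := hφ.hasSum_row s
  simp only [h, ne_eq, OfNat.ofNat_ne_zero, not_false_eq_true, zero_pow] at hsum
  exact one_ne_zero (hsum.unique hasSum_zero)

theorem HasUnitRowsCols.mul_card_le (hφ : HasUnitRowsCols φ) {b : ℝ} {T : Finset ι} {A : Finset κ}
    (h : ∀ s ∈ T, b ≤ ∑ n ∈ A, φ s n ^ 2) : b * T.card ≤ A.card :=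
  calc b * T.card = ∑ _s ∈ T, b := by rw [Finset.sum_const, nsmul_eq_mul, mul_comm]
    _ ≤ ∑ s ∈ T, ∑ n ∈ A, φ s n ^ 2 := Finset.sum_le_sum h
    _ = ∑ n ∈ A, ∑ s ∈ T, φ s n ^ 2 := Finset.sum_comm
    _ ≤ ∑ _n ∈ A, (1 : ℝ) :=
      Finset.sum_le_sum fun n _ => sum_le_hasSum T (fun _ _ => sq_nonneg _) (hφ.hasSum_col n)
    _ = A.card := by rw [Finset.sum_const, nsmul_eq_mul, mul_one]

theorem sub_le_sum_of_forall_disjoint_sum_le {f : ι → ℝ} (hf₀ : ∀ i, 0 ≤ f i) {a b : ℝ}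
    (hf : HasSum f a) (A : Finset ι) (h : ∀ T : Finset ι, Disjoint T A → ∑ i ∈ T, f i ≤ b) :
    a - b ≤ ∑ i ∈ A, f i := by
  classical
  rw [sub_le_iff_le_add]
  refine hasSum_le_of_sum_le hf fun U => ?_
  rw [← Finset.sum_inter_add_sum_sdiff U A f]
  exact add_le_add
    (Finset.sum_le_sum_of_subset_of_nonneg Finset.inter_subset_right fun i _ _ => hf₀ i)
    (h _ Finset.sdiff_disjoint)

theorem eventually_sum_le_of_forall_lt_abs {f : ℤ → ℝ} (hf : Summable f) (he : 0 < e) :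
    ∀ᶠ R : ℕ in atTop, ∀ T : Finset ℤ, (∀ j ∈ T, (R : ℤ) < |j|) → ∑ j ∈ T, f j ≤ e := by
  obtain ⟨S, hS⟩ := summable_iff_vanishing_norm.1 hf e he
  obtain ⟨N, hN⟩ := (S.finite_toSet.image Int.natAbs).bddAbove
  filter_upwards [eventually_ge_atTop N] with R hR T hT
  refine (le_abs_self _).trans (hS T (Finset.disjoint_left.2 fun j hjT hjS => ?_)).le
  have hjN := hN (Set.mem_image_of_mem _ hjS)
  have hjR := hT j hjT
  rw [Int.abs_eq_natAbs] at hjR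
  omega

theorem summable_exp_neg_mul_abs_sq (hc : 0 < c) :
    Summable fun j : ℤ => exp (-(c * |(j : ℝ)|)) ^ 2 := by
  have hgeom : Summable fun n : ℕ => exp (-(c * n)) ^ 2 := by
    refine (summable_geometric_of_lt_one (exp_pos (-(2 * c))).le
      (exp_lt_one_iff.2 (by linarith))).congr fun n => ?_
    rw [← exp_nat_mul, ← exp_nat_mul]
    push_cast
    ring_nf
  exact Summable.of_nat_of_neg (by simpa using hgeom) (by simpa using hgeom)

theorem finite_and_ncard_le_of_forall_card_le {S : Set ι} {N : ℕ}
    (h : ∀ T : Finset ι, (T : Set ι) ⊆ S → T.card ≤ N) : S.Finite ∧ S.ncard ≤ N := by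
  have hfin : S.Finite := by
    by_contra hinf
    obtain ⟨T, hTS, hcard⟩ := Set.Infinite.exists_subset_card_eq hinf (N + 1)
    have := h T hTS
    omega
  refine ⟨hfin, ?_⟩
  rw [Set.ncard_eq_toFinset_card S hfin]
  exact h _ hfin.coe_toFinset.subset

end Counting

section PeakCounting

variable {ι : Type*} {φ : ι → ℤ → ℝ} {m : ι → ℤ} {c e : ℝ}

theorem card_Icc_neg_natCast (M : ℕ) : (Finset.Icc (-(M : ℤ)) M).card = 2 * M + 1 := by
  rw [Int.card_Icc]
  omega

/-- Rows peaked in `[-L, L]` keep half of their mass in an interval of length `O(L)`, whose columns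
carry at most unit mass each. -/
theorem exists_finite_and_ncard_le (hφ : HasUnitRowsCols φ) (hc : 0 < c) (he : 0 < e)
    (hdecay : ∀ᶠ n : ℤ in cofinite, ∀ s, |(m s : ℝ)| ≤ e * |(n : ℝ)| →
      |φ s n| ≤ exp (-(c * |(n : ℝ)|))) :
    ∃ C : ℝ, ∀ L : ℕ, {s | |m s| ≤ (L : ℤ)}.Finite ∧
      ({s | |m s| ≤ (L : ℤ)}.ncard : ℝ) ≤ C * (2 * L + 1) := by
  obtain ⟨N, hN⟩ := eventually_cofinite_int_iff.1 hdecay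
  obtain ⟨R, hR, hRN⟩ := ((eventually_sum_le_of_forall_lt_abs (summable_exp_neg_mul_abs_sq hc)
    one_half_pos).and (eventually_ge_atTop N.toNat)).exists
  obtain ⟨B, hB⟩ := exists_nat_ge (1 / e)
  rw [div_le_iff₀' he] at hB
  have hcard (L : ℕ) (T : Finset ι) (hT : (T : Set ι) ⊆ {s | |m s| ≤ (L : ℤ)}) :
      T.card ≤ 2 * (2 * (B * L + R) + 1) := by
    have hmass : ∀ s ∈ T, 1 - 1 / 2 ≤ ∑ n ∈ Finset.Icc (-((B * L + R : ℕ) : ℤ)) (B * L + R : ℕ),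
        φ s n ^ 2 := fun s hs => by
      refine sub_le_sum_of_forall_disjoint_sum_le (fun n => sq_nonneg (φ s n)) (hφ.hasSum_row s) _
        fun U hU => ?_
      have hU' (j : ℤ) (hj : j ∈ U) : ((B * L + R : ℕ) : ℤ) < |j| := by
        have := Finset.disjoint_left.1 hU hj
        rwa [Finset.mem_Icc, ← abs_le, not_le] at this
      have hRj (j : ℤ) (hj : j ∈ U) : (R : ℤ) < |j| := by
        have := hU' j hj
        push_cast at this
        nlinarith
      refine (Finset.sum_le_sum fun j hj => ?_).trans (hR U hRj)
      have hms : |(m s : ℝ)| ≤ L := by exact_mod_cast hT hs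
      have hBL : ((B * L + R : ℕ) : ℝ) ≤ |(j : ℝ)| := by exact_mod_cast (hU' j hj).le
      push_cast at hBL
      rw [← sq_abs (φ s j)]
      gcongr
      refine hN j (by have := hRj j hj; omega) s (hms.trans ?_)
      nlinarith
    have := hφ.mul_card_le hmass
    rw [card_Icc_neg_natCast] at this
    have : (T.card : ℝ) ≤ ((2 * (2 * (B * L + R) + 1) : ℕ) : ℝ) := by push_cast at *; linarith
    exact_mod_cast this
  refine ⟨2 * (2 * (B + R) + 1), fun L => ?_⟩
  obtain ⟨hfin, hncard⟩ := finite_and_ncard_le_of_forall_card_le (hcard L)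
  refine ⟨hfin, (Nat.cast_le (α := ℝ).2 hncard).trans ?_⟩
  push_cast
  nlinarith [mul_nonneg B.cast_nonneg (α := ℝ) L.cast_nonneg]

theorem HasUnitRowsCols.sum_sq_apply_mul_le (hφ : HasUnitRowsCols φ) {g : ℤ → ℝ}
    (hg : ∀ j, 0 ≤ g j) (T : Finset ι) :
    ∑ s ∈ T, φ s (m s) ^ 2 * g (m s) ≤ ∑ j ∈ T.image m, g j := by
  rw [← Finset.sum_fiberwise_of_maps_to (fun s hs => Finset.mem_image_of_mem m hs)]
  refine Finset.sum_le_sum fun j _ => ?_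
  calc ∑ s ∈ T with m s = j, φ s (m s) ^ 2 * g (m s)
      = (∑ s ∈ T with m s = j, φ s j ^ 2) * g j := by
        rw [Finset.sum_mul]
        exact Finset.sum_congr rfl fun s hs => by rw [(Finset.mem_filter.1 hs).2]
    _ ≤ g j :=
      mul_le_of_le_one_left (hg j) (sum_le_hasSum _ (fun s _ => sq_nonneg _) (hφ.hasSum_col j))

/-- At a site `n ∈ G` the rows peaked outside `[-L, L]` carry little mass, so the rows peaked inside
carry almost the whole unit mass of the column `n`. -/
theorem eventually_mul_card_le_ncard (hφ : HasUnitRowsCols φ) (hc : 0 < c) (he : 0 < e) :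
    ∀ᶠ L : ℕ in atTop, {s | |m s| ≤ (L : ℤ)}.Finite → ∀ G : Finset ℤ,
      (∀ n ∈ G, ∀ s, (L : ℤ) < |m s| → |φ s n| ≤ |φ s (m s)| * exp (-(c * |(m s : ℝ)|))) →
      (1 - e) * G.card ≤ ({s | |m s| ≤ (L : ℤ)}.ncard : ℝ) := by
  filter_upwards [eventually_sum_le_of_forall_lt_abs (summable_exp_neg_mul_abs_sq hc) he]
    with L hL hfin G hG
  rw [Set.ncard_eq_toFinset_card _ hfin]
  refine hφ.swap.mul_card_le fun n hn => ?_
  refine sub_le_sum_of_forall_disjoint_sum_le (fun s => sq_nonneg (φ s n)) (hφ.hasSum_col n) _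
    fun T hT => ?_
  have hfar (s : ι) (hs : s ∈ T) : (L : ℤ) < |m s| := by
    simpa using Finset.disjoint_left.1 hT hs
  calc ∑ s ∈ T, φ s n ^ 2 ≤ ∑ s ∈ T, φ s (m s) ^ 2 * exp (-(c * |(m s : ℝ)|)) ^ 2 := by
        refine Finset.sum_le_sum fun s hs => ?_
        rw [← sq_abs (φ s n), ← sq_abs (φ s (m s)), ← mul_pow]
        gcongr
        exact hG n hn s (hfar s hs)
    _ ≤ ∑ j ∈ T.image m, exp (-(c * |(j : ℝ)|)) ^ 2 :=
      hφ.sum_sq_apply_mul_le (g := fun j : ℤ => exp (-(c * |(j : ℝ)|)) ^ 2)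
        (fun _ => sq_nonneg _) T
    _ ≤ e := hL _ (by simpa using hfar)

end PeakCounting

/-! ## Sites reached by a mirror -/

section Mirror

variable {α θ d ε ε₁ c X : ℝ} {m n K : ℤ} {L p : ℕ}

theorem IsMirror.neg (h : IsMirror α θ d ε ε₁ X m n K) :
    IsMirror α (-θ) d ε ε₁ X (-m) (-n) (-K) where
  chord_lt := by
    rw [show 2 * -θ + ((-K : ℤ) : ℝ) * α = -(2 * θ + K * α) by push_cast; ring, chord_neg]
    exact h.chord_lt
  abs_add_sub_le := by
    rw [show ((-n : ℤ) : ℝ) + (-m : ℤ) - (-K : ℤ) = -(n + m - K) by push_cast; ring, abs_neg]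
    exact h.abs_add_sub_le
  abs_sub_le := by
    rw [show ((-n : ℤ) : ℝ) - (-m : ℤ) = -(n - m) by push_cast; ring, abs_neg, Int.cast_neg,
      abs_neg]
    exact h.abs_sub_le

theorem IsMirror.abs_le (h : IsMirror α θ d ε ε₁ X m n K) :
    |(K : ℝ)| ≤ |(n : ℝ)| + |(m : ℝ)| + ε * X := by
  have h₁ := abs_sub (n + m : ℝ) (n + m - K)
  rw [sub_sub_cancel] at h₁
  linarith [abs_add_le (n : ℝ) m, h.abs_add_sub_le]

theorem not_isMirror_of_abs_le (hd : 0 ≤ d) (hε : 0 ≤ ε) (hdε : 4 * ε < 1 - d) (hn : n ≠ 0)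
    (hm : |(m : ℝ)| ≤ ε * |(n : ℝ)|) : ¬ IsMirror α θ d ε ε₁ |(n : ℝ)| m n K := fun h => by
  have hn' : 0 < |(n : ℝ)| := by positivity
  have hdist := abs_sub_abs_le_abs_sub (n : ℝ) m
  have hK : d * |(K : ℝ)| ≤ d * ((1 + 2 * ε) * |(n : ℝ)|) := by
    gcongr
    linarith [h.abs_le]
  have hcontra : 0 < (1 - d - 2 * ε * (1 + d)) * |(n : ℝ)| := by
    refine mul_pos ?_ hn'
    nlinarith
  linarith [h.abs_sub_le]

theorem IsMirror.abs_le_mul (h : IsMirror α θ d ε ε₁ |(m : ℝ)| m n K) (hd : 0 ≤ d)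
    (hε : 0 ≤ ε) (hdε : 4 * ε < 1 - d) (hn : |(n : ℝ)| ≤ L) : |(m : ℝ)| ≤ 4 / (1 - d) * L := by
  have hdist := abs_sub_abs_le_abs_sub (m : ℝ) n
  rw [abs_sub_comm] at hdist
  have hK : d * |(K : ℝ)| ≤ d * (|(n : ℝ)| + |(m : ℝ)| + ε * |(m : ℝ)|) := by
    gcongr
    exact h.abs_le
  have hm : (1 - d) / 2 * |(m : ℝ)| ≤ (1 - d - (1 + d) * ε) * |(m : ℝ)| := by
    gcongr
    nlinarith
  have hn' : (1 + d) * |(n : ℝ)| ≤ 2 * L := by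
    gcongr
    linarith
  rw [div_mul_eq_mul_div, le_div_iff₀ (by linarith)]
  linarith [h.abs_sub_le]

/-- The lower bound is attained where `m + n = K` and `m - n = d * K`; the upper one combines
`n ≤ K / 2` and `n ≤ L`. -/
theorem IsMirror.pos_and_mem_Icc (h : IsMirror α θ d ε ε₁ |(m : ℝ)| m n K) (hd₀ : 0 ≤ d)
    (hd₁ : d ≤ 1) (hε : 0 < ε) (hε' : 2 * ε ≤ 1) (hm : (L : ℝ) < m)
    (hn : |(n : ℝ)| ≤ (1 - 2 * ε) * L) :
    0 < (K : ℝ) ∧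
      (n : ℝ) ∈ Set.Icc ((1 - d) * K / 2 - ε * m) ((1 - d) * K / 2 + d * L + ε * m) := by
  have hL : (0 : ℝ) ≤ L := L.cast_nonneg
  have hεL : ε * L ≤ ε * m := by gcongr
  have hεL₀ : 0 ≤ ε * L := by positivity
  have hmirror := h.abs_add_sub_le
  have hdist := h.abs_sub_le
  rw [abs_of_nonneg (hL.trans hm.le)] at hmirror hdist
  rw [_root_.abs_le] at hn hmirror
  have hεm : (1 - 2 * ε) * L ≤ (1 - 2 * ε) * m := by gcongr
  have hK : 0 < (K : ℝ) := by linarith [mul_pos hε (hL.trans_lt hm)]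
  rw [abs_of_pos hK, _root_.abs_le] at hdist
  refine ⟨hK, by linarith, ?_⟩
  have hhalf : (1 - d) * n ≤ (1 - d) * (K / 2 + ε * m / 2) := by
    gcongr
    linarith
  have hdn : d * n ≤ d * L := by
    gcongr
    linarith
  have hdεm : 0 ≤ d * (ε * m) := by
    have := hL.trans hm.le
    positivity
  linarith

/-- The left end of the interval of sites with `|n| ≤ L` that the mirror `K` joins to points `m`
with `L < |m| ≤ C * L`, up to an error `ε * |m|`. -/
def mirrorLeftEnd (d ε C L : ℝ) (K : ℤ) : ℝ :=
  (1 - d) * K / 2 - ε * (C * L) - if 0 < K then 0 else d * L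

theorem IsMirror.mem_Icc (h : IsMirror α θ d ε ε₁ |(m : ℝ)| m n K) (hd₀ : 0 ≤ d) (hε : 0 < ε)
    (hdε : 4 * ε < 1 - d) (hm : (L : ℤ) < |m|) (hn : |(n : ℝ)| ≤ (1 - 2 * ε) * L) {C : ℝ}
    (hmC : |(m : ℝ)| ≤ C * L) :
    (n : ℝ) ∈ Set.Icc (mirrorLeftEnd d ε C L K)
      (mirrorLeftEnd d ε C L K + (d + 2 * ε * C) * L) := by
  have hεm : ε * |(m : ℝ)| ≤ ε * (C * L) := by gcongr
  have hε' : 2 * ε ≤ 1 := by linarith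
  rcases lt_abs.1 hm with hm | hm
  · have hmR : (L : ℝ) < m := by exact_mod_cast hm
    obtain ⟨hK, hleft, hright⟩ := h.pos_and_mem_Icc hd₀ (by linarith) hε hε' hmR hn
    rw [abs_of_pos (L.cast_nonneg.trans_lt hmR)] at hεm
    rw [mirrorLeftEnd, if_pos (by exact_mod_cast hK)]
    constructor <;> linarith
  · have hmR : (L : ℝ) < (-m : ℤ) := by exact_mod_cast hm
    rw [← abs_neg, ← Int.cast_neg] at h hεm
    obtain ⟨hK, hleft, hright⟩ := h.neg.pos_and_mem_Icc hd₀ (by linarith) hε hε' hmR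
      (by rwa [Int.cast_neg, abs_neg])
    rw [abs_of_pos (L.cast_nonneg.trans_lt hmR)] at hεm
    rw [mirrorLeftEnd, if_neg (by push_cast at hK; exact_mod_cast (neg_pos.1 hK).le.not_gt)]
    push_cast at hleft hright hεm
    constructor <;> linarith

/-- For large `L` all the mirrors concerned coincide, by uniqueness of resonances. -/
theorem eventually_exists_forall_isMirror_mem_Icc (hα : ChordDiophantine α c p) (hε₁ : 0 < ε₁)
    (hd : 0 ≤ d) (hε : 0 < ε) (hdε : 4 * ε < 1 - d) :
    ∀ᶠ L : ℕ in atTop, ∃ a : ℝ, ∀ m n K : ℤ, (L : ℤ) < |m| → |(n : ℝ)| ≤ (1 - 2 * ε) * L →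
      IsMirror α θ d ε ε₁ |(m : ℝ)| m n K →
        (n : ℝ) ∈ Set.Icc a (a + (d + 2 * ε * (4 / (1 - d))) * L) := by
  filter_upwards [eventually_resonance_unique hα hε₁ (1 + 2 * (4 / (1 - d)))] with L hunique
  have hmC : ∀ {m n K : ℤ}, |(n : ℝ)| ≤ (1 - 2 * ε) * L →
      IsMirror α θ d ε ε₁ |(m : ℝ)| m n K → |(m : ℝ)| ≤ 4 / (1 - d) * L := fun hn h =>
    h.abs_le_mul hd hε.le hdε (hn.trans (mul_le_of_le_one_left L.cast_nonneg (by linarith)))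
  have hres : ∀ {m n K : ℤ}, (L : ℤ) < |m| → |(n : ℝ)| ≤ (1 - 2 * ε) * L →
      IsMirror α θ d ε ε₁ |(m : ℝ)| m n K →
        |(K : ℝ)| ≤ (1 + 2 * (4 / (1 - d))) * L ∧
          chord (2 * θ + K * α) < exp (-(ε₁ * L)) := fun {m n K} hm hn h => by
    have hmL : (L : ℝ) ≤ |(m : ℝ)| := by exact_mod_cast hm.le
    have hεL : 0 ≤ ε * L := by positivity
    have hεm : ε * |(m : ℝ)| ≤ |(m : ℝ)| := mul_le_of_le_one_left (abs_nonneg _) (by linarith)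
    refine ⟨by linarith [h.abs_le, hmC hn h], h.chord_lt.trans_le ?_⟩
    gcongr
  by_cases hex : ∃ m n K : ℤ, (L : ℤ) < |m| ∧ |(n : ℝ)| ≤ (1 - 2 * ε) * L ∧
      IsMirror α θ d ε ε₁ |(m : ℝ)| m n K
  · obtain ⟨m₀, n₀, K₀, hm₀, hn₀, h₀⟩ := hex
    refine ⟨mirrorLeftEnd d ε (4 / (1 - d)) L K₀, fun m n K hm hn h => ?_⟩
    obtain rfl := hunique θ K₀ K (hres hm₀ hn₀ h₀).1 (hres hm hn h).1 (hres hm₀ hn₀ h₀).2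
      (hres hm hn h).2
    exact h.mem_Icc hd hε hdε hm hn (hmC hn h)
  · exact ⟨0, fun m n K hm hn h => absurd ⟨m, n, K, hm, hn, h⟩ hex⟩

end Mirror

/-! ## The density of peaks -/

section Density

variable {ι : Type*} {φ : ι → ℤ → ℝ} {m : ι → ℤ} {α θ d ε ε₁ b c : ℝ} {p : ℕ}

theorem eventually_abs_le_exp_neg_of_localizedAtScale (hφ : HasUnitRowsCols φ) (hd : 0 ≤ d)
    (hε : 0 ≤ ε) (hdε : 4 * ε < 1 - d)
    (hloc : ∀ᶠ X : ℕ in atTop, ∀ s, LocalizedAtScale α θ d ε ε₁ b X (φ s) (m s)) :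
    ∀ᶠ n : ℤ in cofinite, ∀ s, |(m s : ℝ)| ≤ ε * |(n : ℝ)| →
      |φ s n| ≤ exp (-(b * |(n : ℝ)|)) := by
  obtain ⟨N, hN⟩ := eventually_atTop.1 hloc
  have hlarge : ∀ᶠ n : ℤ in cofinite, N ≤ n.natAbs :=
    eventually_cofinite_int_iff.2 ⟨N, fun n hn => by rw [Int.abs_eq_natAbs] at hn; omega⟩
  filter_upwards [hlarge, eventually_cofinite_ne 0] with n hn hn₀ s hm
  have hX : (n.natAbs : ℝ) = |(n : ℝ)| := by rw [Nat.cast_natAbs, Int.cast_abs]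
  have hmn : |(m s : ℝ)| ≤ |(n : ℝ)| :=
    hm.trans (mul_le_of_le_one_left (abs_nonneg _) (by linarith))
  have hsep : 2 * ε * (n.natAbs : ℕ) ≤ abs (|(n : ℝ)| - |(m s : ℝ)|) := by
    rw [hX]
    refine le_trans ?_ (le_abs_self _)
    have := mul_le_mul_of_nonneg_right (show 3 * ε ≤ 1 by linarith) (abs_nonneg (n : ℝ))
    linarith
  rcases hN _ hn s n (by rw [Int.natCast_natAbs]; exact_mod_cast hmn) (Int.natCast_natAbs n).ge hsep
    with h | ⟨K, h⟩
  · rw [hX] at h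
    exact h.trans (mul_le_of_le_one_left (exp_pos _).le (hφ.abs_le_one s (m s)))
  · rw [hX] at h
    exact absurd h (not_isMirror_of_abs_le hd hε hdε hn₀ hm)

theorem eventually_abs_le_or_exists_isMirror (hε : 0 ≤ ε) (hε' : 2 * ε ≤ 1)
    (hloc : ∀ᶠ X : ℕ in atTop, ∀ s, LocalizedAtScale α θ d ε ε₁ b X (φ s) (m s)) :
    ∀ᶠ L : ℕ in atTop, ∀ s, (L : ℤ) < |m s| → ∀ n : ℤ, |(n : ℝ)| ≤ (1 - 2 * ε) * L →
      |φ s n| ≤ |φ s (m s)| * exp (-(b * |(m s : ℝ)|)) ∨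
        ∃ K, IsMirror α θ d ε ε₁ |(m s : ℝ)| (m s) n K := by
  filter_upwards [eventually_forall_ge_atTop.2 hloc] with L hL s hs n hn
  have hX : ((m s).natAbs : ℝ) = |(m s : ℝ)| := by rw [Nat.cast_natAbs, Int.cast_abs]
  have hLm : (L : ℝ) ≤ |(m s : ℝ)| := by exact_mod_cast hs.le
  have hnm : |(n : ℝ)| ≤ (1 - 2 * ε) * |(m s : ℝ)| := hn.trans (by gcongr)
  have hnm' : |(n : ℝ)| ≤ |(m s : ℝ)| :=
    hnm.trans (mul_le_of_le_one_left (abs_nonneg _) (by linarith))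
  have hsep : 2 * ε * (m s).natAbs ≤ abs (|(n : ℝ)| - |(m s : ℝ)|) := by
    rw [hX, abs_sub_comm]
    exact le_trans (by linarith) (le_abs_self _)
  have h := hL (m s).natAbs (by rw [Int.abs_eq_natAbs] at hs; omega) s n
    (Int.natCast_natAbs (m s)).ge (by rw [Int.natCast_natAbs]; exact_mod_cast hnm') hsep
  rwa [hX] at h

theorem two_mul_sub_le_card {M : ℕ} {a w : ℝ} (hw : 0 ≤ w) {G : Finset ℤ}
    (hG : ∀ n : ℤ, |n| ≤ M → n ∉ G → (n : ℝ) ∈ Set.Icc a (a + w)) :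
    2 * (M : ℝ) - w ≤ G.card := by
  have hsub : Finset.Icc (-(M : ℤ)) M ⊆ G ∪ Finset.Icc ⌈a⌉ ⌊a + w⌋ := fun n hn => by
    rw [Finset.mem_Icc, ← abs_le] at hn
    rw [Finset.mem_union, or_iff_not_imp_left]
    exact fun hnG =>
      Finset.mem_Icc.2 ⟨Int.ceil_le.2 (hG n hn hnG).1, Int.le_floor.2 (hG n hn hnG).2⟩
  have hcard := (Finset.card_le_card hsub).trans (Finset.card_union_le _ _)
  rw [card_Icc_neg_natCast, Int.card_Icc] at hcard
  have hinterval : (((⌊a + w⌋ + 1 - ⌈a⌉).toNat : ℕ) : ℝ) ≤ w + 1 := by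
    rw [← Int.cast_natCast, Int.toNat_eq_max, Int.cast_max]
    push_cast
    exact max_le (by linarith [Int.floor_le (a + w), Int.le_ceil a]) (by linarith)
  have hcard' : (2 * M + 1 : ℝ) ≤ G.card + ((⌊a + w⌋ + 1 - ⌈a⌉).toNat : ℕ) := by
    exact_mod_cast hcard
  linarith

/-- Peaks outside `[-L, L]` put little mass on the good sites, which are all sites with
`|n| ≤ (1 - 2 * ε) * L` outside one interval of length about `d * L`. -/
theorem eventually_mul_sub_le_ncard (hφ : HasUnitRowsCols φ) (hα : ChordDiophantine α c p)
    (hd : 0 ≤ d) (hε : 0 < ε) (hdε : 4 * ε < 1 - d) (hε₁ : 0 < ε₁) (hb : 0 < b)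
    (hfin : ∀ L : ℕ, {s | |m s| ≤ (L : ℤ)}.Finite)
    (hloc : ∀ᶠ X : ℕ in atTop, ∀ s, LocalizedAtScale α θ d ε ε₁ b X (φ s) (m s)) :
    ∀ᶠ L : ℕ in atTop,
      (1 - ε) * (2 * ((1 - 2 * ε) * L - 1) - (d + 2 * ε * (4 / (1 - d))) * L) ≤
        ({s | |m s| ≤ (L : ℤ)}.ncard : ℝ) := by
  classical
  filter_upwards [eventually_mul_card_le_ncard (m := m) hφ hb hε,
    eventually_exists_forall_isMirror_mem_Icc (θ := θ) hα hε₁ hd hε hdε,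
    eventually_abs_le_or_exists_isMirror hε.le (by linarith) hloc] with L hcard hmirror hdecay
  obtain ⟨a, ha⟩ := hmirror
  set M := ⌊(1 - 2 * ε) * (L : ℝ)⌋₊
  have hM : (M : ℝ) ≤ (1 - 2 * ε) * L :=
    Nat.floor_le (mul_nonneg (by linarith) L.cast_nonneg)
  set G := {n ∈ Finset.Icc (-(M : ℤ)) M | ∀ s, (L : ℤ) < |m s| →
    |φ s n| ≤ |φ s (m s)| * exp (-(b * |(m s : ℝ)|))} with hG
  have hw : 0 ≤ (d + 2 * ε * (4 / (1 - d))) * L := by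
    have : 0 < 1 - d := by linarith
    positivity
  have hG_card : 2 * (M : ℝ) - (d + 2 * ε * (4 / (1 - d))) * L ≤ G.card := by
    refine two_mul_sub_le_card hw (a := a) fun n hn hnG => ?_
    rw [hG, Finset.mem_filter, Finset.mem_Icc, ← abs_le, not_and] at hnG
    have hbad := hnG hn
    push Not at hbad
    obtain ⟨s, hs, hlt⟩ := hbad
    have hnL : |(n : ℝ)| ≤ (1 - 2 * ε) * L :=
      le_trans (by exact_mod_cast hn) hM
    obtain ⟨K, hK⟩ := (hdecay s hs n hnL).resolve_left hlt.not_ge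
    exact ha (m s) n K hs hnL hK
  refine le_trans ?_ (hcard (hfin L) G fun n hn => (Finset.mem_filter.1 hn).2)
  gcongr
  · linarith
  · linarith [Nat.lt_floor_add_one ((1 - 2 * ε) * (L : ℝ))]

theorem eventually_mul_le_ncard_of_localizedAtScale (hφ : HasUnitRowsCols φ)
    (hα : ChordDiophantine α c p) (hd : 0 ≤ d) (hd₁ : d < 1)
    (hloc : ∀ ε, 0 < ε → ε ≤ 1 → ∃ b, 0 < b ∧ ∃ ε₁, 0 < ε₁ ∧
      ∀ᶠ X : ℕ in atTop, ∀ s, LocalizedAtScale α θ d ε ε₁ b X (φ s) (m s)) {η : ℝ} (hη : 0 < η) :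
    (∃ C : ℝ, ∀ L : ℕ, ({s | |m s| ≤ (L : ℤ)}.ncard : ℝ) ≤ C * (2 * L + 1)) ∧
      ∀ᶠ L : ℕ in atTop, (1 - d / 2 - η) * (2 * L + 1) ≤ ({s | |m s| ≤ (L : ℤ)}.ncard : ℝ) := by
  have : 0 < 1 - d := by linarith
  obtain ⟨ε, hε, hdε, hεη⟩ := exists_pos_le_and_mul_le (show 0 < (1 - d) / 5 by linarith) hη
    (show 0 < 6 + 2 * (4 / (1 - d)) by positivity)
  obtain ⟨b, hb, ε₁, hε₁, hscale⟩ := hloc ε hε (by linarith)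
  obtain ⟨C, hC⟩ := exists_finite_and_ncard_le hφ hb hε
    (eventually_abs_le_exp_neg_of_localizedAtScale hφ hd hε.le (by linarith) hscale)
  refine ⟨⟨C, fun L => (hC L).2⟩, ?_⟩
  filter_upwards [eventually_mul_sub_le_ncard hφ hα hd hε (by linarith) hε₁ hb
    (fun L => (hC L).1) hscale, eventually_le_mul_natCast hη 3] with L hL hηL
  refine le_trans ?_ hL
  have hεηL : (6 + 2 * (4 / (1 - d))) * ε * L ≤ η * L := by gcongr
  have hsq : 0 ≤ ε * (4 * ε + d + 2 * ε * (4 / (1 - d))) * L := by positivity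
  linarith

theorem one_sub_half_le_liminf_of_localizedAtScale (hφ : HasUnitRowsCols φ)
    (hα : ChordDiophantine α c p) (hd : 0 ≤ d) (hd₁ : d < 1)
    (hloc : ∀ ε, 0 < ε → ε ≤ 1 → ∃ b, 0 < b ∧ ∃ ε₁, 0 < ε₁ ∧
      ∀ᶠ X : ℕ in atTop, ∀ s, LocalizedAtScale α θ d ε ε₁ b X (φ s) (m s)) :
    1 - d / 2 ≤ liminf (fun L : ℕ => ({s | |m s| ≤ (L : ℤ)}.ncard : ℝ) / (2 * L + 1)) atTop := by
  have hpos : ∀ L : ℕ, (0 : ℝ) < 2 * L + 1 := fun L => by positivity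
  refine le_of_forall_pos_sub_le fun η hη => ?_
  obtain ⟨⟨C, hC⟩, hlower⟩ :=
    eventually_mul_le_ncard_of_localizedAtScale hφ hα hd hd₁ hloc hη
  refine le_liminf_of_le (IsBoundedUnder.isCoboundedUnder_ge ⟨C, ?_⟩) ?_
  · exact eventually_map.2 (.of_forall fun L => (div_le_iff₀ (hpos L)).2 (hC L))
  · filter_upwards [hlower] with L hL
    rwa [le_div_iff₀ (hpos L)]

end Density

/-! ## Orthonormal eigenbases -/

section Eigenbasis

variable {lam α θ E : ℝ} {φ : ℤ → ℝ} {m : ℤ}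

theorem exists_chordDiophantine (hα : IsDiophantine α) : ∃ c p, ChordDiophantine α c p := by
  obtain ⟨κ, τ, _, hτ, h⟩ := hα
  refine ⟨min 1 (4 * τ), ⌈κ⌉₊, lt_min one_pos (by linarith), min_le_left _ _, fun k hk => ?_⟩
  have hk₁ : (1 : ℝ) ≤ |(k : ℝ)| := by exact_mod_cast Int.one_le_abs hk
  have hpow : |(k : ℝ)| ^ κ ≤ |(k : ℝ)| ^ ⌈κ⌉₊ := by
    rw [← rpow_natCast]
    exact rpow_le_rpow_of_exponent_le hk₁ (Nat.le_ceil κ)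
  calc min 1 (4 * τ) / |(k : ℝ)| ^ ⌈κ⌉₊ ≤ 4 * τ / |(k : ℝ)| ^ κ :=
        div_le_div₀ (by linarith) (min_le_right _ _) (by positivity) hpow
    _ = 4 * (τ / |(k : ℝ)| ^ κ) := mul_div_assoc _ _ _
    _ ≤ 4 * distToInt (k * α) := by
      gcongr
      exact h k hk
    _ ≤ chord (k * α) := four_mul_distToInt_le_chord _

theorem isSolution_of_isEigenfunction (h : IsEigenfunction (amoPot lam α θ) E φ) :
    IsSolution (reducedPotential lam E) α θ φ := fun n => by
  have hn := h n
  rw [amoPot] at hn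
  rw [reducedPotential]
  linarith

theorem abs_energy_le_of_isPeak {g : ℤ → ℝ} {B : ℝ} (h : IsEigenfunction g E φ)
    (hg : |g m| ≤ B) (hm : IsPeak φ m) : |E| ≤ 2 + B := by
  refine le_of_mul_le_mul_right ?_ hm.abs_pos
  calc |E| * |φ m| = |φ (m + 1) + φ (m - 1) + g m * φ m| := by rw [h m, abs_mul]
    _ ≤ |φ (m + 1)| + |φ (m - 1)| + |g m * φ m| := abs_add_three _ _ _
    _ ≤ |φ m| + |φ m| + B * |φ m| := by
      rw [abs_mul]
      exact add_le_add (add_le_add (hm.abs_le _) (hm.abs_le _))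
        (mul_le_mul_of_nonneg_right hg hm.abs_pos.le)
    _ = (2 + B) * |φ m| := by ring

theorem abs_amoPot_le (hlam : 0 ≤ lam) (n : ℤ) : |amoPot lam α θ n| ≤ 2 * lam := by
  rw [amoPot, abs_mul, abs_of_nonneg (by positivity)]
  exact mul_le_of_le_one_right (by positivity) (abs_cos_le_one _)

theorem hasUnitRowsCols_of_hilbertBasis {ι κ : Type*}
    (Φ : HilbertBasis ι ℝ (lp (fun _ : κ => ℝ) 2)) : HasUnitRowsCols fun s n => Φ s n where
  hasSum_row s := by
    have h := lp.hasSum_inner (𝕜 := ℝ) (Φ s) (Φ s)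
    rw [real_inner_self_eq_norm_sq, Φ.orthonormal.1 s] at h
    simpa [sq] using h
  hasSum_col n := by
    classical
    have h := Φ.hasSum_inner_mul_inner (lp.single 2 n (1 : ℝ)) (lp.single 2 n (1 : ℝ))
    simp only [lp.inner_single_left, lp.inner_single_right] at h
    simpa [sq] using h

theorem HasUnitRowsCols.isPeak {ι : Type*} {φ : ι → ℤ → ℝ} (hφ : HasUnitRowsCols φ) {s : ι}
    (hm : ∀ n, |φ s n| ≤ |φ s m|) : IsPeak (φ s) m where
  abs_le := hm
  ne_zero h := by
    obtain ⟨n, hn⟩ := hφ.exists_ne_zero s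
    exact hn (abs_nonpos_iff.1 (by simpa only [h, abs_zero] using hm n))

end Eigenbasis

end AlmostMathieu

open AlmostMathieu in
theorem amo_lower_density_bound_general {ι : Type*} (lam α θ : ℝ) (hlam : 1 < lam)
    (hα : IsDiophantine α) (hδ : deltaPhase α θ < Real.log lam)
    (Φ : HilbertBasis ι ℝ (lp (fun _ : ℤ => ℝ) 2))
    (heig : ∀ s, ∃ E : ℝ, IsEigenfunction (amoPot lam α θ) E (fun n => Φ s n))
    (m : ι → ℤ) (hm : ∀ s n, |Φ s n| ≤ |Φ s (m s)|) :
    1 - deltaPhase α θ / Real.log lam / 2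
      ≤ liminf (fun L : ℕ => (Set.ncard {s | |m s| ≤ (L : ℤ)} : ℝ) / (2 * L + 1)) atTop := by
  have hφ := hasUnitRowsCols_of_hilbertBasis Φ
  have hpeak (s) : IsPeak (fun n => Φ s n) (m s) := hφ.isPeak (hm s)
  choose E hE using heig
  have hsol (s) := isSolution_of_isEigenfunction (hE s)
  have hE_le (s) : |E s| ≤ 2 + 2 * lam :=
    abs_energy_le_of_isPeak (hE s) (abs_amoPot_le (by linarith) _) (hpeak s)
  obtain ⟨c, p, hα'⟩ := exists_chordDiophantine hα
  obtain ⟨s₀, hs₀⟩ := hφ.swap.exists_ne_zero 0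
  obtain ⟨A, hA⟩ :=
    (hsol s₀).exists_eventually_exp_neg_le_chord (by linarith) (hφ.hasSum_row s₀) hs₀
  have hlog : 0 < log lam := log_pos hlam
  by_contra! hlt
  obtain ⟨d, hδd, hd⟩ := exists_between
    (lt_min ((div_lt_one hlog).2 hδ) ((div_lt_iff₀' two_pos).1 (lt_sub_comm.1 hlt)))
  obtain ⟨hd₁, hd₂⟩ := lt_min_iff.1 hd
  have hd₀ : 0 ≤ d := (div_nonneg (deltaPhase_nonneg α θ) hlog.le).trans hδd.le
  have hliminf := one_sub_half_le_liminf_of_localizedAtScale (θ := θ) (m := m) hφ hα' hd₀ hd₁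
    fun ε hε hε' => by
      obtain ⟨b, hb, ε₁, hε₁, hloc⟩ := eventually_localizedAtScale (E₀ := 2 + 2 * lam) hlam hα'
        (by linarith) hd₀
        (eventually_exp_neg_le_chord_of_deltaPhase_lt hA ((div_lt_iff₀ hlog).1 hδd)) hε hε'
      exact ⟨b, hb, ε₁, hε₁, hloc.mono fun X hX s => hX (E s) (hE_le s) _ _ (hsol s) (hpeak s)⟩
  linarith

theorem amo_lower_density_bound
    (lam α θ : ℝ) (hlam : 1 < lam) (hα : IsDiophantine α)
    (hδ : deltaPhase α θ < Real.log lam)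
    (Φ : HilbertBasis ℕ ℝ (lp (fun _ : ℤ => ℝ) 2))
    (heig : ∀ s : ℕ, ∃ E : ℝ, IsEigenfunction (amoPot lam α θ) E (fun n => Φ s n))
    (m : ℕ → ℤ) (hm : ∀ (s : ℕ) (n : ℤ), |Φ s n| ≤ |Φ s (m s)|) :
    1 - deltaPhase α θ / Real.log lam
      ≤ liminf (fun L : ℕ => (Set.ncard {s : ℕ | |m s| ≤ (L : ℤ)} : ℝ) / (2 * L + 1)) atTop := by
  have hratio := div_nonneg (AlmostMathieu.deltaPhase_nonneg α θ) (log_pos hlam).le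
  linarith [amo_lower_density_bound_general lam α θ hlam hα hδ Φ heig m hm]
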